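/- arXiv:1905.09999 — 2 statements merged into one kernel-verified Lean document; each statement's English description precedes it below -/
import Mathlib

section
/- Comparison with the Poisson integral: Let v ∈ L_{2s} ∩ C^{1,1}_loc(ℝ^n) be bounded with v(x) ≥ 0 for all x ∈ ℝ^n, and suppose (-Δ)^s v(x) ≤ 0 at every point x where v(x) > 0. Then for every r > 0 and every x ∈ ℝ^n with |x| < r, v(x) ≤ ∫_{|y| > r} P_r(y, x) v(y) dy, where P_r(y, x) = B(n,s) · ((r² − |x|²)/(|y|² − r²))^s · |x − y|^{−n} for |y| > r, |x| < r, and B(n,s) = Γ(n/2) sin(πs) / π^{(n/2)+1}. -/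
open MeasureTheory Filter Metric Set

noncomputable section

/-- Points of ℝⁿ with the Euclidean norm. -/
abbrev Pt (n : ℕ) := EuclideanSpace ℝ (Fin n)

/-- The space `L_{2s}`: locally integrable functions `u` with
`∫ |u(x)|/(1+|x|^{n+2s}) dx < ∞`. -/
def MemL2s (n : ℕ) (s : ℝ) (u : Pt n → ℝ) : Prop :=
  LocallyIntegrable u volume ∧
    Integrable (fun x : Pt n => |u x| / (1 + ‖x‖ ^ ((n : ℝ) + 2 * s))) volume

/-- `u` is locally `C^{1,1}` on the open set `D`. -/
def C11loc (n : ℕ) (u : Pt n → ℝ) (D : Set (Pt n)) : Prop :=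
  ∀ x ∈ D, ∃ ε > 0, ball x ε ⊆ D ∧ DifferentiableOn ℝ u (ball x ε) ∧
    ∃ K : NNReal, LipschitzOnWith K (fun y => fderivWithin ℝ u (ball x ε) y) (ball x ε)

/-- `(-Δ)^s u (x) = L`, with the principal value defined as the limit, as `ε → 0⁺`, of
`C_{n,s} ∫_{ℝⁿ \ B_ε(x)} (u(x) - u(y))/|x-y|^{n+2s} dy`. -/
def HasFracLap (n : ℕ) (s Cns : ℝ) (u : Pt n → ℝ) (x : Pt n) (L : ℝ) : Prop :=
  Tendsto (fun ε : ℝ =>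
      Cns * ∫ y in {y : Pt n | ε ≤ dist x y}, (u x - u y) / dist x y ^ ((n : ℝ) + 2 * s))
    (nhdsWithin 0 (Set.Ioi 0)) (nhds L)

/-- The index of the last coordinate (`x_n`). -/
def lastIdx (n : ℕ) (hn : 0 < n) : Fin n := ⟨n - 1, Nat.sub_lt hn Nat.one_pos⟩

/-- The unit vector `e_n` in the `x_n` direction. -/
def eN (n : ℕ) (hn : 0 < n) : Pt n := EuclideanSpace.single (lastIdx n hn) 1

/-- The constant `B(n,s) = Γ(n/2) sin(πs) / π^{n/2+1}` of the exterior Poisson kernel. -/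
def Bns (n : ℕ) (s : ℝ) : ℝ :=
  Real.Gamma ((n : ℝ) / 2) * Real.sin (Real.pi * s) / Real.pi ^ ((n : ℝ) / 2 + 1)


lemma pt_nontrivial {n : ℕ} (hn : 0 < n) : Nontrivial (Pt n) := by
  have : Nonempty (Fin n) := ⟨⟨0, hn⟩⟩
  infer_instance

/-- polar coordinates, lintegral -/
lemma polar_lintegral {n : ℕ} (hn : 0 < n) (G : Pt n → ENNReal) (hG : Measurable G) :
    ∫⁻ h, G h = ∫⁻ θ : sphere (0 : Pt n) 1, (∫⁻ t in Ioi (0:ℝ),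
      ENNReal.ofReal (t ^ (n - 1)) * G (t • (θ : Pt n))) ∂(volume : Measure (Pt n)).toSphere := by
  have : Nontrivial (Pt n) := pt_nontrivial hn
  have hd : Module.finrank ℝ (Pt n) = n := by simp
  have h1 : ∫⁻ h, G h = ∫⁻ x : ({(0 : Pt n)}ᶜ : Set (Pt n)), G x.1 ∂((volume : Measure (Pt n)).comap (Subtype.val : ({(0 : Pt n)}ᶜ : Set (Pt n)) → Pt n)) := by
    rw [lintegral_subtype_comap (measurableSet_singleton _).compl, restrict_compl_singleton]
  have h2 := (volume : Measure (Pt n)).measurePreserving_homeomorphUnitSphereProd.lintegral_comp_emb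
    (Homeomorph.measurableEmbedding _)
    (fun p : sphere (0 : Pt n) 1 × Ioi (0:ℝ) => G (p.2.1 • p.1.1))
  have h3 : ∀ x : ({(0 : Pt n)}ᶜ : Set (Pt n)),
      ((homeomorphUnitSphereProd (Pt n)) x).2.1 • ((homeomorphUnitSphereProd (Pt n)) x).1.1 = x.1 := by
    intro x
    have hx : ‖x.1‖ ≠ 0 := norm_ne_zero_iff.2 x.2
    simp [smul_smul, hx]
  simp only [h3] at h2
  rw [h1, h2, lintegral_prod]
  · refine lintegral_congr fun θ => ?_
    rw [Measure.volumeIoiPow, lintegral_withDensity_eq_lintegral_mul]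
    · simp only [Pi.mul_apply, hd]
      rw [lintegral_subtype_comap measurableSet_Ioi (fun t : ℝ => ENNReal.ofReal (t ^ (n - 1)) * G (t • (θ : Pt n)))]
    · fun_prop
    · fun_prop
  · fun_prop

lemma polar_integral {n : ℕ} (hn : 0 < n) (G : Pt n → ℝ) (hG : Integrable G) :
    ∫ h, G h = ∫ θ : sphere (0 : Pt n) 1, (∫ t in Ioi (0:ℝ),
      t ^ (n - 1) * G (t • (θ : Pt n))) ∂(volume : Measure (Pt n)).toSphere := by
  have : Nontrivial (Pt n) := pt_nontrivial hn
  have hd : Module.finrank ℝ (Pt n) = n := by simp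
  have h1 : ∫ h, G h = ∫ x : ({(0 : Pt n)}ᶜ : Set (Pt n)), G x.1 ∂((volume : Measure (Pt n)).comap (Subtype.val : ({(0 : Pt n)}ᶜ : Set (Pt n)) → Pt n)) := by
    rw [integral_subtype_comap (measurableSet_singleton _).compl, restrict_compl_singleton]
  have hmp := (volume : Measure (Pt n)).measurePreserving_homeomorphUnitSphereProd
  have h2 := hmp.integral_comp
    (Homeomorph.measurableEmbedding _)
    (fun p : sphere (0 : Pt n) 1 × Ioi (0:ℝ) => G (p.2.1 • p.1.1))
  have h4 := hmp.integrable_comp_emb (g := 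
    (fun p : sphere (0 : Pt n) 1 × Ioi (0:ℝ) => G (p.2.1 • p.1.1)))
    (Homeomorph.measurableEmbedding _)
  have h3 : ∀ x : ({(0 : Pt n)}ᶜ : Set (Pt n)),
      ((homeomorphUnitSphereProd (Pt n)) x).2.1 • ((homeomorphUnitSphereProd (Pt n)) x).1.1 = x.1 := by
    intro x
    have hx : ‖x.1‖ ≠ 0 := norm_ne_zero_iff.2 x.2
    simp [smul_smul, hx]
  simp only [Function.comp_def, h3] at h2 h4
  rw [h1, h2, integral_prod]
  · refine integral_congr_ae (Eventually.of_forall fun θ => ?_)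
    simp only [Measure.volumeIoiPow]
    rw [integral_withDensity_eq_integral_toReal_smul]
    · simp only [hd]
      rw [← integral_subtype_comap measurableSet_Ioi (fun t : ℝ => t ^ (n - 1) * G (t • (θ : Pt n)))]
      refine integral_congr_ae (Eventually.of_forall fun t => ?_)
      have := t.2
      simp only [smul_eq_mul]
      rw [ENNReal.toReal_ofReal (pow_nonneg (le_of_lt this) _)]
    · fun_prop
    · exact Eventually.of_forall fun _ => ENNReal.ofReal_lt_top
  · rw [← h4, ← Function.comp_def G,  ← integrableOn_iff_comap_subtypeVal (measurableSet_singleton _).compl]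
    exact hG.integrableOn

lemma inv_det {n : ℕ} (y z : Pt n) (R : ℝ) :
    |((R / dist z y) ^ 2 • ((Submodule.span ℝ {z - y})ᗮ.reflection : Pt n →L[ℝ] Pt n)).det|
      = (R / dist z y) ^ (2 * n) := by
  have h : |(((Submodule.span ℝ {z - y})ᗮ.reflection : Pt n →L[ℝ] Pt n)).det| = 1 := by
    have := (Submodule.span ℝ {z - y})ᗮ.det_reflection
    have h2 : (((Submodule.span ℝ {z - y})ᗮ.reflection : Pt n →L[ℝ] Pt n)).det
      = (-1) ^ Module.finrank ℝ (Submodule.span ℝ {z - y})ᗮᗮ := this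
    rw [h2]; simp
  rw [ContinuousLinearMap.det, ContinuousLinearMap.toLinearMap_smul, LinearMap.det_smul, abs_mul]
  rw [ContinuousLinearMap.det] at h
  rw [h, finrank_euclideanSpace_fin, mul_one, abs_pow, abs_pow, pow_mul, sq_abs]

lemma inv_image {n : ℕ} (y : Pt n) {R : ℝ} (hR : R ≠ 0) :
    EuclideanGeometry.inversion y R '' {y}ᶜ = {y}ᶜ := by
  rw [Set.image_compl_eq (EuclideanGeometry.inversion_bijective y hR)]
  simp

lemma inv_integral {n : ℕ} (hn : 0 < n) (y : Pt n) {R : ℝ} (hR : R ≠ 0) (g : Pt n → ℝ) :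
    ∫ z, g z = ∫ z, (R / dist z y) ^ (2 * n) * g (EuclideanGeometry.inversion y R z) := by
  have : Nontrivial (Pt n) := pt_nontrivial hn
  have := integral_image_eq_integral_abs_det_fderiv_smul (volume : Measure (Pt n))
    (s := {y}ᶜ) (measurableSet_singleton y).compl
    (f := EuclideanGeometry.inversion y R)
    (fun x hx => (EuclideanGeometry.hasFDerivAt_inversion (R := R) hx).hasFDerivWithinAt)
    ((EuclideanGeometry.inversion_injective y hR).injOn) g
  rw [inv_image y hR, restrict_compl_singleton] at this
  simpa only [inv_det, smul_eq_mul] using this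

lemma inv_integrable {n : ℕ} (hn : 0 < n) (y : Pt n) {R : ℝ} (hR : R ≠ 0) (g : Pt n → ℝ) :
    Integrable g ↔ Integrable fun z => (R / dist z y) ^ (2 * n) * g (EuclideanGeometry.inversion y R z) := by
  have : Nontrivial (Pt n) := pt_nontrivial hn
  have := integrableOn_image_iff_integrableOn_abs_det_fderiv_smul (volume : Measure (Pt n))
    (s := {y}ᶜ) (measurableSet_singleton y).compl
    (f := EuclideanGeometry.inversion y R)
    (fun x hx => (EuclideanGeometry.hasFDerivAt_inversion (R := R) hx).hasFDerivWithinAt)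
    ((EuclideanGeometry.inversion_injective y hR).injOn) g
  rw [inv_image y hR, IntegrableOn, IntegrableOn, restrict_compl_singleton] at this
  simpa only [inv_det, smul_eq_mul] using this


lemma beta_lint {a : ℝ} (ha : 0 < a) (ha1 : a < 1) :
    ∫⁻ x in Ioi (0:ℝ), ENNReal.ofReal (x ^ (a - 1) / (1 + x)) =
      ENNReal.ofReal (Real.pi / Real.sin (Real.pi * a)) := by
  have him : (fun u : ℝ => u / (1 - u)) '' Ioo 0 1 = Ioi 0 := by
    ext x
    simp only [mem_image, mem_Ioo, mem_Ioi]
    constructor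
    · rintro ⟨u, ⟨h0, h1⟩, rfl⟩
      exact div_pos h0 (by linarith)
    · intro hx
      refine ⟨x / (1 + x), ⟨by positivity, by rw [div_lt_one (by positivity)]; linarith⟩, ?_⟩
      field_simp
      ring
  have hB : ProbabilityTheory.beta a (1 - a) = Real.pi / Real.sin (Real.pi * a) := by
    rw [ProbabilityTheory.beta, Real.Gamma_mul_Gamma_one_sub]; simp
  have hBpos : 0 < ProbabilityTheory.beta a (1 - a) := ProbabilityTheory.beta_pos ha (by linarith)
  have h1 := ProbabilityTheory.lintegral_betaPDF_eq_one ha (show 0 < 1 - a by linarith)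
  rw [ProbabilityTheory.lintegral_betaPDF] at h1
  rw [← him, lintegral_image_eq_lintegral_abs_deriv_mul (f' := fun u => 1 / (1 - u) ^ 2) measurableSet_Ioo]
  · have : ∀ u ∈ Ioo (0:ℝ) 1, ENNReal.ofReal |1 / (1 - u) ^ 2| *
        ENNReal.ofReal ((u / (1 - u)) ^ (a - 1) / (1 + u / (1 - u))) =
        ENNReal.ofReal (ProbabilityTheory.beta a (1 - a)) * ENNReal.ofReal (1 / ProbabilityTheory.beta a (1 - a) * u ^ (a - 1) * (1 - u) ^ (1 - a - 1)) := by
      intro u hu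
      have hu1 : 0 < 1 - u := by linarith [hu.2]
      rw [← ENNReal.ofReal_mul (abs_nonneg _), ← ENNReal.ofReal_mul hBpos.le]
      congr 1
      rw [abs_of_pos (by positivity), Real.div_rpow hu.1.le hu1.le]
      have : (1 - u) ^ (1 - a - 1) = (1 - u) ^ (-1:ℝ) / (1 - u) ^ (a - 1) := by
        rw [← Real.rpow_sub hu1]; congr 1; ring
      rw [this, Real.rpow_neg_one]
      have h3 : 1 + u / (1 - u) = 1 / (1 - u) := by field_simp; ring
      rw [h3]
      field_simp
    rw [setLIntegral_congr_fun measurableSet_Ioo this, lintegral_const_mul' _ _ ENNReal.ofReal_ne_top, h1, hB, mul_one]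
  · intro u hu
    have hu1 : 1 - u ≠ 0 := by linarith [hu.2]
    have := ((hasDerivAt_id u).div ((hasDerivAt_id u).const_sub 1) hu1)
    refine (this.congr_deriv ?_).hasDerivWithinAt
    simp
  · intro u hu w hw h
    have hu1 : 1 - u ≠ 0 := by linarith [hu.2]
    have hw1 : 1 - w ≠ 0 := by linarith [hw.2]
    simp only at h
    rw [div_eq_div_iff hu1 hw1] at h
    linarith

lemma beta_pos' {a : ℝ} (ha : 0 < a) (ha1 : a < 1) : 0 < Real.pi / Real.sin (Real.pi * a) := by
  apply div_pos Real.pi_pos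
  apply Real.sin_pos_of_pos_of_lt_pi (by positivity)
  nlinarith [Real.pi_pos]

lemma beta_integrable {a : ℝ} (ha : 0 < a) (ha1 : a < 1) :
    IntegrableOn (fun x : ℝ => x ^ (a - 1) / (1 + x)) (Ioi 0) := by
  refine ⟨Measurable.aestronglyMeasurable (by fun_prop), ?_⟩
  rw [hasFiniteIntegral_iff_ofReal, beta_lint ha ha1]
  · exact ENNReal.ofReal_lt_top
  · filter_upwards [ae_restrict_mem measurableSet_Ioi] with x hx
    have : 0 < x := hx
    simp only [Pi.zero_apply]; positivity

lemma beta_int {a : ℝ} (ha : 0 < a) (ha1 : a < 1) :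
    ∫ x in Ioi (0:ℝ), x ^ (a - 1) / (1 + x) = Real.pi / Real.sin (Real.pi * a) := by
  rw [integral_eq_lintegral_of_nonneg_ae, beta_lint ha ha1, ENNReal.toReal_ofReal (beta_pos' ha ha1).le]
  · filter_upwards [ae_restrict_mem measurableSet_Ioi] with x hx
    have : 0 < x := hx
    simp only [Pi.zero_apply]; positivity
  · exact (beta_integrable ha ha1).1

/-- `∫_1^∞ (τ-1)^{-s} τ^{-1} dτ = π / sin (π s)`. -/
lemma beta_lint' {s : ℝ} (hs0 : 0 < s) (hs1 : s < 1) :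
    ∫⁻ x in Ioi (1:ℝ), ENNReal.ofReal ((x - 1) ^ (-s) / x) =
      ENNReal.ofReal (Real.pi / Real.sin (Real.pi * s)) := by
  have h := beta_lint (a := 1 - s) (by linarith) (by linarith)
  have h2 : Real.sin (Real.pi * (1 - s)) = Real.sin (Real.pi * s) := by
    rw [mul_sub, mul_one, Real.sin_pi_sub]
  rw [h2] at h
  rw [← h, ← lintegral_indicator measurableSet_Ioi, ← lintegral_indicator measurableSet_Ioi,
    ← lintegral_add_right_eq_self _ (1:ℝ)]
  congr 1
  ext x
  by_cases hx : 0 < x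
  · rw [indicator_of_mem (by simpa using hx), indicator_of_mem (by simpa using hx)]
    congr 2
    · congr 1 <;> ring
    · ring
  · rw [indicator_of_notMem (by simpa using hx), indicator_of_notMem (by simpa using hx)]

/-- Taylor bounds for `(1+e)^a`. -/
lemma taylor1 (a : ℝ) : ∃ C : ℝ, 0 ≤ C ∧ ∀ e : ℝ, |e| ≤ 1/2 →
    |(1 + e) ^ a - 1| ≤ C * |e| ∧ |(1 + e) ^ a - 1 - a * e| ≤ C * e ^ 2 := by
  -- bound on second derivative
  have hcont : ∀ b : ℝ, ContinuousOn (fun e : ℝ => (1 + e) ^ b) (Icc (-(1/2)) (1/2)) := by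
    intro b
    apply ContinuousOn.rpow_const (by fun_prop)
    intro x hx; left; linarith [hx.1]
  have hbd : ∀ b : ℝ, ∃ C, 0 ≤ C ∧ ∀ e ∈ Icc (-(1/2):ℝ) (1/2), |(1 + e) ^ b| ≤ C := by
    intro b
    obtain ⟨C, hC⟩ := isCompact_Icc.exists_bound_of_continuousOn (hcont b)
    exact ⟨max C 0, le_max_right _ _, fun e he => (hC e he).trans (le_max_left _ _)⟩
  obtain ⟨C1, hC1, h1⟩ := hbd (a - 1)
  obtain ⟨C2, hC2, h2⟩ := hbd (a - 1 - 1)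
  have hlip : ∀ b C, (∀ e ∈ Icc (-(1/2):ℝ) (1/2), |(1 + e) ^ (b-1)| ≤ C) → ∀ e ∈ Icc (-(1/2):ℝ) (1/2),
      |(1 + e) ^ b - 1| ≤ |b| * C * |e| := by
    intro b C hC e he
    have := (convex_Icc (-(1/2):ℝ) (1/2)).norm_image_sub_le_of_norm_hasDerivWithin_le
      (f := fun e : ℝ => (1 + e) ^ b) (f' := fun e => b * (1 + e) ^ (b - 1)) (C := |b| * C)
      (x := 0) (y := e) ?_ ?_ ?_ he
    · simpa using this
    · intro x hx
      have := ((hasDerivAt_id x).const_add 1).rpow_const (p := b) (Or.inl (by simp only [id]; linarith [hx.1]))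
      refine (this.congr_deriv ?_).hasDerivWithinAt
      simp
    · intro x hx
      rw [norm_mul]
      exact mul_le_mul_of_nonneg_left (hC x hx) (norm_nonneg _)
    · constructor <;> norm_num
  refine ⟨|a| * C1 + |a| * (|a - 1| * C2), by positivity, ?_⟩
  intro e he
  have he' : e ∈ Icc (-(1/2):ℝ) (1/2) := abs_le.1 he
  constructor
  · refine (hlip a C1 h1 e he').trans ?_
    gcongr
    nlinarith [show 0 ≤ |a| * (|a - 1| * C2) by positivity]
  · have hsub : Icc (-|e|) |e| ⊆ Icc (-(1/2):ℝ) (1/2) := Icc_subset_Icc (by linarith) he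
    have := (convex_Icc (-|e|) |e|).norm_image_sub_le_of_norm_hasDerivWithin_le
      (f := fun e : ℝ => (1 + e) ^ a - a * e) (f' := fun e => a * (1 + e) ^ (a - 1) - a) (C := |a| * (|a-1| * C2 * |e|))
      (x := 0) (y := e) ?_ ?_ ?_ ⟨neg_abs_le e, le_abs_self e⟩
    · have h3 : |a| * (|a-1| * C2 * |e|) * |e| = |a| * (|a - 1| * C2) * e ^ 2 := by
        rw [← sq_abs e]; ring
      simp only [Real.norm_eq_abs, sub_zero, add_zero, Real.one_rpow, mul_zero] at this
      rw [h3] at this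
      have h4 : (1 + e) ^ a - 1 - a * e = (1 + e) ^ a - a * e - 1 := by ring
      rw [h4]
      refine this.trans ?_
      gcongr
      nlinarith [show 0 ≤ |a| * C1 by positivity]
    · intro x hx
      have hx' := hsub hx
      have := ((hasDerivAt_id x).const_add 1).rpow_const (p := a) (Or.inl (by simp only [id]; linarith [hx'.1]))
      refine ((this.sub ((hasDerivAt_id x).const_mul a)).congr_deriv ?_).hasDerivWithinAt
      simp
    · intro x hx
      have : a * (1 + x) ^ (a - 1) - a = a * ((1 + x) ^ (a - 1) - 1) := by ring
      rw [this, norm_mul]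
      refine mul_le_mul_of_nonneg_left ((hlip (a-1) C2 h2 x (hsub hx)).trans ?_) (norm_nonneg _)
      exact mul_le_mul_of_nonneg_left (abs_le.2 hx) (by positivity)
    · constructor <;> simp


def gg (s m b M t : ℝ) : ℝ :=
  if 1 ≤ t * (M + b / m) then (m ^ s - (max (m - 2 * b * t - t ^ 2) 0) ^ s) * t ^ (-1 - 2 * s) else 0

lemma gg_integrable {s m b M : ℝ} (hs0 : 0 < s) (hm : 0 < m) (hM : 0 < M + b / m) :
    IntegrableOn (gg s m b M) (Ioi 0) := by
  have hmeas : Measurable (gg s m b M) := by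
    unfold gg
    apply Measurable.ite (measurableSet_le (by fun_prop) (by fun_prop)) (by fun_prop) (by fun_prop)
  set a := 1 / (M + b / m) with ha
  have hapos : 0 < a := by positivity
  have h1 : IntegrableOn (fun t : ℝ => (m ^ s + (m + b ^ 2) ^ s) * t ^ (-1 - 2 * s)) (Ioi (a/2)) :=
    (integrableOn_Ioi_rpow_of_lt (by linarith) (by positivity)).const_mul _
  have h2 : IntegrableOn (gg s m b M) (Ioi (a/2)) := by
    refine h1.mono' hmeas.aestronglyMeasurable ?_
    filter_upwards [ae_restrict_mem measurableSet_Ioi] with t ht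
    have ht0 : 0 < t := lt_trans (by positivity) ht
    unfold gg
    split_ifs with h
    · rw [norm_mul, Real.norm_of_nonneg (show 0 ≤ t ^ (-1 - 2 * s) by positivity)]
      gcongr
      have : (max (m - 2 * b * t - t ^ 2) 0) ^ s ≤ (m + b ^ 2) ^ s := by
        apply Real.rpow_le_rpow (le_max_right _ _) _ hs0.le
        apply max_le _ (by positivity)
        nlinarith [sq_nonneg (b + t)]
      have h0 : 0 ≤ (max (m - 2 * b * t - t ^ 2) 0) ^ s := Real.rpow_nonneg (le_max_right _ _) _
      have h00 : 0 ≤ m ^ s := by positivity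
      rw [Real.norm_eq_abs, abs_le]; constructor <;> linarith
    · rw [norm_zero]; positivity
  have h3 : IntegrableOn (gg s m b M) (Ioc 0 (a/2)) := by
    have hz : IntegrableOn (fun _ : ℝ => (0:ℝ)) (Ioc 0 (a/2)) := integrableOn_zero
    refine hz.congr_fun (fun t ht => ?_) measurableSet_Ioc
    unfold gg
    rw [if_neg]
    have : t < a := by linarith [ht.2]
    rw [ha, lt_div_iff₀ hM] at this
    linarith
  have := h3.union h2
  rwa [Ioc_union_Ioi_eq_Ioi (by positivity)] at this

lemma gg_integral {s m b M : ℝ} (hs0 : 0 < s) (hm : 0 < m)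
    (hM : Real.sqrt ((1 + b ^ 2 / m) / m) < M) :
    IntervalIntegrable (fun σ => (m * σ ^ 2 - (1 + b ^ 2 / m)) ^ s / (σ + b / m)) volume
        (Real.sqrt ((1 + b ^ 2 / m) / m)) M ∧
    ∫ t in Ioi 0, gg s m b M t = m ^ s * (M + b / m) ^ (2 * s) / (2 * s) -
      ∫ σ in (Real.sqrt ((1 + b ^ 2 / m) / m))..M, (m * σ ^ 2 - (1 + b ^ 2 / m)) ^ s / (σ + b / m) := by
  set C := 1 + b ^ 2 / m with hC
  set c := Real.sqrt (C / m) with hc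
  have hCpos : 0 < C := by positivity
  have hc2 : m * c ^ 2 = C := by
    rw [hc, Real.sq_sqrt (by positivity)]; field_simp
  have hcpos : 0 < c := Real.sqrt_pos.2 (by positivity)
  have hbc : |b / m| < c := by
    apply abs_lt_of_sq_lt_sq _ hcpos.le
    have : c ^ 2 = (b / m) ^ 2 + 1 / m := by
      rw [hc, Real.sq_sqrt (by positivity), hC]; field_simp; ring
    rw [this]; linarith [show 0 < 1 / m by positivity]
  obtain ⟨hb1, hb2⟩ := abs_lt.1 hbc
  have hMb : 0 < M + b / m := by linarith
  have hII : IntervalIntegrable (fun σ => (m * σ ^ 2 - C) ^ s / (σ + b / m)) volume c M := by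
    apply ContinuousOn.intervalIntegrable
    rw [uIcc_of_le hM.le]
    apply ContinuousOn.div
    · exact ContinuousOn.rpow_const (by fun_prop) (fun x hx => Or.inr hs0.le)
    · fun_prop
    · intro x hx; linarith [hx.1]
  refine ⟨hII, ?_⟩
  have hsub := integral_comp_rpow_Ioi (gg s m b M) (p := -1) (by norm_num)
  rw [← hsub]
  set h : ℝ → ℝ := fun τ => (max (m * τ ^ 2 - 2 * b * τ - 1) 0) ^ s / τ with hh
  have hint : ∫ x in Ioi (0:ℝ), (|(-1:ℝ)| * x ^ ((-1:ℝ) - 1)) • gg s m b M (x ^ (-1:ℝ)) =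
      ∫ τ in (0:ℝ)..(M + b / m), (m ^ s * τ ^ (2 * s - 1) - h τ) := by
    rw [intervalIntegral.integral_of_le hMb.le]
    have : Ioc 0 (M + b/m) = Ioi 0 ∩ Iic (M + b/m) := by ext; simp
    rw [this, ← setIntegral_indicator measurableSet_Iic]
    refine setIntegral_congr_fun measurableSet_Ioi fun τ hτ => ?_
    have hτ0 : 0 < τ := hτ
    simp only [indicator, mem_Iic, gg]
    rw [Real.rpow_neg_one]
    have h1 : 1 ≤ τ⁻¹ * (M + b / m) ↔ τ ≤ M + b / m := by
      rw [inv_mul_eq_div, le_div_iff₀ hτ0, one_mul]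
    simp only [h1]
    split_ifs with hle
    · have h2 : m - 2 * b * τ⁻¹ - τ⁻¹ ^ 2 = (m * τ ^ 2 - 2 * b * τ - 1) / τ ^ 2 := by field_simp
      have h3 : max ((m * τ ^ 2 - 2 * b * τ - 1) / τ ^ 2) 0 = max (m * τ ^ 2 - 2 * b * τ - 1) 0 / τ ^ 2 := by
        rw [← max_div_div_right (by positivity), zero_div]
      rw [h2, h3, Real.div_rpow (le_max_right _ _) (by positivity), Real.inv_rpow hτ0.le,
        ← Real.rpow_neg hτ0.le]
      have h4 : (τ ^ 2) ^ s = τ ^ (2 * s) := by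
        rw [← Real.rpow_natCast, ← Real.rpow_mul hτ0.le]; norm_num
      rw [h4]
      have h5 : τ ^ (-(-1 - 2 * s)) = τ ^ (2 * s) * τ := by
        rw [← Real.rpow_add_one hτ0.ne']; congr 1; ring
      have h6 : τ ^ (2 * s - 1) = τ ^ (2 * s) / τ := by rw [Real.rpow_sub_one hτ0.ne']
      have h7 : τ ^ ((-1:ℝ) - 1) = 1 / τ ^ 2 := by
        rw [show (-1:ℝ) - 1 = -((2:ℕ):ℝ) by norm_num, Real.rpow_neg hτ0.le, Real.rpow_natCast, one_div]
      rw [h5, h6, h7, hh]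
      have : 0 < τ ^ (2 * s) := by positivity
      simp only [abs_neg, abs_one, smul_eq_mul]
      field_simp
    · simp
  rw [hint]
  have hq : ∀ τ, m * τ ^ 2 - 2 * b * τ - 1 = m * (τ - b / m) ^ 2 - C := by
    intro τ; rw [hC]; field_simp; ring
  have hz : ∀ τ ∈ Icc 0 (c + b/m), h τ = 0 := by
    intro τ hτ
    simp only [hh]
    rw [max_eq_right, Real.zero_rpow hs0.ne', zero_div]
    rw [hq, ← hc2]
    have : (τ - b/m) ^ 2 ≤ c ^ 2 := by
      apply sq_le_sq.2
      rw [abs_of_pos hcpos, abs_le]; constructor <;> linarith [hτ.1, hτ.2]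
    nlinarith
  have hz1 : IntervalIntegrable h volume 0 (c + b/m) := by
    refine (IntervalIntegrable.zero (μ := volume) (a := 0) (b := c + b/m) (E := ℝ)).congr (fun τ hτ => ?_)
    rw [uIoc_of_le (by linarith)] at hτ
    exact (hz τ ⟨hτ.1.le, hτ.2⟩).symm
  have hz2 : IntervalIntegrable h volume (c + b/m) (M + b/m) := by
    apply ContinuousOn.intervalIntegrable
    rw [uIcc_of_le (by linarith)]
    apply ContinuousOn.div
    · exact ContinuousOn.rpow_const (by fun_prop) (fun x hx => Or.inr hs0.le)
    · fun_prop
    · intro x hx; linarith [hx.1]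
  have hpow : IntervalIntegrable (fun τ : ℝ => m ^ s * τ ^ (2 * s - 1)) volume 0 (M + b/m) :=
    (intervalIntegral.intervalIntegrable_rpow' (by linarith)).const_mul _
  rw [intervalIntegral.integral_sub hpow (hz1.trans hz2), intervalIntegral.integral_const_mul,
    integral_rpow (Or.inl (by linarith)), ← intervalIntegral.integral_add_adjacent_intervals hz1 hz2]
  have hz3 : ∫ τ in (0:ℝ)..(c + b/m), h τ = 0 := by
    rw [intervalIntegral.integral_congr (g := fun _ => 0)]
    · simp
    · intro τ hτ
      rw [uIcc_of_le (by linarith)] at hτ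
      exact hz τ hτ
  rw [hz3, ← intervalIntegral.integral_comp_add_right, sub_add_cancel, Real.zero_rpow (by linarith)]
  have : ∫ σ in c..M, h (σ + b/m) = ∫ σ in c..M, (m * σ ^ 2 - C) ^ s / (σ + b/m) := by
    apply intervalIntegral.integral_congr
    intro σ hσ
    rw [uIcc_of_le hM.le] at hσ
    simp only [hh]
    rw [hq, add_sub_cancel_right, max_eq_left]
    rw [← hc2]
    have : c ^ 2 ≤ σ ^ 2 := pow_le_pow_left₀ hcpos.le hσ.1 2
    nlinarith
  rw [this]
  ring

lemma gg_sum {s m b M : ℝ} (hs0 : 0 < s) (hm : 0 < m)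
    (hM : Real.sqrt ((1 + b ^ 2 / m) / m) < M) :
    (∫ t in Ioi 0, gg s m b M t) + (∫ t in Ioi 0, gg s m (-b) M t) =
      m ^ s * ((M + b / m) ^ (2 * s) + (M - b / m) ^ (2 * s)) / (2 * s)
      - (m * M ^ 2 - (1 + b ^ 2 / m)) ^ s / s
      + ∫ q in (0:ℝ)..(m * M ^ 2 - (1 + b ^ 2 / m)), q ^ (s - 1) / (1 + q) := by
  obtain ⟨i1, e1⟩ := gg_integral hs0 hm hM
  obtain ⟨i2, e2⟩ := gg_integral (b := -b) hs0 hm (by simpa using hM)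
  simp only [neg_sq, neg_div] at i2 e2
  rw [e1, e2]
  set C := 1 + b ^ 2 / m with hC
  set c := Real.sqrt (C / m) with hc
  have hCpos : 0 < C := by positivity
  have hc2 : m * c ^ 2 = C := by
    rw [hc, Real.sq_sqrt (by positivity)]; field_simp
  have hcpos : 0 < c := Real.sqrt_pos.2 (by positivity)
  have hbc : |b / m| < c := by
    apply abs_lt_of_sq_lt_sq _ hcpos.le
    have : c ^ 2 = (b / m) ^ 2 + 1 / m := by
      rw [hc, Real.sq_sqrt (by positivity), hC]; field_simp; ring
    rw [this]; linarith [show 0 < 1 / m by positivity]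
  obtain ⟨hb1, hb2⟩ := abs_lt.1 hbc
  set Q := m * M ^ 2 - C with hQ
  have hQpos : 0 < Q := by
    rw [hQ, ← hc2]
    have : c ^ 2 < M ^ 2 := pow_lt_pow_left₀ hM hcpos.le (by norm_num)
    nlinarith
  have hsum : (∫ σ in c..M, (m * σ ^ 2 - C) ^ s / (σ + b / m)) +
      (∫ σ in c..M, (m * σ ^ 2 - C) ^ s / (σ + -(b / m))) = ∫ q in (0:ℝ)..Q, q ^ s / (1 + q) := by
    rw [← intervalIntegral.integral_add i1 i2]
    have hsub := intervalIntegral.integral_comp_mul_deriv'' (a := c) (b := M)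
      (f := fun σ => m * σ ^ 2 - C) (f' := fun σ => 2 * m * σ) (g := fun q => q ^ s / (1 + q))
      (by fun_prop) ?_ (by fun_prop) ?_
    · rw [hc2, sub_self] at hsub
      rw [← hQ] at hsub
      rw [← hsub]
      apply intervalIntegral.integral_congr
      intro σ hσ
      rw [uIcc_of_le hM.le] at hσ
      simp only [Function.comp]
      have h1 : 0 < σ + b / m := by linarith [hσ.1]
      have h2 : 0 < σ - b / m := by linarith [hσ.1]
      have h3 : 1 + (m * σ ^ 2 - C) = m * ((σ + b / m) * (σ - b / m)) := by rw [hC]; field_simp; ring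
      rw [h3, ← sub_eq_add_neg]
      generalize (m * σ ^ 2 - C) ^ s = X
      generalize hA : σ + b / m = A at *
      generalize hB : σ - b / m = B at *
      have : 2 * σ = A + B := by rw [← hA, ← hB]; ring
      have h4 : 2 * m * σ = m * (A + B) := by rw [← this]; ring
      rw [h4]
      field_simp
      ring
    · intro x hx
      have := (((hasDerivAt_id x).pow 2).const_mul m).sub_const C
      refine (this.congr_deriv ?_).hasDerivWithinAt
      simp; ring
    · rintro q ⟨σ, hσ, rfl⟩
      rw [uIcc_of_le hM.le] at hσ
      have : c ^ 2 ≤ σ ^ 2 := pow_le_pow_left₀ hcpos.le hσ.1 2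
      apply ContinuousWithinAt.div
      · exact ContinuousWithinAt.rpow_const continuousWithinAt_id (Or.inr hs0.le)
      · fun_prop
      · simp only; rw [← hc2]; nlinarith
  have hsplit : ∫ q in (0:ℝ)..Q, q ^ s / (1 + q) = Q ^ s / s - ∫ q in (0:ℝ)..Q, q ^ (s - 1) / (1 + q) := by
    have e : Q ^ s / s = ∫ q in (0:ℝ)..Q, q ^ (s - 1) := by
      rw [integral_rpow (Or.inl (by linarith))]
      rw [sub_add_cancel, Real.zero_rpow hs0.ne', sub_zero]
    have j1 : IntervalIntegrable (fun q : ℝ => q ^ (s - 1)) volume 0 Q :=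
      intervalIntegral.intervalIntegrable_rpow' (by linarith)
    have j2 : IntervalIntegrable (fun q : ℝ => q ^ (s - 1) / (1 + q)) volume 0 Q := by
      simp only [div_eq_mul_inv]
      apply j1.mul_continuousOn
      rw [uIcc_of_le hQpos.le]
      apply ContinuousOn.inv₀ (by fun_prop)
      intro x hx; linarith [hx.1]
    rw [e, ← intervalIntegral.integral_sub j1 j2]
    apply intervalIntegral.integral_congr_ae
    rw [uIoc_of_le hQpos.le]
    refine Eventually.of_forall fun q hq => ?_
    have hq0 : 0 < q := hq.1
    rw [Real.rpow_sub_one hq0.ne']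
    field_simp
    ring
  rw [← sub_eq_add_neg] at *
  linear_combination (-1) * hsum - hsplit

lemma gg_sum_tendsto {s m b1 : ℝ} (hs0 : 0 < s) (hs1 : s < 1) (hm : 0 < m) {δ : ℝ} (hδ : 0 < δ) :
    ∀ᶠ M in atTop, ∀ b, |b| ≤ b1 →
      |(∫ t in Ioi 0, gg s m b M t) + (∫ t in Ioi 0, gg s m (-b) M t) - Real.pi / Real.sin (Real.pi * s)| ≤ δ := by
  obtain ⟨K1, hK1, t1⟩ := taylor1 (2 * s)
  obtain ⟨K2, hK2, t2⟩ := taylor1 s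
  set C1 := 1 + b1 ^ 2 / m with hC1
  have hC1pos : 0 < C1 := by positivity
  -- limits
  have l1 : Tendsto (fun M : ℝ => M ^ (2 * s - 2)) atTop (nhds 0) := by
    have := tendsto_rpow_neg_atTop (show 0 < 2 - 2 * s by linarith)
    simpa using this
  have lI : Tendsto (fun Q : ℝ => ∫ q in (0:ℝ)..Q, q ^ (s - 1) / (1 + q)) atTop
      (nhds (Real.pi / Real.sin (Real.pi * s))) := by
    rw [← beta_int hs0 hs1]
    exact intervalIntegral_tendsto_integral_Ioi 0 (beta_integrable hs0 hs1) tendsto_id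
  set K := m ^ s * (2 * K1 * (b1 / m) ^ 2) / (2 * s) + m ^ s * (K2 * (C1 / m)) / s with hK
  have l2 : Tendsto (fun M : ℝ => K * M ^ (2 * s - 2)) atTop (nhds 0) := by
    simpa using l1.const_mul K
  have e1 : ∀ᶠ M : ℝ in atTop, |K * M ^ (2 * s - 2)| ≤ δ / 2 := by
    have := (tendsto_order.1 l2.abs).2 (δ/2) (by simpa using (by positivity : 0 < δ / 2))
    filter_upwards [this] with M hM using hM.le
  have e2 : ∀ᶠ Q : ℝ in atTop, |(∫ q in (0:ℝ)..Q, q ^ (s - 1) / (1 + q)) - Real.pi / Real.sin (Real.pi * s)| ≤ δ / 2 := by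
    have := Metric.tendsto_nhds.1 lI (δ/2) (by positivity)
    filter_upwards [this] with Q hQ
    rw [Real.dist_eq] at hQ
    exact hQ.le
  obtain ⟨Q0, hQ0⟩ := eventually_atTop.1 e2
  have lQ : Tendsto (fun M : ℝ => m * M ^ 2 - C1) atTop atTop :=
    tendsto_atTop_add_const_right _ _ ((tendsto_pow_atTop (by norm_num)).const_mul_atTop hm)
  filter_upwards [e1, lQ.eventually_ge_atTop Q0, lQ.eventually_ge_atTop C1, eventually_gt_atTop 0,
    eventually_gt_atTop (Real.sqrt (C1 / m)), eventually_ge_atTop (2 * b1 / m)] with M h1 h2 h2' hM0 hMc hMb b hb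
  have hb' : b ^ 2 ≤ b1 ^ 2 := sq_le_sq' (by linarith [neg_abs_le b]) ((le_abs_self b).trans hb)
  have hCC : 1 + b ^ 2 / m ≤ C1 := by rw [hC1]; gcongr
  have hb1 : 0 ≤ b1 := (abs_nonneg b).trans hb
  rw [gg_sum hs0 hm (lt_of_le_of_lt (Real.sqrt_le_sqrt (by gcongr)) hMc)]
  set C := 1 + b ^ 2 / m with hC
  have hCpos : 0 < C := by positivity
  have hQ := hQ0 (m * M ^ 2 - C) (by linarith)
  -- main terms
  set e := b / (m * M) with he
  have hbe : b / m = M * e := by rw [he]; field_simp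
  have heabs : |e| ≤ 1/2 := by
    rw [he, abs_div, abs_of_pos (by positivity : 0 < m * M), div_le_iff₀ (by positivity)]
    rw [div_le_iff₀ hm] at hMb
    linarith
  obtain ⟨-, ta⟩ := t1 e heabs
  obtain ⟨-, tb⟩ := t1 (-e) (by rwa [abs_neg])
  set f := - (C / (m * M ^ 2)) with hf
  have hfabs : |f| ≤ 1/2 := by
    rw [hf, abs_neg, abs_of_pos (by positivity), div_le_iff₀ (by positivity)]
    linarith
  obtain ⟨tc, -⟩ := t2 f hfabs
  have hMs : M ^ (2 * s) = M ^ (2 * s - 2) * M ^ 2 := by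
    rw [← Real.rpow_natCast, ← Real.rpow_add hM0]; norm_num
  have r1 : (M + b / m) ^ (2 * s) = M ^ (2 * s) * (1 + e) ^ (2 * s) := by
    rw [← Real.mul_rpow hM0.le (by linarith [(abs_le.1 heabs).1]), hbe]; ring_nf
  have r2 : (M - b / m) ^ (2 * s) = M ^ (2 * s) * (1 + -e) ^ (2 * s) := by
    rw [← Real.mul_rpow hM0.le (by linarith [(abs_le.1 heabs).2]), hbe]; ring_nf
  have r3 : (m * M ^ 2 - C) ^ s = m ^ s * M ^ (2 * s) * (1 + f) ^ s := by
    have : M ^ (2 * s) = (M ^ 2) ^ s := by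
      rw [← Real.rpow_natCast, ← Real.rpow_mul hM0.le]; norm_num
    rw [this, ← Real.mul_rpow hm.le (by positivity), ← Real.mul_rpow (by positivity) (by linarith [(abs_le.1 hfabs).1])]
    congr 1
    rw [hf]; field_simp; ring
  rw [r1, r2, r3]
  set I := ∫ q in (0:ℝ)..(m * M ^ 2 - C), q ^ (s - 1) / (1 + q) with hI
  have key : m ^ s * (M ^ (2 * s) * (1 + e) ^ (2 * s) + M ^ (2 * s) * (1 + -e) ^ (2 * s)) / (2 * s) -
      m ^ s * M ^ (2 * s) * (1 + f) ^ s / s = m ^ s * M ^ (2 * s) / (2 * s) *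
        (((1 + e) ^ (2 * s) - 1 - 2 * s * e) + ((1 + -e) ^ (2 * s) - 1 - 2 * s * -e)) -
        m ^ s * M ^ (2 * s) / s * ((1 + f) ^ s - 1) := by
    field_simp; ring
  have hbd : |m ^ s * M ^ (2 * s) / (2 * s) *
        (((1 + e) ^ (2 * s) - 1 - 2 * s * e) + ((1 + -e) ^ (2 * s) - 1 - 2 * s * -e)) -
        m ^ s * M ^ (2 * s) / s * ((1 + f) ^ s - 1)| ≤ K * M ^ (2 * s - 2) := by
    refine (abs_sub _ _).trans ?_
    rw [abs_mul, abs_mul, abs_of_pos (by positivity : 0 < m ^ s * M ^ (2 * s) / (2 * s)),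
      abs_of_pos (by positivity : 0 < m ^ s * M ^ (2 * s) / s)]
    have g1 : |((1 + e) ^ (2 * s) - 1 - 2 * s * e) + ((1 + -e) ^ (2 * s) - 1 - 2 * s * -e)| ≤ 2 * K1 * ((b1 / m) ^ 2 / M ^ 2) := by
      refine (abs_add_le _ _).trans ?_
      have : e ^ 2 ≤ (b1 / m) ^ 2 / M ^ 2 := by
        rw [he, div_pow, div_pow, mul_pow, div_div]; gcongr
      have h4 : K1 * e ^ 2 ≤ K1 * ((b1 / m) ^ 2 / M ^ 2) := mul_le_mul_of_nonneg_left this hK1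
      rw [neg_sq] at tb
      linarith
    have g2 : |(1 + f) ^ s - 1| ≤ K2 * (C1 / m / M ^ 2) := by
      refine tc.trans ?_
      gcongr
      rw [hf, abs_neg, abs_of_pos (by positivity), div_div]
      gcongr
    calc _ ≤ m ^ s * M ^ (2 * s) / (2 * s) * (2 * K1 * ((b1 / m) ^ 2 / M ^ 2)) + m ^ s * M ^ (2 * s) / s * (K2 * (C1 / m / M ^ 2)) := by gcongr
      _ = K * M ^ (2 * s - 2) := by rw [hMs, hK]; field_simp
  rw [key]
  have h1' := (le_abs_self _).trans h1
  rw [add_sub_assoc]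
  refine (abs_add_le _ _).trans ?_
  linarith


def KK (n : ℕ) (s : ℝ) (x z : Pt n) : ℝ := dist x z ^ (-((n:ℝ) + 2 * s))

lemma KK_nonneg {n : ℕ} {s : ℝ} (x z : Pt n) : 0 ≤ KK n s x z := by unfold KK; positivity

lemma KK_meas {n : ℕ} {s : ℝ} (x : Pt n) : Measurable (KK n s x) := by unfold KK; fun_prop

def shl (n : ℕ) : ℝ := n * volume.real (ball (0 : Pt n) 1)

lemma radial_integrable {n : ℕ} (hn : 0 < n) (x : Pt n) (f : ℝ → ℝ) :
    Integrable (fun z => f (dist x z)) ↔ IntegrableOn (fun t => t ^ (n - 1) * f t) (Ioi 0) := by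
  have : Nontrivial (Pt n) := pt_nontrivial hn
  have h := integrable_fun_norm_addHaar (volume : Measure (Pt n)) (f := f)
  simp only [finrank_euclideanSpace, Fintype.card_fin, smul_eq_mul] at h
  rw [← h]
  have h2 := (measurePreserving_sub_right (volume : Measure (Pt n)) x).integrable_comp_emb
    (MeasurableEquiv.subRight x).measurableEmbedding (g := fun z : Pt n => f ‖z‖)
  rw [← h2]
  simp only [Function.comp_def, dist_comm x, dist_eq_norm]

lemma far_integrable {n : ℕ} (hn : 0 < n) {s : ℝ} (hs0 : 0 < s) (x : Pt n) {ε : ℝ} (hε : 0 < ε) :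
    IntegrableOn (KK n s x) {z | ε ≤ dist x z} := by
  have h := (radial_integrable hn x ((Ici ε).indicator fun t => t ^ (-((n:ℝ) + 2 * s)))).2 ?_
  · rw [← integrable_indicator_iff (measurableSet_le (by fun_prop) (by fun_prop))]
    refine h.congr (Eventually.of_forall fun z => ?_)
    simp only [indicator, mem_Ici, mem_ofPred_eq, KK]
  · have h1 : IntegrableOn (fun t : ℝ => t ^ (-1 - 2 * s)) (Ici ε) := by
      rw [integrableOn_Ici_iff_integrableOn_Ioi]
      exact integrableOn_Ioi_rpow_of_lt (by linarith) hε
    have h2 : IntegrableOn ((Ici ε).indicator fun t : ℝ => t ^ (-1 - 2 * s)) (Ioi 0) :=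
      (h1.integrable_indicator measurableSet_Ici).integrableOn
    refine h2.congr_fun (fun t ht => ?_) measurableSet_Ioi
    have ht0 : 0 < t := ht
    simp only [indicator]
    split_ifs
    · rw [← Real.rpow_natCast, ← Real.rpow_add ht0, Nat.cast_sub hn]
      congr 1; push_cast; ring
    · simp

lemma near_integrable {n : ℕ} (hn : 0 < n) {s : ℝ} (hs1 : s < 1) (x : Pt n) {δ : ℝ} (hδ : 0 < δ) :
    IntegrableOn (fun z => dist x z ^ (2 - ((n:ℝ) + 2 * s))) (ball x δ) := by
  have h := (radial_integrable hn x ((Iio δ).indicator fun t => t ^ (2-((n:ℝ) + 2 * s)))).2 ?_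
  · rw [← integrable_indicator_iff measurableSet_ball]
    refine h.congr (Eventually.of_forall fun z => ?_)
    simp only [indicator, mem_Iio, mem_ball, dist_comm z x]
  · have h1 : IntegrableOn (fun t : ℝ => t ^ (1 - 2 * s)) (Ioo 0 δ) := by
      have := (intervalIntegral.intervalIntegrable_rpow' (a := 0) (b := δ) (r := 1 - 2 * s) (by linarith))
      rw [intervalIntegrable_iff_integrableOn_Ioo_of_le hδ.le] at this
      exact this
    have h2 : IntegrableOn ((Iio δ).indicator fun t : ℝ => t ^ (1 - 2 * s)) (Ioi 0) := by
      rw [integrableOn_indicator_iff measurableSet_Iio]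
      refine h1.mono_set ?_
      intro t ht; exact ⟨ht.2, ht.1⟩
    refine h2.congr_fun (fun t ht => ?_) measurableSet_Ioi
    have ht0 : 0 < t := ht
    simp only [indicator]
    split_ifs
    · rw [← Real.rpow_natCast, ← Real.rpow_add ht0, Nat.cast_sub hn]
      congr 1; push_cast; ring
    · simp

lemma shell_lemma {n : ℕ} (hn : 0 < n) {s : ℝ} (hs0 : 0 < s) (hs1 : s < 1) (ξ : Pt n) (G : Pt n → ℝ)
    {C δ c : ℝ} (hδ : 0 < δ) (hc : 0 ≤ c) (hC : 0 ≤ C)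
    (hGb : ∀ ζ, dist ξ ζ < δ → |G ζ| ≤ C * dist ξ ζ ^ (1 - ((n:ℝ) + 2 * s)))
    (hGi : ∀ ε, 0 < ε → IntegrableOn G {ζ | ε ≤ dist ξ ζ})
    (A : ℝ → Set (Pt n)) (hAm : ∀ ε, MeasurableSet (A ε))
    (hA1 : ∀ᶠ ε in nhdsWithin 0 (Ioi (0:ℝ)), ∀ ζ, ζ ∈ A ε → ε * (1 - c * ε) ≤ dist ξ ζ)
    (hA2 : ∀ᶠ ε in nhdsWithin 0 (Ioi (0:ℝ)), ∀ ζ, ζ ∉ A ε → dist ξ ζ ≤ ε * (1 + c * ε)) :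
    (∀ᶠ ε in nhdsWithin 0 (Ioi (0:ℝ)), IntegrableOn G (A ε)) ∧
    Tendsto (fun ε => (∫ ζ in A ε, G ζ) - ∫ ζ in {ζ | ε ≤ dist ξ ζ}, G ζ) (nhdsWithin 0 (Ioi 0)) (nhds 0) := by
  have : Nontrivial (Pt n) := pt_nontrivial hn
  obtain ⟨T, hT, hTay⟩ := taylor1 (n:ℝ)
  have hn1 : (1:ℝ) ≤ n := by exact_mod_cast hn
  have hpos : ∀ᶠ ε in nhdsWithin 0 (Ioi (0:ℝ)), 0 < ε := eventually_mem_nhdsWithin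
  have hsm : ∀ a : ℝ, 0 < a → ∀ᶠ ε in nhdsWithin 0 (Ioi (0:ℝ)), ε < a := fun a ha =>
    mem_nhdsWithin_of_mem_nhds (Iio_mem_nhds ha)
  have hce : ∀ᶠ ε in nhdsWithin 0 (Ioi (0:ℝ)), c * ε ≤ 1/2 := by
    filter_upwards [hsm (1/(2*(c+1))) (by positivity), hpos] with ε h h0
    rw [lt_div_iff₀ (by positivity)] at h
    nlinarith
  have hAint : ∀ᶠ ε in nhdsWithin 0 (Ioi (0:ℝ)), IntegrableOn G (A ε) := by
    filter_upwards [hpos, hce, hA1] with ε h0 h1 h2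
    refine (hGi (ε/2) (by positivity)).mono_set ?_
    intro ζ hζ
    have := h2 ζ hζ
    simp only [mem_ofPred_eq]; nlinarith
  refine ⟨hAint, ?_⟩
  set V := volume.real (ball (0 : Pt n) 1) with hV
  have hV0 : 0 ≤ V := measureReal_nonneg
  set Kc := 2 * C * (1/2:ℝ) ^ (1 - ((n:ℝ) + 2 * s)) * (2 * T * c * V) with hKc
  have hlim : Tendsto (fun ε : ℝ => Kc * ε ^ (2 - 2 * s)) (nhdsWithin 0 (Ioi 0)) (nhds 0) := by
    have : Tendsto (fun ε : ℝ => Kc * ε ^ (2 - 2 * s)) (nhds 0) (nhds (Kc * 0 ^ (2 - 2 * s))) := by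
      apply Tendsto.const_mul
      exact (Real.continuousAt_rpow_const _ _ (Or.inr (by linarith))).tendsto
    rw [Real.zero_rpow (by linarith), mul_zero] at this
    exact this.mono_left nhdsWithin_le_nhds
  apply squeeze_zero_norm' _ hlim
  filter_upwards [hpos, hce, hA1, hA2, hAint, hsm (δ/2) (by positivity)] with ε h0 h1 h2 h3 h4 h5
  set B := {ζ | ε ≤ dist ξ ζ} with hB
  have hBm : MeasurableSet B := measurableSet_le (by fun_prop) (by fun_prop)
  have hBi : IntegrableOn G B := hGi ε h0
  rw [← integral_inter_add_sdiff hBm h4, ← integral_inter_add_sdiff (hAm ε) hBi, inter_comm B]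
  set S := {ζ | ε * (1 - c * ε) ≤ dist ξ ζ ∧ dist ξ ζ ≤ ε * (1 + c * ε)} with hS
  have hSsub : S ⊆ closedBall ξ (ε * (1 + c * ε)) \ ball ξ (ε * (1 - c * ε)) := by
    intro ζ hζ
    simp only [Set.mem_sdiff, mem_closedBall, mem_ball, dist_comm ζ ξ, not_lt]
    exact ⟨hζ.2, hζ.1⟩
  have hce0 : 0 ≤ c * ε := by positivity
  have hSfin : volume S < ⊤ := lt_of_le_of_lt (measure_mono (hSsub.trans sdiff_subset)) measure_closedBall_lt_top
  have hSvol : volume.real S ≤ 2 * T * c * V * (ε ^ (n + 1)) := by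
    calc volume.real S ≤ volume.real (closedBall ξ (ε * (1 + c * ε)) \ ball ξ (ε * (1 - c * ε))) :=
          measureReal_mono hSsub (ne_top_of_le_ne_top measure_closedBall_lt_top.ne (measure_mono sdiff_subset))
      _ = (ε * (1 + c * ε)) ^ n * V - (ε * (1 - c * ε)) ^ n * V := by
          rw [measureReal_sdiff _ measurableSet_ball measure_closedBall_lt_top.ne]
          · rw [Measure.addHaar_real_closedBall _ _ (by positivity), ← Measure.addHaar_real_closedBall_eq_addHaar_real_ball _ ξ (ε * (1 - c * ε)), Measure.addHaar_real_closedBall _ _ (by nlinarith)]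
            simp [hV]
          · exact ball_subset_closedBall.trans (closedBall_subset_closedBall (by nlinarith))
      _ = ε ^ n * V * (((1 + c * ε) ^ n - 1) - ((1 - c * ε) ^ n - 1)) := by rw [mul_pow, mul_pow]; ring
      _ ≤ ε ^ n * V * (T * (c * ε) + T * (c * ε)) := by
          gcongr
          have a1 := (hTay (c * ε) (by rw [abs_of_nonneg hce0]; exact h1)).1
          have a2 := (hTay (-(c * ε)) (by rw [abs_neg, abs_of_nonneg hce0]; exact h1)).1
          rw [abs_neg] at a2
          rw [abs_of_nonneg hce0, Real.rpow_natCast] at a1 a2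
          rw [← sub_eq_add_neg] at a2
          linarith [(abs_le.1 a1).2, (abs_le.1 a2).1]
      _ = _ := by ring
  have hGS : ∀ ζ ∈ S, ‖G ζ‖ ≤ C * (ε/2) ^ (1 - ((n:ℝ) + 2 * s)) := by
    intro ζ hζ
    have hh : ε / 2 ≤ dist ξ ζ := by nlinarith [hζ.1]
    refine (hGb ζ (by nlinarith [hζ.2])).trans ?_
    exact mul_le_mul_of_nonneg_left (Real.rpow_le_rpow_of_nonpos (by positivity) hh (by linarith)) hC
  have hbound : ∀ D : Set (Pt n), D ⊆ S → ‖∫ ζ in D, G ζ‖ ≤ C * (ε/2) ^ (1 - ((n:ℝ) + 2 * s)) * (2 * T * c * V * (ε ^ (n + 1))) := by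
    intro D hD
    have hDfin : volume D < ⊤ := lt_of_le_of_lt (measure_mono hD) hSfin
    refine (norm_setIntegral_le_of_norm_le_const hDfin (fun x hx => hGS x (hD hx))).trans ?_
    gcongr
    exact (measureReal_mono hD hSfin.ne).trans hSvol
  have b1 := hbound (A ε \ B) (by
    intro ζ hζ
    refine ⟨h2 ζ hζ.1, ?_⟩
    have : ¬ ε ≤ dist ξ ζ := hζ.2
    nlinarith)
  have b2 := hbound (B \ A ε) (by
    intro ζ hζ
    refine ⟨?_, h3 ζ hζ.2⟩
    have : ε ≤ dist ξ ζ := hζ.1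
    nlinarith)
  have hfin : Kc * ε ^ (2 - 2 * s) = 2 * (C * (ε/2) ^ (1 - ((n:ℝ) + 2 * s)) * (2 * T * c * V * (ε ^ (n + 1)))) := by
    have : ε ^ (2 - 2 * s) = ε ^ (1 - ((n:ℝ) + 2 * s)) * ε ^ (n + 1) := by
      rw [← Real.rpow_natCast, ← Real.rpow_add h0]; congr 1; push_cast; ring
    rw [this, show ε / 2 = ε * (1/2) by ring, Real.mul_rpow h0.le (by norm_num), hKc]; ring
  rw [hfin, add_sub_add_left_eq_sub]
  refine (norm_sub_le _ _).trans ?_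
  linarith


def phi (n : ℕ) (s r : ℝ) (z : Pt n) : ℝ := (max (r ^ 2 - ‖z‖ ^ 2) 0) ^ s

lemma phi_nonneg {n : ℕ} {s r : ℝ} (z : Pt n) : 0 ≤ phi n s r z := Real.rpow_nonneg (le_max_right _ _) _

lemma phi_meas {n : ℕ} {s r : ℝ} : Measurable (phi n s r) := by unfold phi; fun_prop

lemma phi_le {n : ℕ} {s r : ℝ} (hs0 : 0 < s) (z : Pt n) : phi n s r z ≤ (r ^ 2) ^ s :=
  Real.rpow_le_rpow (le_max_right _ _) (max_le (by nlinarith [sq_nonneg ‖z‖]) (by positivity)) hs0.le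

lemma phi_lip {n : ℕ} {s r : ℝ} (ξ : Pt n) (hξ : ‖ξ‖ < r) :
    ∃ C δ, 0 ≤ C ∧ 0 < δ ∧ ∀ ζ, dist ξ ζ < δ → |phi n s r ξ - phi n s r ζ| ≤ C * dist ξ ζ := by
  obtain ⟨T, hT, ht⟩ := taylor1 s
  have hr : 0 < r := lt_of_le_of_lt (norm_nonneg _) hξ
  set m := r ^ 2 - ‖ξ‖ ^ 2 with hm
  have hmpos : 0 < m := by rw [hm]; nlinarith [norm_nonneg ξ]
  refine ⟨m ^ s * (T * ((2 * r + 1) / m)), min 1 (m / (2 * (2 * r + 1))), by positivity, by positivity, ?_⟩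
  intro ζ hζ
  have h1 : dist ξ ζ < 1 := lt_of_lt_of_le hζ (min_le_left _ _)
  have h2 : dist ξ ζ < m / (2 * (2 * r + 1)) := lt_of_lt_of_le hζ (min_le_right _ _)
  have hd0 : 0 ≤ dist ξ ζ := dist_nonneg
  have hn : |‖ξ‖ - ‖ζ‖| ≤ dist ξ ζ := by rw [dist_eq_norm]; exact abs_norm_sub_norm_le ξ ζ
  set e := (‖ξ‖ ^ 2 - ‖ζ‖ ^ 2) / m with he
  have heb : |e| ≤ (2 * r + 1) / m * dist ξ ζ := by
    rw [he, abs_div, abs_of_pos hmpos, div_mul_eq_mul_div]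
    gcongr
    rw [sq_sub_sq, abs_mul, abs_of_nonneg (by positivity)]
    have h3 := (abs_le.1 hn).1
    exact mul_le_mul (by linarith) hn (abs_nonneg _) (by positivity)
  have he2 : |e| ≤ 1 / 2 := by
    refine heb.trans ?_
    rw [lt_div_iff₀ (by positivity)] at h2
    rw [div_mul_eq_mul_div, div_le_iff₀ hmpos]
    nlinarith
  have e1 : phi n s r ξ = m ^ s := by unfold phi; rw [← hm, max_eq_left hmpos.le]
  have e2 : phi n s r ζ = m ^ s * (1 + e) ^ s := by
    unfold phi
    have : r ^ 2 - ‖ζ‖ ^ 2 = m * (1 + e) := by rw [he]; field_simp; rw [hm]; ring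
    have h1e : 0 ≤ 1 + e := by linarith [(abs_le.1 he2).1]
    rw [this, max_eq_left (by positivity), Real.mul_rpow hmpos.le h1e]
  rw [e1, e2]
  have : m ^ s - m ^ s * (1 + e) ^ s = - (m ^ s * ((1 + e) ^ s - 1)) := by ring
  rw [this, abs_neg, abs_mul, abs_of_pos (by positivity), mul_assoc]
  gcongr
  refine (ht e he2).1.trans ?_
  rw [mul_assoc]
  gcongr

lemma mul_KK {n : ℕ} (hn : 0 < n) {s : ℝ} (hs0 : 0 < s) (x z : Pt n) : dist x z * KK n s x z = dist x z ^ (1 - ((n:ℝ) + 2 * s)) := by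
  unfold KK
  have hn1 : (1:ℝ) ≤ n := by exact_mod_cast hn
  rcases (dist_nonneg : 0 ≤ dist x z).eq_or_lt with h | h
  · rw [← h, zero_mul, Real.zero_rpow (by linarith)]
  · rw [mul_comm, ← Real.rpow_add_one h.ne']; congr 1; ring

lemma bdd_mul_KK_integrable {n : ℕ} (hn : 0 < n) {s : ℝ} (hs0 : 0 < s) (x : Pt n) {ε C : ℝ} (hε : 0 < ε)
    {f : Pt n → ℝ} (hf : AEStronglyMeasurable f volume) (hb : ∀ z, |f z| ≤ C) :
    IntegrableOn (fun z => f z * KK n s x z) {z | ε ≤ dist x z} := by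
  apply Integrable.bdd_mul (far_integrable hn hs0 x hε) hf.restrict (c := C)
  exact Eventually.of_forall hb

lemma toSphere_real_univ (n : ℕ) (hn : 0 < n): (volume : Measure (Pt n)).toSphere.real univ = shl n := by
  have : Nontrivial (Pt n) := pt_nontrivial hn
  rw [Measure.toSphere_real_apply_univ]; simp [shl]

lemma torsion {n : ℕ} (hn : 0 < n) {s r : ℝ} (hs0 : 0 < s) (hs1 : s < 1) (ξ : Pt n) (hξ : ‖ξ‖ < r) :
    Tendsto (fun ε => ∫ ζ in {ζ | ε ≤ dist ξ ζ}, (phi n s r ξ - phi n s r ζ) * KK n s ξ ζ)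
      (nhdsWithin 0 (Ioi 0)) (nhds (shl n / 2 * (Real.pi / Real.sin (Real.pi * s)))) := by
  have : Nontrivial (Pt n) := pt_nontrivial hn
  have hr : 0 < r := lt_of_le_of_lt (norm_nonneg _) hξ
  set m := r ^ 2 - ‖ξ‖ ^ 2 with hm
  have hmpos : 0 < m := by rw [hm]; nlinarith [norm_nonneg ξ]
  set β := Real.pi / Real.sin (Real.pi * s) with hβ
  set G : Pt n → ℝ := fun ζ => (phi n s r ξ - phi n s r ζ) * KK n s ξ ζ with hG
  have hGi : ∀ ε, 0 < ε → IntegrableOn G {ζ | ε ≤ dist ξ ζ} := fun ε hε =>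
    bdd_mul_KK_integrable hn hs0 ξ hε (C := 2 * (r ^ 2) ^ s) ((phi_meas.const_sub _).aestronglyMeasurable) (by
      intro z
      have a1 := phi_nonneg (s := s) (r := r) z
      have a2 := phi_nonneg (s := s) (r := r) ξ
      have a3 := phi_le (r := r) hs0 z
      have a4 := phi_le (r := r) hs0 ξ
      rw [abs_le]; constructor <;> linarith)
  obtain ⟨C, δ, hC, hδ, hlip⟩ := phi_lip (s := s) ξ hξ
  have hGb : ∀ ζ, dist ξ ζ < δ → |G ζ| ≤ C * dist ξ ζ ^ (1 - ((n:ℝ) + 2 * s)) := by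
    intro ζ hζ
    rw [hG, abs_mul, abs_of_nonneg (KK_nonneg _ _), ← mul_KK hn hs0, ← mul_assoc]
    exact mul_le_mul_of_nonneg_right (hlip ζ hζ) (KK_nonneg _ _)
  set A : ℝ → Set (Pt n) := fun ε => {ζ | ε ≤ ‖ζ - ξ‖ + ε * inner ℝ ξ (ζ - ξ) / m} with hA
  have hAm : ∀ ε, MeasurableSet (A ε) := fun ε => measurableSet_le (by fun_prop) (by fun_prop)
  have hpos : ∀ᶠ ε in nhdsWithin 0 (Ioi (0:ℝ)), 0 < ε := eventually_mem_nhdsWithin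
  have hsm : ∀ a : ℝ, 0 < a → ∀ᶠ ε in nhdsWithin 0 (Ioi (0:ℝ)), ε < a := fun a ha =>
    mem_nhdsWithin_of_mem_nhds (Iio_mem_nhds ha)
  have hip : ∀ h : Pt n, |inner ℝ ξ h / m| ≤ r / m * ‖h‖ := by
    intro h
    rw [abs_div, abs_of_pos hmpos, div_mul_eq_mul_div]
    gcongr
    exact (abs_real_inner_le_norm ξ h).trans (mul_le_mul_of_nonneg_right hξ.le (norm_nonneg _))
  obtain ⟨hAi, hAlim⟩ := shell_lemma hn hs0 hs1 ξ G (c := 2 * r / m) hδ (by positivity) hC hGb hGi A hAm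
    (by
      filter_upwards [hpos] with ε h0 ζ hζ
      have h1 : ε ≤ ‖ζ - ξ‖ + ε * inner ℝ ξ (ζ - ξ) / m := hζ
      have h2 := (abs_le.1 (hip (ζ - ξ))).2
      rw [dist_comm, dist_eq_norm]
      have h3 : ε ≤ ‖ζ - ξ‖ * (1 + ε * (r / m)) := by
        rw [mul_div_assoc] at h1
        nlinarith [mul_le_mul_of_nonneg_left h2 h0.le]
      have hq : 0 < ε * (r / m) := by positivity
      rw [show 2 * r / m * ε = 2 * (ε * (r / m)) by ring]
      generalize ε * (r / m) = q at *
      by_contra hcon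
      push Not at hcon
      nlinarith [norm_nonneg (ζ - ξ), mul_pos hq hq])
    (by
      filter_upwards [hpos, hsm (m / (2 * r)) (by positivity)] with ε h0 hε ζ hζ
      have h1 : ‖ζ - ξ‖ + ε * inner ℝ ξ (ζ - ξ) / m < ε := not_le.1 hζ
      have h2 := (abs_le.1 (hip (ζ - ξ))).1
      rw [dist_comm, dist_eq_norm]
      have h3 : ‖ζ - ξ‖ * (1 - ε * (r / m)) ≤ ε := by
        rw [mul_div_assoc] at h1
        nlinarith [mul_le_mul_of_nonneg_left h2 h0.le]
      have hq : 0 < ε * (r / m) := by positivity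
      have hq2 : ε * (r / m) < 1/2 := by
        rw [lt_div_iff₀ (by positivity)] at hε
        rw [← mul_div_assoc, div_lt_iff₀ hmpos]; linarith
      rw [show 2 * r / m * ε = 2 * (ε * (r / m)) by ring]
      generalize ε * (r / m) = q at *
      by_contra hcon
      push Not at hcon
      nlinarith [mul_pos (show 0 < 1 - q by linarith) (sub_pos.2 hcon), mul_pos h0 (mul_pos hq (show 0 < 1 - 2 * q by linarith))])
  have hmain : Tendsto (fun ε => ∫ ζ in A ε, G ζ) (nhdsWithin 0 (Ioi 0)) (nhds (shl n / 2 * β)) := by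
    rw [Metric.tendsto_nhds]
    intro η hη
    have hinv : Tendsto (fun ε : ℝ => 1 / ε) (nhdsWithin 0 (Ioi 0)) atTop := by
      simpa using tendsto_inv_nhdsGT_zero
    have hshl : 0 ≤ shl n := by unfold shl; positivity
    have hgs := hinv.eventually (gg_sum_tendsto (s := s) (m := m) (b1 := r) hs0 hs1 hmpos
      (δ := η / (shl n + 1)) (by positivity))
    have hbig := hinv.eventually (eventually_gt_atTop (r / m))
    filter_upwards [hpos, hgs, hAi, hbig] with ε h0 h1 h2 h3
    set H : Pt n → ℝ := fun h => if ε ≤ ‖h‖ + ε * inner ℝ ξ h / m then (m ^ s - phi n s r (ξ + h)) * ‖h‖ ^ (-((n:ℝ) + 2 * s)) else 0 with hH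
    have hphiξ : phi n s r ξ = m ^ s := by unfold phi; rw [← hm, max_eq_left hmpos.le]
    have hHt : (fun z => H (z - ξ)) = (A ε).indicator G := by
      ext z
      simp only [hH, hA, indicator, mem_ofPred_eq, hG, KK, hphiξ, dist_comm ξ, dist_eq_norm]
      rw [add_sub_cancel]
    have hHI : Integrable H := by
      have := (h2.integrable_indicator (hAm ε))
      rw [← hHt] at this
      have := this.comp_add_right ξ
      simpa using this
    have hHint : ∫ h, H h = ∫ ζ in A ε, G ζ := by
      rw [← integral_indicator (hAm ε), ← hHt, integral_sub_right_eq_self]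
    have hsymm : ∫ ζ in A ε, G ζ = 1/2 * ∫ h, (H h + H (-h)) := by
      rw [integral_add hHI hHI.comp_neg, integral_neg_eq_self, hHint]; ring
    rw [hsymm, polar_integral hn (fun h => H h + H (-h)) (hHI.add hHI.comp_neg)]
    have hin : ∀ θ : sphere (0 : Pt n) 1, |(∫ t in Ioi (0:ℝ), t ^ (n-1) * (H (t • (θ : Pt n)) + H (-(t • (θ : Pt n))))) - β| ≤ η / (shl n + 1) := by
      intro θ
      have hθ : ‖(θ : Pt n)‖ = 1 := by simp
      set b := inner ℝ ξ (θ : Pt n) with hb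
      have hbr : |b| ≤ r := (abs_real_inner_le_norm _ _).trans (by rw [hθ, mul_one]; exact hξ.le)
      have hMb : ∀ b', |b'| ≤ r → 0 < 1 / ε + b' / m := by
        intro b' hb'
        have h6 : |b' / m| ≤ r / m := by rw [abs_div, abs_of_pos hmpos]; gcongr
        linarith [(abs_le.1 h6).1]
      have hone : ∀ b' t, 0 < t → ∀ w : Pt n, ‖w‖ = t → inner ℝ ξ w = t * b' → t ^ (n - 1) * H w = gg s m b' (1 / ε) t := by
        intro b' t ht w hw hi
        simp only [hH, gg]
        have hc : (ε ≤ ‖w‖ + ε * inner ℝ ξ w / m) ↔ 1 ≤ t * (1 / ε + b' / m) := by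
          rw [hw, hi, show t + ε * (t * b') / m = ε * (t * (1 / ε + b' / m)) by field_simp]
          rw [le_mul_iff_one_le_right h0]
        simp only [hc]
        split_ifs
        · have : r ^ 2 - ‖ξ + w‖ ^ 2 = m - 2 * b' * t - t ^ 2 := by
            rw [norm_add_sq_real, hi, hw, hm]; ring
          unfold phi
          rw [this, hw]
          have h7 : t ^ (-1 - 2 * s) = t ^ (n - 1) * t ^ (-((n:ℝ) + 2 * s)) := by
            rw [← Real.rpow_natCast, ← Real.rpow_add ht, Nat.cast_sub hn]
            congr 1; push_cast; ring
          rw [h7]; ring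
        · simp
      have heq : ∫ t in Ioi (0:ℝ), t ^ (n-1) * (H (t • (θ : Pt n)) + H (-(t • (θ : Pt n)))) =
          (∫ t in Ioi (0:ℝ), gg s m b (1/ε) t) + ∫ t in Ioi (0:ℝ), gg s m (-b) (1/ε) t := by
        rw [← integral_add (gg_integrable hs0 hmpos (hMb b hbr)) (gg_integrable hs0 hmpos (hMb (-b) (by rwa [abs_neg])))]
        refine setIntegral_congr_fun measurableSet_Ioi fun t ht => ?_
        have ht0 : 0 < t := ht
        rw [mul_add, hone b t ht0 (t • (θ:Pt n)) (by rw [norm_smul, hθ, mul_one, Real.norm_of_nonneg ht0.le]) (by rw [inner_smul_right]),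
          hone (-b) t ht0 (-(t • (θ:Pt n))) (by rw [norm_neg, norm_smul, hθ, mul_one, Real.norm_of_nonneg ht0.le]) (by rw [inner_neg_right, inner_smul_right]; ring)]
      rw [heq]
      exact h1 b hbr
    set F : sphere (0 : Pt n) 1 → ℝ := fun θ => ∫ t in Ioi (0:ℝ), t ^ (n-1) * (H (t • (θ : Pt n)) + H (-(t • (θ : Pt n)))) with hF
    have hFb : ‖(∫ θ, (F θ - β) ∂(volume : Measure (Pt n)).toSphere)‖ ≤ η / (shl n + 1) * shl n := by
      have := norm_integral_le_of_norm_le_const (μ := (volume : Measure (Pt n)).toSphere) (f := fun θ => F θ - β) (Eventually.of_forall hin)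
      rwa [toSphere_real_univ n hn] at this
    by_cases hFi : Integrable F (volume : Measure (Pt n)).toSphere
    · rw [integral_sub hFi (integrable_const _), integral_const, toSphere_real_univ n hn, smul_eq_mul] at hFb
      rw [Real.dist_eq, show 1/2 * (∫ θ, F θ ∂(volume : Measure (Pt n)).toSphere) - shl n / 2 * β = 1/2 * ((∫ θ, F θ ∂(volume : Measure (Pt n)).toSphere) - shl n * β) by ring, abs_mul]
      rw [Real.norm_eq_abs] at hFb
      have h8 : η / (shl n + 1) * shl n ≤ η := by
        rw [div_mul_eq_mul_div, div_le_iff₀ (by positivity)]; nlinarith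
      rw [abs_of_pos (by norm_num : (0:ℝ) < 1/2)]
      linarith
    · exfalso
      apply hFi
      have hHm : Measurable H := by
        apply Measurable.ite (measurableSet_le (by fun_prop) (by fun_prop)) _ (by fun_prop)
        have := phi_meas (n := n) (s := s) (r := r)
        fun_prop
      have hFm : StronglyMeasurable F := by
        refine StronglyMeasurable.integral_prod_right (f := fun (θ : sphere (0 : Pt n) 1) (t : ℝ) => t ^ (n-1) * (H (t • (θ : Pt n)) + H (-(t • (θ : Pt n))))) ?_
        apply Measurable.stronglyMeasurable
        unfold Function.uncurry
        fun_prop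
      refine Integrable.of_bound hFm.aestronglyMeasurable (|β| + η / (shl n + 1)) (Eventually.of_forall fun θ => ?_)
      have h9 := hin θ
      have : F θ = β + (F θ - β) := by ring
      rw [this]
      exact (abs_add_le _ _).trans (by gcongr)
  have := hmain.sub hAlim
  simpa using this


/-- the modified cut-off set -/
def kA (n : ℕ) (ξ y : Pt n) (ε : ℝ) : Set (Pt n) := {ζ | ε * (dist ζ y / dist ξ y) ≤ dist ξ ζ}

lemma kA_meas {n : ℕ} (ξ y : Pt n) (ε : ℝ) : MeasurableSet (kA n ξ y ε) :=
  measurableSet_le (by fun_prop) (by fun_prop)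

lemma rho_bound {n : ℕ} (ξ y ζ : Pt n) (hy : 0 < dist ξ y) : |dist ζ y / dist ξ y - 1| ≤ dist ξ ζ / dist ξ y := by
  have : dist ζ y / dist ξ y - 1 = (dist ζ y - dist ξ y) / dist ξ y := by field_simp
  rw [this, abs_div, abs_of_pos hy]
  gcongr
  rw [abs_sub_comm]
  exact abs_dist_sub_le ξ ζ y

lemma kA_shell {n : ℕ} (hn : 0 < n) {s : ℝ} (hs0 : 0 < s) (hs1 : s < 1) (ξ y : Pt n) (hy : 0 < dist ξ y) (G : Pt n → ℝ)
    {C δ : ℝ} (hδ : 0 < δ) (hC : 0 ≤ C)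
    (hGb : ∀ ζ, dist ξ ζ < δ → |G ζ| ≤ C * dist ξ ζ ^ (1 - ((n:ℝ) + 2 * s)))
    (hGi : ∀ ε, 0 < ε → IntegrableOn G {ζ | ε ≤ dist ξ ζ}) :
    (∀ᶠ ε in nhdsWithin 0 (Ioi (0:ℝ)), IntegrableOn G (kA n ξ y ε)) ∧
    Tendsto (fun ε => (∫ ζ in kA n ξ y ε, G ζ) - ∫ ζ in {ζ | ε ≤ dist ξ ζ}, G ζ) (nhdsWithin 0 (Ioi 0)) (nhds 0) := by
  set d := dist ξ y with hd
  have hpos : ∀ᶠ ε in nhdsWithin 0 (Ioi (0:ℝ)), 0 < ε := eventually_mem_nhdsWithin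
  have hsm : ∀ a : ℝ, 0 < a → ∀ᶠ ε in nhdsWithin 0 (Ioi (0:ℝ)), ε < a := fun a ha =>
    mem_nhdsWithin_of_mem_nhds (Iio_mem_nhds ha)
  refine shell_lemma hn hs0 hs1 ξ G (c := 2 / d) hδ (by positivity) hC hGb hGi _ (kA_meas ξ y) ?_ ?_
  · filter_upwards [hpos] with ε h0 ζ hζ
    have h1 : ε * (dist ζ y / d) ≤ dist ξ ζ := hζ
    have h2 := (abs_le.1 (rho_bound ξ y ζ hy)).1
    rw [← hd] at h2
    have hq : 0 < ε / d := by positivity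
    have h3 : ε ≤ dist ξ ζ * (1 + ε / d) := by
      have : ε * (1 - dist ξ ζ / d) ≤ ε * (dist ζ y / d) := mul_le_mul_of_nonneg_left (by linarith) h0.le
      have e : ε * (1 - dist ξ ζ / d) = ε - dist ξ ζ * (ε / d) := by ring
      linarith
    rw [show 2 / d * ε = 2 * (ε / d) by ring]
    generalize ε / d = q at *
    by_contra hcon
    push Not at hcon
    nlinarith [(dist_nonneg : 0 ≤ dist ξ ζ), mul_pos hq hq]
  · filter_upwards [hpos, hsm (d / 2) (by positivity)] with ε h0 hε ζ hζ
    have h1 : dist ξ ζ < ε * (dist ζ y / d) := not_le.1 hζ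
    have h2 := (abs_le.1 (rho_bound ξ y ζ hy)).2
    rw [← hd] at h2
    have hq : 0 < ε / d := by positivity
    have hq2 : ε / d < 1/2 := by rw [div_lt_iff₀ hy]; linarith
    have h3 : dist ξ ζ * (1 - ε / d) ≤ ε := by
      have : ε * (dist ζ y / d) ≤ ε * (1 + dist ξ ζ / d) := mul_le_mul_of_nonneg_left (by linarith) h0.le
      have e : ε * (1 + dist ξ ζ / d) = ε + dist ξ ζ * (ε / d) := by ring
      linarith
    rw [show 2 / d * ε = 2 * (ε / d) by ring]
    generalize ε / d = q at *
    by_contra hcon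
    push Not at hcon
    nlinarith [mul_pos (show 0 < 1 - q by linarith) (sub_pos.2 hcon), mul_pos h0 (mul_pos hq (show 0 < 1 - 2 * q by linarith))]

lemma ae_ne {n : ℕ} (hn : 0 < n) (y : Pt n) : ∀ᵐ z : Pt n, z ≠ y := by
  have : Nontrivial (Pt n) := pt_nontrivial hn
  exact Measure.ae_ne volume y

/-- integrand of the Kelvin null term -/
def G2 (n : ℕ) (s : ℝ) (ξ y ζ : Pt n) : ℝ := ((dist ζ y / dist ξ y) ^ (2 * s - n) - 1) * KK n s ξ ζ

lemma inv_self {n : ℕ} (ξ y : Pt n) : EuclideanGeometry.inversion y (dist ξ y) ξ = ξ := by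
  simp

lemma inv_dist {n : ℕ} (ξ y ζ : Pt n) (hy : 0 < dist ξ y) (hζ : ζ ≠ y) :
    dist ξ (EuclideanGeometry.inversion y (dist ξ y) ζ) = dist ξ ζ / (dist ζ y / dist ξ y) := by
  have h := EuclideanGeometry.dist_inversion_inversion (dist_pos.1 hy) hζ (dist ξ y)
  rw [inv_self] at h
  have : 0 < dist ζ y := dist_pos.2 hζ
  rw [h]; field_simp

lemma inv_rho {n : ℕ} (ξ y ζ : Pt n) (hy : 0 < dist ξ y) (hζ : ζ ≠ y) :
    dist (EuclideanGeometry.inversion y (dist ξ y) ζ) y / dist ξ y = 1 / (dist ζ y / dist ξ y) := by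
  rw [EuclideanGeometry.dist_inversion_center]
  have : 0 < dist ζ y := dist_pos.2 hζ
  field_simp

lemma kelvin_integrable {n : ℕ} (hn : 0 < n) {s : ℝ} (hs0 : 0 < s) (ξ y : Pt n) (hy : 0 < dist ξ y) {ε : ℝ} (hε : 0 < ε) :
    IntegrableOn (fun ζ => (dist ζ y / dist ξ y) ^ (2 * s - n) * KK n s ξ ζ) {ζ | ε ≤ dist ξ ζ} := by
  set d := dist ξ y with hd
  set ε' := min (d / 2) (ε / 2) with hε'
  have hε'0 : 0 < ε' := by positivity
  have hsub : {ζ | ε ≤ dist ξ ζ} ⊆ kA n ξ y ε' := by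
    intro ζ hζ
    have h0 : ε ≤ dist ξ ζ := hζ
    have h2 := (abs_le.1 (rho_bound ξ y ζ hy)).2
    rw [← hd] at h2
    show ε' * (dist ζ y / d) ≤ dist ξ ζ
    have a1 : ε' ≤ d / 2 := min_le_left _ _
    have a2 : ε' ≤ ε / 2 := min_le_right _ _
    calc ε' * (dist ζ y / d) ≤ ε' * (1 + dist ξ ζ / d) := by gcongr; linarith
      _ = ε' + ε' * (dist ξ ζ / d) := by ring
      _ ≤ ε / 2 + d / 2 * (dist ξ ζ / d) := by gcongr
      _ = ε / 2 + dist ξ ζ / 2 := by field_simp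
      _ ≤ dist ξ ζ := by linarith
  refine IntegrableOn.mono_set ?_ hsub
  have hBm : MeasurableSet {ζ | ε' ≤ dist ξ ζ} := measurableSet_le (by fun_prop) (by fun_prop)
  have h1 := (far_integrable hn hs0 ξ hε'0).integrable_indicator hBm
  rw [inv_integrable hn y hy.ne'] at h1
  rw [← integrable_indicator_iff (kA_meas _ _ _)]
  refine h1.congr ?_
  filter_upwards [ae_ne hn y] with ζ hζ
  have hζ0 : 0 < dist ζ y := dist_pos.2 hζ
  have hc : ε' ≤ dist ξ (EuclideanGeometry.inversion y d ζ) ↔ ε' * (dist ζ y / dist ξ y) ≤ dist ξ ζ := by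
    rw [hd, inv_dist ξ y ζ hy hζ, le_div_iff₀ (by positivity)]
  by_cases h : ε' * (dist ζ y / dist ξ y) ≤ dist ξ ζ
  · rw [indicator_of_mem (show EuclideanGeometry.inversion y d ζ ∈ _ from hc.2 h), indicator_of_mem (show ζ ∈ kA n ξ y ε' from h)]
    unfold KK
    rw [inv_dist ξ y ζ hy hζ, Real.div_rpow dist_nonneg (by positivity)]
    have h2 : d / dist ζ y = 1 / (dist ζ y / d) := by field_simp
    rw [← hd, h2]
    have hρ : 0 < dist ζ y / d := by positivity
    generalize dist ζ y / d = ρ at *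
    rw [Real.rpow_neg hρ.le, one_div, inv_pow, div_eq_mul_inv, inv_inv]
    have h3 : ρ ^ (2 * s - n) = (ρ ^ (2 * n))⁻¹ * ρ ^ ((n:ℝ) + 2 * s) := by
      rw [← Real.rpow_natCast, ← Real.rpow_neg hρ.le, ← Real.rpow_add hρ]; congr 1; push_cast; ring
    rw [h3]; ring
  · rw [indicator_of_notMem (show ¬ EuclideanGeometry.inversion y d ζ ∈ _ from fun h' => h (hc.1 h')), indicator_of_notMem (show ¬ ζ ∈ kA n ξ y ε' from h), mul_zero]

lemma G2_integrable {n : ℕ} (hn : 0 < n) {s : ℝ} (hs0 : 0 < s) (ξ y : Pt n) (hy : 0 < dist ξ y) {ε : ℝ} (hε : 0 < ε) :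
    IntegrableOn (G2 n s ξ y) {ζ | ε ≤ dist ξ ζ} := by
  have := (kelvin_integrable hn hs0 ξ y hy hε).sub (far_integrable hn hs0 ξ hε)
  refine this.congr (Eventually.of_forall fun ζ => ?_)
  simp only [Pi.sub_apply, G2]; ring

lemma G2_anti {n : ℕ} (hn : 0 < n) {s : ℝ} (ξ y : Pt n) (hy : 0 < dist ξ y) {ε : ℝ} :
    ∫ ζ in kA n ξ y ε, G2 n s ξ y ζ = - ∫ ζ in {ζ | ε ≤ dist ξ ζ}, G2 n s ξ y ζ := by
  have hBm : MeasurableSet {ζ | ε ≤ dist ξ ζ} := measurableSet_le (by fun_prop) (by fun_prop)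
  rw [← integral_indicator (kA_meas _ _ _), ← integral_indicator hBm, inv_integral hn y hy.ne', ← integral_neg]
  apply integral_congr_ae
  filter_upwards [ae_ne hn y] with ζ hζ
  have hζ0 : 0 < dist ζ y := dist_pos.2 hζ
  have hρ : 0 < dist ζ y / dist ξ y := by positivity
  have hc : ε * (dist (EuclideanGeometry.inversion y (dist ξ y) ζ) y / dist ξ y) ≤ dist ξ (EuclideanGeometry.inversion y (dist ξ y) ζ) ↔ ε ≤ dist ξ ζ := by
    rw [inv_dist ξ y ζ hy hζ, inv_rho ξ y ζ hy hζ, mul_one_div, div_le_div_iff_of_pos_right hρ]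
  simp only [indicator, mem_ofPred_eq, kA, hc]
  split_ifs
  · unfold G2 KK
    rw [inv_dist ξ y ζ hy hζ, inv_rho ξ y ζ hy hζ, Real.div_rpow dist_nonneg (by positivity)]
    have h2 : dist ξ y / dist ζ y = 1 / (dist ζ y / dist ξ y) := by field_simp
    rw [h2]
    generalize dist ζ y / dist ξ y = ρ at *
    rw [Real.rpow_neg hρ.le, one_div, inv_pow, div_eq_mul_inv, inv_inv, Real.inv_rpow hρ.le]
    have h3 : ρ ^ (2 * s - n) = (ρ ^ (2 * n))⁻¹ * ρ ^ ((n:ℝ) + 2 * s) := by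
      rw [← Real.rpow_natCast, ← Real.rpow_neg hρ.le, ← Real.rpow_add hρ]; congr 1; push_cast; ring
    have h4 : (ρ ^ (2 * n)) ≠ 0 := by positivity
    have h5 : ρ ^ ((n:ℝ) + 2 * s) ≠ 0 := by positivity
    rw [h3]; field_simp; ring
  · simp

lemma kelvin_null {n : ℕ} (hn : 0 < n) {s : ℝ} (hs0 : 0 < s) (hs1 : s < 1) (ξ y : Pt n) (hy : 0 < dist ξ y) :
    (∀ᶠ ε in nhdsWithin 0 (Ioi (0:ℝ)), IntegrableOn (G2 n s ξ y) (kA n ξ y ε)) ∧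
    Tendsto (fun ε => ∫ ζ in kA n ξ y ε, G2 n s ξ y ζ) (nhdsWithin 0 (Ioi 0)) (nhds 0) := by
  obtain ⟨T, hT, ht⟩ := taylor1 (2 * s - n)
  obtain ⟨h1, h2⟩ := kA_shell hn hs0 hs1 ξ y hy (G2 n s ξ y) (C := T * (1 / dist ξ y)) (δ := dist ξ y / 2)
    (by positivity) (by positivity) (by
      intro ζ hζ
      have hb := rho_bound ξ y ζ hy
      have h3 : |dist ζ y / dist ξ y - 1| ≤ 1/2 := hb.trans (by rw [div_le_iff₀ hy]; linarith)
      have h4 := (ht _ h3).1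
      rw [add_sub_cancel] at h4
      unfold G2
      rw [abs_mul, abs_of_nonneg (KK_nonneg _ _), ← mul_KK hn hs0, ← mul_assoc]
      refine mul_le_mul_of_nonneg_right (h4.trans ?_) (KK_nonneg _ _)
      rw [mul_assoc]
      refine mul_le_mul_of_nonneg_left (hb.trans (le_of_eq ?_)) hT
      ring) (fun ε hε => G2_integrable hn hs0 ξ y hy hε)
  refine ⟨h1, ?_⟩
  have h3 := h2.const_mul (1/2)
  rw [mul_zero] at h3
  refine h3.congr fun ε => ?_
  have := G2_anti hn (s := s) ξ y hy (ε := ε)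
  linarith


/-- the (unnormalised) Poisson kernel with pole `y` -/
def fy (n : ℕ) (s r : ℝ) (y z : Pt n) : ℝ := phi n s r z / dist z y ^ n

lemma inv_norm {n : ℕ} {r R : ℝ} (y ζ : Pt n) (hR : R ^ 2 = ‖y‖ ^ 2 - r ^ 2) (hζ : ζ ≠ y) :
    r ^ 2 - ‖EuclideanGeometry.inversion y R ζ‖ ^ 2 = (R ^ 2 / dist ζ y ^ 2) * (r ^ 2 - ‖ζ‖ ^ 2) := by
  have h0 : 0 < dist ζ y := dist_pos.2 hζ
  have e : EuclideanGeometry.inversion y R ζ = (R / dist ζ y) ^ 2 • (ζ - y) + y := rfl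
  have h1 : ‖ζ‖ ^ 2 = ‖ζ - y‖ ^ 2 + 2 * inner ℝ (ζ - y) y + ‖y‖ ^ 2 := by
    rw [← norm_add_sq_real, sub_add_cancel]
  rw [e, norm_add_sq_real, norm_smul, inner_smul_left, h1, dist_eq_norm]
  rw [dist_eq_norm] at h0
  simp only [Real.norm_eq_abs, mul_pow, sq_abs, conj_trivial]
  generalize inner ℝ (ζ - y) y = p
  generalize ‖ζ - y‖ = a at *
  have : r ^ 2 = ‖y‖ ^ 2 - R ^ 2 := by linarith
  rw [this]
  field_simp
  ring

lemma fy_kelvin {n : ℕ} {s : ℝ} {a b D R φ1 φ2 t: ℝ} (ha : 0 < a) (hb : 0 < b) (hD : 0 < D) (hR : 0 < R) (ht : 0 ≤ t)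
    (hDa : D = R ^ 2 / a) :
    (R / b) ^ (2 * n) * (((R ^ 2 / D ^ 2) ^ s * φ1 / a ^ n - (R ^ 2 / b ^ 2) ^ s * φ2 / (R ^ 2 / b) ^ n)
      * (R ^ 2 / (D * b) * t) ^ (-((n:ℝ) + 2 * s))) =
    ((R ^ 2) ^ s * a ^ (-((n:ℝ) + 2 * s))) * (φ1 * (((b / D) ^ (2 * s - n) - 1) * t ^ (-((n:ℝ) + 2 * s))) + 
      (φ1 - φ2) * t ^ (-((n:ℝ) + 2 * s))) := by
  have e1 : R ^ 2 / (D * b) = a / b := by rw [hDa]; field_simp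
  have e2 : R ^ 2 / D ^ 2 = a ^ 2 / R ^ 2 := by rw [hDa]; field_simp
  have e3 : b / D = a * b / R ^ 2 := by rw [hDa]; field_simp
  rw [e1, e2, e3, Real.mul_rpow (by positivity) ht]
  generalize t ^ (-((n:ℝ) + 2 * s)) = T
  have h1 : (R / b) ^ (2 * n) * ((a ^ 2 / R ^ 2) ^ s / a ^ n) * (a / b) ^ (-((n:ℝ) + 2 * s)) =
      (R ^ 2) ^ s * a ^ (-((n:ℝ) + 2 * s)) * (a * b / R ^ 2) ^ (2 * s - n) := by
    obtain ⟨A, rfl⟩ : ∃ A, a = Real.exp A := ⟨Real.log a, (Real.exp_log ha).symm⟩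
    obtain ⟨B, rfl⟩ : ∃ A, b = Real.exp A := ⟨Real.log b, (Real.exp_log hb).symm⟩
    obtain ⟨C, rfl⟩ : ∃ A, R = Real.exp A := ⟨Real.log R, (Real.exp_log hR).symm⟩
    simp only [← Real.exp_sub, ← Real.exp_add, ← Real.exp_nat_mul, ← Real.exp_mul]
    congr 1; push_cast; ring
  have h2 : (R / b) ^ (2 * n) * ((R ^ 2 / b ^ 2) ^ s / (R ^ 2 / b) ^ n) * (a / b) ^ (-((n:ℝ) + 2 * s)) =
      (R ^ 2) ^ s * a ^ (-((n:ℝ) + 2 * s)) := by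
    obtain ⟨A, rfl⟩ : ∃ A, a = Real.exp A := ⟨Real.log a, (Real.exp_log ha).symm⟩
    obtain ⟨B, rfl⟩ : ∃ A, b = Real.exp A := ⟨Real.log b, (Real.exp_log hb).symm⟩
    obtain ⟨C, rfl⟩ : ∃ A, R = Real.exp A := ⟨Real.log R, (Real.exp_log hR).symm⟩
    simp only [← Real.exp_sub, ← Real.exp_add, ← Real.exp_nat_mul, ← Real.exp_mul]
    congr 1; push_cast; ring
  linear_combination φ1 * T * h1 - φ2 * T * h2

set_option maxHeartbeats 400000 in
lemma fy_pde {n : ℕ} (hn : 0 < n) {s r : ℝ} (hs0 : 0 < s) (hs1 : s < 1) (x y : Pt n) (hx : ‖x‖ < r) (hy : r < ‖y‖) :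
    Tendsto (fun ε => ∫ z in {z | ε ≤ dist x z}, (fy n s r y x - fy n s r y z) * KK n s x z)
      (nhdsWithin 0 (Ioi 0)) (nhds (shl n / 2 * (Real.pi / Real.sin (Real.pi * s)) * (‖y‖ ^ 2 - r ^ 2) ^ s * KK n s x y)) := by
  have hr : 0 < r := lt_of_le_of_lt (norm_nonneg _) hx
  have hm : 0 < ‖y‖ ^ 2 - r ^ 2 := by nlinarith
  obtain ⟨R, hR, hR2⟩ : ∃ R : ℝ, 0 < R ∧ R ^ 2 = ‖y‖ ^ 2 - r ^ 2 := ⟨Real.sqrt (‖y‖ ^ 2 - r ^ 2), Real.sqrt_pos.2 hm, Real.sq_sqrt hm.le⟩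
  have hxy : x ≠ y := by rintro rfl; linarith
  obtain ⟨ξ, hξd⟩ : ∃ ξ, ξ = EuclideanGeometry.inversion y R x := ⟨_, rfl⟩
  have hξx : EuclideanGeometry.inversion y R ξ = x := by rw [hξd]; exact EuclideanGeometry.inversion_inversion y hR.ne' x
  have hξy : ξ ≠ y := by
    rw [hξd, Ne, EuclideanGeometry.inversion_eq_center hR.ne']; exact hxy
  have ha : 0 < dist x y := dist_pos.2 hxy
  have hD : 0 < dist ξ y := dist_pos.2 hξy
  have hDa : dist ξ y = R ^ 2 / dist x y := by rw [hξd]; rw [EuclideanGeometry.dist_inversion_center]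
  have hξr : ‖ξ‖ < r := by
    have h := inv_norm (r := r) y x hR2 hxy
    rw [← hξd] at h
    have : 0 < r ^ 2 - ‖ξ‖ ^ 2 := by
      rw [h]; apply mul_pos (by positivity); nlinarith [norm_nonneg x]
    exact lt_of_pow_lt_pow_left₀ 2 hr.le (by linarith)
  have hphi : ∀ ζ, ζ ≠ y → phi n s r (EuclideanGeometry.inversion y R ζ) = (R ^ 2 / dist ζ y ^ 2) ^ s * phi n s r ζ := by
    intro ζ hζ
    unfold phi
    rw [inv_norm y ζ hR2 hζ, ← Real.mul_rpow (by positivity) (le_max_right _ _), mul_max_of_nonneg _ _ (by positivity), mul_zero]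
  obtain ⟨lam, hlam⟩ : ∃ lam, lam = R ^ 2 / dist ξ y ^ 2 := ⟨_, rfl⟩
  have hlam0 : 0 < lam := by rw [hlam]; positivity
  obtain ⟨c, hc⟩ : ∃ c, c = (R ^ 2) ^ s * KK n s x y := ⟨_, rfl⟩
  have hBm : ∀ ε, MeasurableSet {z | ε ≤ dist x z} := fun ε => measurableSet_le (by fun_prop) (by fun_prop)
  have key : ∀ ε, ∫ z in {z | ε ≤ dist x z}, (fy n s r y x - fy n s r y z) * KK n s x z =
      ∫ ζ in kA n ξ y (ε / lam), c * (phi n s r ξ * G2 n s ξ y ζ + (phi n s r ξ - phi n s r ζ) * KK n s ξ ζ) := by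
    intro ε
    rw [← integral_indicator (hBm ε), ← integral_indicator (kA_meas _ _ _), inv_integral hn y hR.ne']
    apply integral_congr_ae
    filter_upwards [ae_ne hn y] with ζ hζ
    have hb : 0 < dist ζ y := dist_pos.2 hζ
    have hd : dist x (EuclideanGeometry.inversion y R ζ) = R ^ 2 / (dist ξ y * dist ζ y) * dist ξ ζ := by
      rw [← hξx]; exact EuclideanGeometry.dist_inversion_inversion hξy hζ R
    have hcnd : ε ≤ dist x (EuclideanGeometry.inversion y R ζ) ↔ ε / lam * (dist ζ y / dist ξ y) ≤ dist ξ ζ := by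
      rw [hd, hlam, show R ^ 2 / (dist ξ y * dist ζ y) * dist ξ ζ = dist ξ ζ / (dist ξ y * dist ζ y / R ^ 2) by field_simp,
        le_div_iff₀ (by positivity)]
      apply iff_of_eq; congr 1; field_simp
    by_cases h : ε / lam * (dist ζ y / dist ξ y) ≤ dist ξ ζ
    · rw [indicator_of_mem (show EuclideanGeometry.inversion y R ζ ∈ _ from hcnd.2 h),
        indicator_of_mem (show ζ ∈ kA n ξ y (ε / lam) from h)]
      unfold fy G2
      rw [hphi ζ hζ, EuclideanGeometry.dist_inversion_center, show phi n s r x = (R ^ 2 / dist ξ y ^ 2) ^ s * phi n s r ξ by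
        rw [← hphi ξ hξy, hξx], hc]
      unfold KK
      rw [hd]
      exact fy_kelvin ha hb hD hR dist_nonneg hDa
    · rw [indicator_of_notMem (show ¬ EuclideanGeometry.inversion y R ζ ∈ _ from fun h' => h (hcnd.1 h')),
        indicator_of_notMem (show ¬ ζ ∈ kA n ξ y (ε / lam) from h), mul_zero]
  simp only [key]
  obtain ⟨i1, t1⟩ := kelvin_null hn hs0 hs1 ξ y hD
  obtain ⟨C, δ, hC, hδ, hlip⟩ := phi_lip (s := s) ξ hξr
  obtain ⟨i2, t2⟩ := kA_shell hn hs0 hs1 ξ y hD (fun ζ => (phi n s r ξ - phi n s r ζ) * KK n s ξ ζ) hδ hC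
    (fun ζ hζ => by
      rw [abs_mul, abs_of_nonneg (KK_nonneg _ _), ← mul_KK hn hs0, ← mul_assoc]
      exact mul_le_mul_of_nonneg_right (hlip ζ hζ) (KK_nonneg _ _))
    (fun ε hε => bdd_mul_KK_integrable hn hs0 ξ hε (C := (r^2)^s) (measurable_const.sub phi_meas).aestronglyMeasurable (fun z => by
      have := phi_le (n := n) (r := r) hs0 z
      have := phi_le (n := n) (r := r) hs0 ξ
      have := phi_nonneg (s := s) (r := r) ξ
      have := phi_nonneg (s := s) (r := r) z
      rw [abs_le]; constructor <;> linarith))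
  have t3 := t2.add (torsion hn hs0 hs1 ξ hξr)
  simp only [sub_add_cancel, zero_add] at t3
  have t4 := ((t1.const_mul (phi n s r ξ)).add t3).const_mul c
  have t5 : Tendsto (fun ε => c * ∫ ζ in kA n ξ y ε, (phi n s r ξ * G2 n s ξ y ζ + (phi n s r ξ - phi n s r ζ) * KK n s ξ ζ)) 
      (nhdsWithin 0 (Ioi 0)) (nhds (shl n / 2 * (Real.pi / Real.sin (Real.pi * s)) * (‖y‖ ^ 2 - r ^ 2) ^ s * KK n s x y)) := by
    rw [show shl n / 2 * (Real.pi / Real.sin (Real.pi * s)) * (‖y‖ ^ 2 - r ^ 2) ^ s * KK n s x y =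
      c * (phi n s r ξ * 0 + shl n / 2 * (Real.pi / Real.sin (Real.pi * s))) by rw [hc, hR2]; ring]
    refine t4.congr' ?_
    filter_upwards [i1, i2] with ε j1 j2
    rw [integral_add (j1.const_mul _) j2, integral_const_mul]
  have hl : Tendsto (fun ε : ℝ => ε / lam) (nhdsWithin 0 (Ioi 0)) (nhdsWithin 0 (Ioi 0)) := by
    apply tendsto_nhdsWithin_of_tendsto_nhds_of_eventually_within
    · have : Tendsto (fun ε : ℝ => ε / lam) (nhds 0) (nhds (0 / lam)) := tendsto_id.div_const _
      rw [zero_div] at this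
      exact this.mono_left nhdsWithin_le_nhds
    · filter_upwards [self_mem_nhdsWithin] with ε hε
      exact div_pos hε hlam0
  refine (t5.comp hl).congr fun ε => ?_
  simp only [Function.comp, integral_const_mul]


/-- Poisson kernel of the ball of radius `r` -/
def PP (n : ℕ) (s r : ℝ) (x y : Pt n) : ℝ :=
  Bns n s * ((r ^ 2 - ‖x‖ ^ 2) / (‖y‖ ^ 2 - r ^ 2)) ^ s / ‖x - y‖ ^ (n : ℕ)

lemma Bns_kappa {n : ℕ} (hn : 0 < n) {s : ℝ} (hs0 : 0 < s) (hs1 : s < 1) :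
    Bns n s * (shl n / 2 * (Real.pi / Real.sin (Real.pi * s))) = 1 := by
  have : Nonempty (Fin n) := Fin.pos_iff_nonempty.1 hn
  have hn' : (0:ℝ) < n := by exact_mod_cast hn
  have hsin : 0 < Real.sin (Real.pi * s) := by
    apply Real.sin_pos_of_pos_of_lt_pi (by positivity)
    nlinarith [Real.pi_pos]
  have hG : 0 < Real.Gamma ((n:ℝ)/2) := Real.Gamma_pos_of_pos (by positivity)
  unfold shl Bns
  rw [measureReal_def, EuclideanSpace.volume_ball]
  simp only [Fintype.card_fin, ENNReal.ofReal_one, one_pow, one_mul]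
  rw [ENNReal.toReal_ofReal (by have := Real.Gamma_pos_of_pos (show 0 < (n:ℝ)/2+1 by positivity); positivity),
    Real.Gamma_add_one (by positivity), Real.rpow_add_one (by positivity), Real.sqrt_eq_rpow, ← Real.rpow_mul_natCast Real.pi_pos.le]
  rw [show 1 / 2 * (n:ℝ) = n / 2 by ring]
  have : 0 < Real.pi ^ ((n:ℝ)/2) := by positivity
  field_simp

lemma Bns_pos {n : ℕ} (hn : 0 < n) {s : ℝ} (hs0 : 0 < s) (hs1 : s < 1) : 0 < Bns n s := by
  have hn' : (0:ℝ) < n := by exact_mod_cast hn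
  have hsin : 0 < Real.sin (Real.pi * s) := by
    apply Real.sin_pos_of_pos_of_lt_pi (by positivity)
    nlinarith [Real.pi_pos]
  have hG : 0 < Real.Gamma ((n:ℝ)/2) := Real.Gamma_pos_of_pos (by positivity)
  unfold Bns
  positivity

def T1 {n : ℕ} (r : ℝ) (x θ : Pt n) : ℝ := - inner ℝ x θ + Real.sqrt ((inner ℝ x θ) ^ 2 + (r ^ 2 - ‖x‖ ^ 2))
def T2 {n : ℕ} (r : ℝ) (x θ : Pt n) : ℝ := inner ℝ x θ + Real.sqrt ((inner ℝ x θ) ^ 2 + (r ^ 2 - ‖x‖ ^ 2))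

lemma T_facts {n : ℕ} {r : ℝ} (x θ : Pt n) (hx : ‖x‖ < r) :
    0 < T1 r x θ ∧ 0 < T2 r x θ ∧ T1 r x θ * T2 r x θ = r ^ 2 - ‖x‖ ^ 2 := by
  have hm : 0 < r ^ 2 - ‖x‖ ^ 2 := by nlinarith [norm_nonneg x]
  unfold T1 T2
  generalize inner ℝ x θ = b
  have h1 : |b| < Real.sqrt (b ^ 2 + (r ^ 2 - ‖x‖ ^ 2)) := by
    rw [← Real.sqrt_sq_eq_abs]; exact Real.sqrt_lt_sqrt (sq_nonneg _) (by linarith)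
  have h2 := Real.sq_sqrt (show 0 ≤ b ^ 2 + (r ^ 2 - ‖x‖ ^ 2) by positivity)
  have := abs_lt.1 h1
  exact ⟨by linarith, by linarith, by linarith⟩

lemma T_quad {n : ℕ} {r : ℝ} (x θ : Pt n) (hθ : ‖θ‖ = 1) (hx : ‖x‖ < r) (t : ℝ) :
    ‖x + t • θ‖ ^ 2 - r ^ 2 = (t - T1 r x θ) * (t + T2 r x θ) := by
  have hm : 0 < r ^ 2 - ‖x‖ ^ 2 := by nlinarith [norm_nonneg x]
  rw [norm_add_sq_real, norm_smul, inner_smul_right, hθ, mul_one, Real.norm_eq_abs, sq_abs]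
  unfold T1 T2
  generalize inner ℝ x θ = b
  have h2 := Real.sq_sqrt (show 0 ≤ b ^ 2 + (r ^ 2 - ‖x‖ ^ 2) by positivity)
  linear_combination h2

lemma lint_scale {a : ℝ} (ha : 0 < a) (f : ℝ → ENNReal) :
    ∫⁻ t in Ioi a, f t = ∫⁻ τ in Ioi (1:ℝ), ENNReal.ofReal a * f (a * τ) := by
  have him : (fun τ : ℝ => a * τ) '' Ioi 1 = Ioi a := by
    rw [Set.image_mul_left_Ioi ha, mul_one]
  rw [← him, lintegral_image_eq_lintegral_abs_deriv_mul (f' := fun _ => a) measurableSet_Ioi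
    (fun x _ => by simpa using ((hasDerivAt_id x).const_mul a).hasDerivWithinAt)
    (fun x _ y _ h => mul_left_cancel₀ ha.ne' h)]
  simp only [abs_of_pos ha]

lemma pp_polar {n : ℕ} (hn : 0 < n) {s r : ℝ} (hs0 : 0 < s) (hs1 : s < 1) (x : Pt n) (hx : ‖x‖ < r) (F : Pt n → ENNReal) (hF : Measurable F) :
    ∫⁻ y in {y | r < ‖y‖}, ENNReal.ofReal (PP n s r x y) * F y =
      ∫⁻ θ : sphere (0 : Pt n) 1, (∫⁻ τ in Ioi (1:ℝ),
        ENNReal.ofReal (Bns n s * ((τ - 1) * (1 + T1 r x θ / T2 r x θ * τ)) ^ (-s) / τ) * F (x + (T1 r x θ * τ) • (θ : Pt n)))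
        ∂(volume : Measure (Pt n)).toSphere := by
  have hr : 0 < r := lt_of_le_of_lt (norm_nonneg _) hx
  have hSm : MeasurableSet {y : Pt n | r < ‖y‖} := measurableSet_lt (by fun_prop) (by fun_prop)
  have hPm : Measurable fun y => ENNReal.ofReal (PP n s r x y) * F y := by unfold PP; fun_prop
  rw [← lintegral_indicator hSm, ← lintegral_add_left_eq_self _ x, polar_lintegral hn]
  swap
  · exact (hPm.indicator hSm).comp (by fun_prop)
  apply lintegral_congr
  intro θ
  have hθ : ‖(θ : Pt n)‖ = 1 := by simpa using θ.2
  obtain ⟨h1, h2, h12⟩ := T_facts x (θ : Pt n) hx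
  have hq := T_quad x (θ : Pt n) hθ hx
  have hm : 0 < r ^ 2 - ‖x‖ ^ 2 := by nlinarith [norm_nonneg x]
  set a := T1 r x (θ : Pt n)
  set b := T2 r x (θ : Pt n)
  have hmem : ∀ t : ℝ, 0 < t → (r < ‖x + t • (θ : Pt n)‖ ↔ a < t) := by
    intro t ht
    rw [← sq_lt_sq₀ hr.le (norm_nonneg _), ← sub_pos, hq t, mul_pos_iff_of_pos_right (by linarith), sub_pos]
  have e1 : ∫⁻ t in Ioi (0:ℝ), ENNReal.ofReal (t ^ (n - 1)) * {y : Pt n | r < ‖y‖}.indicator (fun y => ENNReal.ofReal (PP n s r x y) * F y) (x + t • (θ : Pt n))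
      = ∫⁻ t in Ioi a, ENNReal.ofReal (t ^ (n - 1)) * (ENNReal.ofReal (PP n s r x (x + t • (θ : Pt n))) * F (x + t • (θ : Pt n))) := by
    rw [← lintegral_indicator measurableSet_Ioi, ← lintegral_indicator measurableSet_Ioi]
    apply lintegral_congr
    intro t
    by_cases ht : a < t
    · have ht0 : 0 < t := h1.trans ht
      rw [indicator_of_mem (show t ∈ Ioi (0:ℝ) from ht0), indicator_of_mem (show t ∈ Ioi a from ht),
        indicator_of_mem (show _ ∈ {y : Pt n | r < ‖y‖} from (hmem t ht0).2 ht)]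
    · rw [indicator_of_notMem (show t ∉ Ioi a from ht)]
      by_cases ht0 : 0 < t
      · rw [indicator_of_mem (show t ∈ Ioi (0:ℝ) from ht0), 
          indicator_of_notMem (show _ ∉ {y : Pt n | r < ‖y‖} from fun h => ht ((hmem t ht0).1 h)), mul_zero]
      · rw [indicator_of_notMem (show t ∉ Ioi (0:ℝ) from ht0)]
  rw [e1, lint_scale h1]
  apply setLIntegral_congr_fun measurableSet_Ioi
  intro τ hτ
  have hτ1 : 1 < τ := hτ
  beta_reduce
  rw [← mul_assoc, ← mul_assoc, ← ENNReal.ofReal_mul h1.le, ← ENNReal.ofReal_mul (by positivity)]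
  congr 2
  unfold PP
  have hB := Bns_pos hn hs0 hs1
  rw [hq, ← h12, show x - (x + (a * τ) • (θ : Pt n)) = (-(a * τ)) • (θ : Pt n) by rw [neg_smul]; abel, norm_smul, hθ, mul_one,
    norm_neg, Real.norm_of_nonneg (by positivity)]
  have ht1 : 0 < τ - 1 := by linarith
  rw [show a * b / ((a * τ - a) * (a * τ + b)) = ((τ - 1) * (1 + a / b * τ))⁻¹ by
    have ht2 : a * τ - a ≠ 0 := by rw [show a * τ - a = a * (τ - 1) by ring]; positivity
    field_simp
    ring]
  rw [Real.inv_rpow (by positivity), Real.rpow_neg (by positivity)]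
  obtain ⟨k, rfl⟩ : ∃ k, n = k + 1 := ⟨n - 1, by omega⟩
  simp only [Nat.add_sub_cancel, pow_succ]
  field_simp

lemma pp_bound {n : ℕ} (hn : 0 < n) {s r : ℝ} (hs0 : 0 < s) (hs1 : s < 1) (x : Pt n) (hx : ‖x‖ < r) :
    ∫⁻ y in {y | r < ‖y‖}, ENNReal.ofReal (PP n s r x y) ≤ 2 := by
  have h := pp_polar hn hs0 hs1 x hx (fun _ => 1) measurable_const
  simp only [mul_one] at h
  have hB := Bns_pos hn hs0 hs1
  rw [h]
  have hin : ∀ θ : sphere (0 : Pt n) 1, (∫⁻ τ in Ioi (1:ℝ),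
        ENNReal.ofReal (Bns n s * ((τ - 1) * (1 + T1 r x θ / T2 r x θ * τ)) ^ (-s) / τ)) ≤ 
        ENNReal.ofReal (Bns n s * (Real.pi / Real.sin (Real.pi * s))) := by
    intro θ
    obtain ⟨h1, h2, h12⟩ := T_facts x (θ : Pt n) hx
    rw [ENNReal.ofReal_mul hB.le, ← beta_lint' hs0 hs1, ← lintegral_const_mul' _ _ ENNReal.ofReal_ne_top]
    apply setLIntegral_mono' measurableSet_Ioi
    intro τ hτ
    have hτ1 : 1 < τ := hτ
    have ht1 : 0 < τ - 1 := by linarith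
    rw [← ENNReal.ofReal_mul hB.le, mul_div_assoc]
    apply ENNReal.ofReal_le_ofReal
    apply mul_le_mul_of_nonneg_left _ hB.le
    apply div_le_div_of_nonneg_right _ (by linarith)
    apply Real.rpow_le_rpow_of_nonpos ht1 _ (by linarith)
    have : 0 ≤ T1 r x θ / T2 r x θ * τ := by positivity
    nlinarith
  calc _ ≤ ∫⁻ θ : sphere (0 : Pt n) 1, ENNReal.ofReal (Bns n s * (Real.pi / Real.sin (Real.pi * s))) ∂(volume : Measure (Pt n)).toSphere :=
        lintegral_mono hin
    _ = ENNReal.ofReal (Bns n s * (Real.pi / Real.sin (Real.pi * s))) * ENNReal.ofReal (shl n) := by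
      rw [lintegral_const, ← toSphere_real_univ n hn, ofReal_measureReal]
    _ = 2 := by
      rw [← ENNReal.ofReal_mul (by have := beta_pos' hs0 hs1; positivity)]
      have := Bns_kappa hn hs0 hs1
      rw [show Bns n s * (Real.pi / Real.sin (Real.pi * s)) * shl n = 2 by linarith]
      simp
    _ ≤ 2 := le_rfl


lemma PP_nonneg {n : ℕ} (hn : 0 < n) {s r : ℝ} (hs0 : 0 < s) (hs1 : s < 1) {x y : Pt n} (hx : ‖x‖ < r) (hy : r < ‖y‖) :
    0 ≤ PP n s r x y := by
  have hB := Bns_pos hn hs0 hs1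
  have h1 : 0 < r ^ 2 - ‖x‖ ^ 2 := by nlinarith [norm_nonneg x]
  have h2 : 0 < ‖y‖ ^ 2 - r ^ 2 := by nlinarith [norm_nonneg x]
  unfold PP
  positivity

lemma PP_meas {n : ℕ} {s r : ℝ} : Measurable (Function.uncurry (PP n s r)) := by
  unfold PP Function.uncurry; fun_prop

lemma lsc_int {n : ℕ} (hn : 0 < n) {s r : ℝ} (hs0 : 0 < s) (hs1 : s < 1) (x : Pt n) (hx : ‖x‖ < r) (F : Pt n → ENNReal) (hF : Measurable F)
    (xk : ℕ → Pt n) (hxk : Tendsto xk atTop (nhds x)) (L : ENNReal) 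
    (hL : Tendsto (fun k => ∫⁻ y in {y | r < ‖y‖}, ENNReal.ofReal (PP n s r (xk k) y) * F y) atTop (nhds L)) :
    ∫⁻ y in {y | r < ‖y‖}, ENNReal.ofReal (PP n s r x y) * F y ≤ L := by
  have hSm : MeasurableSet {y : Pt n | r < ‖y‖} := measurableSet_lt (by fun_prop) (by fun_prop)
  rw [← hL.liminf_eq]
  refine le_trans ?_ (lintegral_liminf_le (fun k => ?_))
  · apply setLIntegral_mono' hSm
    intro y hy
    have hy' : r < ‖y‖ := hy
    have h1 : 0 < r ^ 2 - ‖x‖ ^ 2 := by nlinarith [norm_nonneg x]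
    have h2 : 0 < ‖y‖ ^ 2 - r ^ 2 := by nlinarith [norm_nonneg x]
    have hxy : x - y ≠ 0 := by rw [sub_ne_zero]; rintro rfl; linarith
    have hc : Tendsto (fun k => PP n s r (xk k) y) atTop (nhds (PP n s r x y)) := by
      have : ContinuousAt (fun z => PP n s r z y) x := by
        unfold PP
        refine ContinuousAt.div (ContinuousAt.mul continuousAt_const (ContinuousAt.rpow_const (by fun_prop) (Or.inl (by positivity)))) (by fun_prop) (by positivity)
      exact this.tendsto.comp hxk
    have hP : 0 < PP n s r x y := by
      have hB := Bns_pos hn hs0 hs1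
      unfold PP; positivity
    have := ENNReal.Tendsto.mul_const (b := F y) ((ENNReal.continuous_ofReal.tendsto _).comp hc) (Or.inl (by simpa using hP))
    exact le_of_eq this.liminf_eq.symm
  · unfold PP; fun_prop

open scoped Pointwise in
lemma half_sphere {n : ℕ} (hn : 0 < n) (x : Pt n) (hx : x ≠ 0) :
    ENNReal.ofReal (shl n / 2) ≤ (volume : Measure (Pt n)).toSphere {θ : sphere (0 : Pt n) 1 | 0 < inner ℝ x (θ : Pt n)} := by
  have : Nontrivial (Pt n) := pt_nontrivial hn
  set σ := (volume : Measure (Pt n)).toSphere with hσ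
  set P := {θ : sphere (0 : Pt n) 1 | 0 < inner ℝ x (θ : Pt n)} with hP
  set Q := {θ : sphere (0 : Pt n) 1 | inner ℝ x (θ : Pt n) < 0} with hQ
  set Z := {θ : sphere (0 : Pt n) 1 | inner ℝ x (θ : Pt n) = 0} with hZ
  have hPm : MeasurableSet P := measurableSet_lt (by fun_prop) (by fun_prop)
  have hQm : MeasurableSet Q := measurableSet_lt (by fun_prop) (by fun_prop)
  have hZm : MeasurableSet Z := measurableSet_eq_fun (by fun_prop) (by fun_prop)
  have h1 : σ univ ≤ σ P + σ Q + σ Z := by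
    refine (measure_mono ?_).trans ((measure_union_le (P ∪ Q) Z).trans (add_le_add_left (measure_union_le P Q) _))
    intro θ _
    rcases lt_trichotomy (inner ℝ x (θ : Pt n)) 0 with h | h | h
    · exact Or.inl (Or.inr h)
    · exact Or.inr h
    · exact Or.inl (Or.inl h)
  have h2 : σ Q = σ P := by
    rw [hσ, Measure.toSphere_apply' _ hQm, Measure.toSphere_apply' _ hPm]
    congr 1
    rw [← Measure.measure_neg]
    congr 1
    ext z
    simp only [Set.mem_neg, Set.mem_smul, mem_image]
    constructor
    · rintro ⟨t, ht, w, ⟨θ, hθ, rfl⟩, hz⟩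
      refine ⟨t, ht, _, ⟨-θ, ?_, rfl⟩, ?_⟩
      · have : inner ℝ x (θ : Pt n) < 0 := hθ
        show 0 < inner ℝ x ((-θ : sphere (0 : Pt n) 1) : Pt n)
        simpa using this
      · simp [hz]
    · rintro ⟨t, ht, w, ⟨θ, hθ, rfl⟩, hz⟩
      refine ⟨t, ht, _, ⟨-θ, ?_, rfl⟩, ?_⟩
      · have : 0 < inner ℝ x (θ : Pt n) := hθ
        show inner ℝ x ((-θ : sphere (0 : Pt n) 1) : Pt n) < 0
        simpa using this
      · simp [hz]
  have h3 : σ Z = 0 := by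
    rw [hσ, Measure.toSphere_apply' _ hZm]
    have : volume (Ioo (0:ℝ) 1 • ((↑) '' Z : Set (Pt n))) = 0 := by
      refine measure_mono_null (t := ((ℝ ∙ x)ᗮ : Submodule ℝ (Pt n))) ?_ (Measure.addHaar_submodule _ _ ?_)
      · intro z hz
        obtain ⟨t, ht, w, ⟨θ, hθ, rfl⟩, rfl⟩ := Set.mem_smul.1 hz
        have : inner ℝ x (θ : Pt n) = 0 := hθ
        rw [SetLike.mem_coe, Submodule.mem_orthogonal_singleton_iff_inner_right]
        simp [inner_smul_right, this]
      · intro h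
        rw [Submodule.orthogonal_eq_top_iff, Submodule.span_singleton_eq_bot] at h
        exact hx h
    rw [this, mul_zero]
  rw [h2, h3, add_zero, ← two_mul] at h1
  rw [← ofReal_measureReal (s := univ), toSphere_real_univ n hn] at h1
  rw [ENNReal.ofReal_div_of_pos two_pos]
  apply ENNReal.div_le_of_le_mul
  simpa [mul_comm] using h1

lemma T1_cont {n : ℕ} (r : ℝ) : Continuous (fun p : Pt n × Pt n => T1 r p.1 p.2) := by unfold T1; fun_prop
lemma T2_cont {n : ℕ} (r : ℝ) : Continuous (fun p : Pt n × Pt n => T2 r p.1 p.2) := by unfold T2; fun_prop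

set_option maxHeartbeats 1000000 in
lemma lsc_bdry {n : ℕ} (hn : 0 < n) {s r : ℝ} (hs0 : 0 < s) (hs1 : s < 1) (x : Pt n) (hr : 0 < r) (hx : ‖x‖ = r) (v : Pt n → ℝ) (hv : Continuous v)
    (xk : ℕ → Pt n) (hxkr : ∀ k, ‖xk k‖ < r) (hxk : Tendsto xk atTop (nhds x)) (L : ENNReal) 
    (hL : Tendsto (fun k => ∫⁻ y in {y | r < ‖y‖}, ENNReal.ofReal (PP n s r (xk k) y) * ENNReal.ofReal (v y)) atTop (nhds L)) :
    ENNReal.ofReal (v x) ≤ L := by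
  have hB := Bns_pos hn hs0 hs1
  have hx0 : x ≠ 0 := by rintro rfl; simp at hx; linarith
  have hvm : Measurable v := hv.measurable
  rw [← hL.liminf_eq]
  simp_rw [fun k => pp_polar hn hs0 hs1 (xk k) (hxkr k) (fun y => ENNReal.ofReal (v y)) (by fun_prop)]
  have hT1 : Measurable (fun p : Pt n × Pt n => T1 r p.1 p.2) := (T1_cont r).measurable
  have hT2 : Measurable (fun p : Pt n × Pt n => T2 r p.1 p.2) := (T2_cont r).measurable
  set g : ℕ → sphere (0 : Pt n) 1 → ℝ → ENNReal := fun k θ τ =>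
    ENNReal.ofReal (Bns n s * ((τ - 1) * (1 + T1 r (xk k) θ / T2 r (xk k) θ * τ)) ^ (-s) / τ) * ENNReal.ofReal (v (xk k + (T1 r (xk k) θ * τ) • (θ : Pt n))) with hg
  have hgm : ∀ k, Measurable (Function.uncurry (g k)) := by
    intro k
    have a1 : Measurable fun p : sphere (0 : Pt n) 1 × ℝ => T1 r (xk k) (p.1 : Pt n) :=
      hT1.comp (g := fun p : Pt n × Pt n => T1 r p.1 p.2) (f := fun p : sphere (0 : Pt n) 1 × ℝ => (xk k, (p.1 : Pt n))) (by fun_prop)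
    have a2 : Measurable fun p : sphere (0 : Pt n) 1 × ℝ => T2 r (xk k) (p.1 : Pt n) :=
      hT2.comp (g := fun p : Pt n × Pt n => T2 r p.1 p.2) (f := fun p : sphere (0 : Pt n) 1 × ℝ => (xk k, (p.1 : Pt n))) (by fun_prop)
    unfold Function.uncurry
    simp only [hg]
    fun_prop
  refine le_trans ?_ (lintegral_liminf_le (f := fun k θ => ∫⁻ τ in Ioi (1:ℝ), g k θ τ) (fun k => (hgm k).lintegral_prod_right'))
  have hPm : MeasurableSet {θ : sphere (0 : Pt n) 1 | 0 < inner ℝ x (θ : Pt n)} := measurableSet_lt (by fun_prop) (by fun_prop)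
  have hβ := beta_pos' hs0 hs1
  have key : ∀ θ : sphere (0 : Pt n) 1, 0 < inner ℝ x (θ : Pt n) →
      ENNReal.ofReal (Bns n s * (Real.pi / Real.sin (Real.pi * s))) * ENNReal.ofReal (v x) ≤ 
        liminf (fun k => ∫⁻ τ in Ioi (1:ℝ), g k θ τ) atTop := by
    intro θ hθ
    refine le_trans ?_ (lintegral_liminf_le (f := fun k => g k θ) (fun k => (hgm k).of_uncurry_left))
    rw [ENNReal.ofReal_mul hB.le, ← beta_lint' hs0 hs1, ← lintegral_const_mul' _ _ ENNReal.ofReal_ne_top,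
      ← lintegral_mul_const' _ _ ENNReal.ofReal_ne_top]
    apply setLIntegral_mono' measurableSet_Ioi
    intro τ hτ
    have hτ1 : 1 < τ := hτ
    have ht1 : 0 < τ - 1 := by linarith
    have b1 : T1 r x (θ : Pt n) = 0 := by
      unfold T1; rw [hx, sub_self, add_zero, Real.sqrt_sq hθ.le]; ring
    have b2 : 0 < T2 r x (θ : Pt n) := by
      unfold T2; rw [hx, sub_self, add_zero, Real.sqrt_sq hθ.le]; linarith
    have c0 : Tendsto (fun k => (xk k, (θ : Pt n))) atTop (nhds (x, (θ : Pt n))) := hxk.prodMk_nhds tendsto_const_nhds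
    have c1 : Tendsto (fun k => T1 r (xk k) (θ : Pt n)) atTop (nhds 0) := by
      rw [← b1]; exact ((T1_cont r).tendsto _).comp c0
    have c2 : Tendsto (fun k => T2 r (xk k) (θ : Pt n)) atTop (nhds (T2 r x (θ : Pt n))) := ((T2_cont r).tendsto _).comp c0
    have c3 : Tendsto (fun k => v (xk k + (T1 r (xk k) θ * τ) • (θ : Pt n))) atTop (nhds (v x)) := by
      have : Tendsto (fun k => (xk k + (T1 r (xk k) θ * τ) • (θ : Pt n))) atTop (nhds (x + (0 * τ) • (θ : Pt n))) :=
        hxk.add ((c1.mul_const τ).smul_const _)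
      rw [zero_mul, zero_smul, add_zero] at this
      exact (hv.tendsto _).comp this
    have c4 : Tendsto (fun k => Bns n s * ((τ - 1) * (1 + T1 r (xk k) θ / T2 r (xk k) θ * τ)) ^ (-s) / τ) atTop
        (nhds (Bns n s * ((τ - 1) ^ (-s) / τ))) := by
      have d1 : Tendsto (fun k => (τ - 1) * (1 + T1 r (xk k) θ / T2 r (xk k) θ * τ)) atTop (nhds (τ - 1)) := by
        have := (((c1.div c2 b2.ne').mul_const τ).const_add 1).const_mul (τ - 1)
        simpa using this
      have := ((d1.rpow_const (p := -s) (Or.inl ht1.ne')).const_mul (Bns n s)).div_const τ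
      rwa [mul_div_assoc] at this
    have hpos : 0 < Bns n s * ((τ - 1) ^ (-s) / τ) := by positivity
    have := ENNReal.Tendsto.mul ((ENNReal.continuous_ofReal.tendsto _).comp c4) (Or.inl (by simpa using hpos))
      ((ENNReal.continuous_ofReal.tendsto _).comp c3) (Or.inr ENNReal.ofReal_ne_top)
    rw [← ENNReal.ofReal_mul hB.le]
    exact le_of_eq this.liminf_eq.symm
  calc ENNReal.ofReal (v x) = ENNReal.ofReal (Bns n s * (Real.pi / Real.sin (Real.pi * s))) * ENNReal.ofReal (v x) * ENNReal.ofReal (shl n / 2) := by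
        rw [mul_right_comm, ← ENNReal.ofReal_mul (by positivity)]
        have := Bns_kappa hn hs0 hs1
        rw [show Bns n s * (Real.pi / Real.sin (Real.pi * s)) * (shl n / 2) = 1 by linarith]
        simp
    _ ≤ ENNReal.ofReal (Bns n s * (Real.pi / Real.sin (Real.pi * s))) * ENNReal.ofReal (v x) *
      (volume : Measure (Pt n)).toSphere {θ : sphere (0 : Pt n) 1 | 0 < inner ℝ x (θ : Pt n)} := by
        gcongr; exact half_sphere hn x hx0
    _ = ∫⁻ θ in {θ : sphere (0 : Pt n) 1 | 0 < inner ℝ x (θ : Pt n)}, ENNReal.ofReal (Bns n s * (Real.pi / Real.sin (Real.pi * s))) * ENNReal.ofReal (v x) ∂(volume : Measure (Pt n)).toSphere := by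
        rw [setLIntegral_const]
    _ ≤ ∫⁻ θ in {θ : sphere (0 : Pt n) 1 | 0 < inner ℝ x (θ : Pt n)}, liminf (fun k => ∫⁻ τ in Ioi (1:ℝ), g k θ τ) atTop ∂(volume : Measure (Pt n)).toSphere :=
        setLIntegral_mono' hPm (fun θ hθ => key θ hθ)
    _ ≤ _ := setLIntegral_le_lintegral _ _


lemma prod_expand {A1 A2 l1 l2 T1 T2 E : ℝ} (hT1 : 0 ≤ T1) (hE : 0 ≤ E)
    (h1 : |A1 - 1| ≤ T1 * E) (h2 : |A2 - 1| ≤ T2 * E)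
    (h3 : |A1 - 1 - l1| ≤ T1 * E ^ 2) (h4 : |A2 - 1 - l2| ≤ T2 * E ^ 2) :
    |A1 * A2 - 1 - (l1 + l2)| ≤ (T1 + T2 + T1 * T2) * E ^ 2 := by
  have e : A1 * A2 - 1 - (l1 + l2) = (A1 - 1 - l1) + (A2 - 1 - l2) + (A1 - 1) * (A2 - 1) := by ring
  rw [e]
  have h5 : |(A1 - 1) * (A2 - 1)| ≤ (T1 * E) * (T2 * E) := by
    rw [abs_mul]; exact mul_le_mul h1 h2 (abs_nonneg _) (by positivity)
  calc _ ≤ |A1 - 1 - l1| + |A2 - 1 - l2| + |(A1 - 1) * (A2 - 1)| := abs_add_three _ _ _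
    _ ≤ T1 * E ^ 2 + T2 * E ^ 2 + (T1 * E) * (T2 * E) := by gcongr
    _ = _ := by ring

lemma fy_expand {n : ℕ} {s r : ℝ} (hs0 : 0 < s) (x : Pt n) (hx : ‖x‖ < r) :
    ∃ C δ : ℝ, 0 ≤ C ∧ 0 < δ ∧ ∀ y : Pt n, r < ‖y‖ → ∃ p : Pt n, ∀ h : Pt n, ‖h‖ < δ →
      |fy n s r y (x + h) - fy n s r y x - fy n s r y x * inner ℝ p h| ≤ C * fy n s r y x * ‖h‖ ^ 2 := by
  obtain ⟨t1, ht1, H1⟩ := taylor1 s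
  obtain ⟨t2, ht2, H2⟩ := taylor1 (-(n:ℝ)/2)
  have hr : 0 < r := lt_of_le_of_lt (norm_nonneg _) hx
  obtain ⟨m, hm⟩ : ∃ m, m = r ^ 2 - ‖x‖ ^ 2 := ⟨_, rfl⟩
  have hm0 : 0 < m := by rw [hm]; nlinarith [norm_nonneg x]
  obtain ⟨d, hd⟩ : ∃ d, d = r - ‖x‖ := ⟨_, rfl⟩
  have hd0 : 0 < d := by rw [hd]; linarith
  obtain ⟨C0, hC0⟩ : ∃ C0, C0 = (2 * r + 1) / m + 3 / d := ⟨_, rfl⟩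
  have hC00 : 0 < C0 := by rw [hC0]; positivity
  refine ⟨(t1 + t2 + t1 * t2) * C0 ^ 2 + (s / m + n / 2 / d ^ 2), min (min 1 d) (1 / (2 * C0)), by positivity, by positivity, ?_⟩
  intro y hy
  obtain ⟨w, hw⟩ : ∃ w, w = x - y := ⟨_, rfl⟩
  have hwd : d ≤ ‖w‖ := by
    have := norm_sub_norm_le y x
    rw [norm_sub_rev, ← hw] at this; linarith
  have hw0 : 0 < ‖w‖ := by linarith
  refine ⟨-(2 * s / m) • x - (n / ‖w‖ ^ 2) • w, ?_⟩
  intro h hh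
  have hh1 : ‖h‖ < 1 := hh.trans_le ((min_le_left _ _).trans (min_le_left _ _))
  have hh2 : ‖h‖ < d := hh.trans_le ((min_le_left _ _).trans (min_le_right _ _))
  have hh3 : C0 * ‖h‖ ≤ 1 / 2 := by
    have := hh.le.trans (min_le_right _ _)
    rw [le_div_iff₀ (by positivity)] at this; linarith
  obtain ⟨e1, he1⟩ : ∃ e1, e1 = -(2 * inner ℝ x h + ‖h‖ ^ 2) / m := ⟨_, rfl⟩
  obtain ⟨e2, he2⟩ : ∃ e2, e2 = (2 * inner ℝ w h + ‖h‖ ^ 2) / ‖w‖ ^ 2 := ⟨_, rfl⟩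
  have hh0 := norm_nonneg h
  have b1 : |e1| ≤ C0 * ‖h‖ := by
    have i1 := abs_real_inner_le_norm x h
    rw [he1, abs_div, abs_neg, abs_of_pos hm0]
    calc _ ≤ ((2 * r + 1) * ‖h‖) / m := by
          gcongr
          calc _ ≤ |2 * inner ℝ x h| + |‖h‖ ^ 2| := abs_add_le _ _
            _ = 2 * |inner ℝ x h| + ‖h‖ ^ 2 := by rw [abs_mul, abs_two, abs_of_nonneg (sq_nonneg ‖h‖)]
            _ ≤ _ := by nlinarith
      _ = (2 * r + 1) / m * ‖h‖ := by ring
      _ ≤ _ := by rw [hC0]; gcongr; have : 0 < 3 / d := by positivity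
                  linarith
  have b2 : |e2| ≤ C0 * ‖h‖ := by
    have i1 := abs_real_inner_le_norm w h
    rw [he2, abs_div, abs_of_pos (show 0 < ‖w‖ ^ 2 by positivity)]
    calc _ ≤ (3 * ‖w‖ * ‖h‖) / ‖w‖ ^ 2 := by
          gcongr
          calc _ ≤ |2 * inner ℝ w h| + |‖h‖ ^ 2| := abs_add_le _ _
            _ = 2 * |inner ℝ w h| + ‖h‖ ^ 2 := by rw [abs_mul, abs_two, abs_of_nonneg (sq_nonneg ‖h‖)]
            _ ≤ _ := by nlinarith
      _ = 3 / ‖w‖ * ‖h‖ := by field_simp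
      _ ≤ 3 / d * ‖h‖ := by gcongr
      _ ≤ _ := by rw [hC0]; gcongr; have : 0 < (2 * r + 1) / m := by positivity
                  linarith
  obtain ⟨q1, q2⟩ := H1 e1 (b1.trans hh3)
  obtain ⟨q3, q4⟩ := H2 e2 (b2.trans hh3)
  have sq1 : e1 ^ 2 ≤ (C0 * ‖h‖) ^ 2 := by rw [← sq_abs]; gcongr
  have sq2 : e2 ^ 2 ≤ (C0 * ‖h‖) ^ 2 := by rw [← sq_abs e2]; gcongr
  have key := prod_expand (E := C0 * ‖h‖) ht1 (by positivity) (q1.trans (by gcongr)) (q3.trans (by gcongr))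
    (q2.trans (by gcongr)) (q4.trans (by gcongr))
  have p1 : 0 < 1 + e1 := by have := (abs_le.1 (b1.trans hh3)).1; linarith
  have p2 : 0 < 1 + e2 := by have := (abs_le.1 (b2.trans hh3)).1; linarith
  have hf0 : fy n s r y x = m ^ s / ‖w‖ ^ n := by
    unfold fy phi; rw [← hm, max_eq_left hm0.le, dist_eq_norm, hw]
  have hfp : 0 < fy n s r y x := by rw [hf0]; positivity
  have hf1 : fy n s r y (x + h) = fy n s r y x * ((1 + e1) ^ s * (1 + e2) ^ (-(n:ℝ)/2)) := by
    have g1 : r ^ 2 - ‖x + h‖ ^ 2 = m * (1 + e1) := by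
      rw [norm_add_sq_real, he1, hm]; rw [hm] at hm0; field_simp; ring
    have g2 : ‖w + h‖ ^ 2 = ‖w‖ ^ 2 * (1 + e2) := by
      rw [norm_add_sq_real, he2]; field_simp; ring
    rw [hf0]
    unfold fy phi
    rw [g1, max_eq_left (by positivity), Real.mul_rpow hm0.le p1.le, dist_eq_norm, show x + h - y = w + h by rw [hw]; abel]
    have g3 : ‖w + h‖ ^ n = ‖w‖ ^ n * (1 + e2) ^ ((n:ℝ)/2) := by
      have : ∀ z : ℝ, 0 ≤ z → z ^ n = (z ^ 2) ^ ((n:ℝ)/2) := by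
        intro z hz
        rw [← Real.rpow_natCast_mul hz, ← Real.rpow_natCast]; congr 1; push_cast; ring
      rw [this _ (norm_nonneg _), this _ (norm_nonneg w), g2, Real.mul_rpow (by positivity) p2.le]
    rw [g3, neg_div, Real.rpow_neg p2.le]
    field_simp
  have hin : inner ℝ (-(2 * s / m) • x - (n / ‖w‖ ^ 2) • w) h = s * e1 + (-(n:ℝ)/2) * e2 + (s / m + n / 2 / ‖w‖ ^ 2) * ‖h‖ ^ 2 := by
    rw [inner_sub_left, inner_smul_left, inner_smul_left, he1, he2]
    simp only [conj_trivial]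
    field_simp; ring
  rw [hf1, hin]
  generalize (1 + e1) ^ s * (1 + e2) ^ (-(n:ℝ)/2) = X at *
  rw [show fy n s r y x * X - fy n s r y x - fy n s r y x * (s * e1 + (-(n:ℝ)/2) * e2 + (s / m + n / 2 / ‖w‖ ^ 2) * ‖h‖ ^ 2)
    = fy n s r y x * ((X - 1 - (s * e1 + (-(n:ℝ)/2) * e2)) - (s / m + n / 2 / ‖w‖ ^ 2) * ‖h‖ ^ 2) by ring, abs_mul, abs_of_pos hfp]
  have fin : |(X - 1 - (s * e1 + (-(n:ℝ)/2) * e2)) - (s / m + n / 2 / ‖w‖ ^ 2) * ‖h‖ ^ 2| ≤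
      ((t1 + t2 + t1 * t2) * C0 ^ 2 + (s / m + n / 2 / d ^ 2)) * ‖h‖ ^ 2 := by
    calc _ ≤ |X - 1 - (s * e1 + (-(n:ℝ)/2) * e2)| + |(s / m + n / 2 / ‖w‖ ^ 2) * ‖h‖ ^ 2| := abs_sub _ _
      _ ≤ (t1 + t2 + t1 * t2) * (C0 * ‖h‖) ^ 2 + (s / m + n / 2 / d ^ 2) * ‖h‖ ^ 2 := by
        refine add_le_add key ?_
        rw [abs_of_nonneg (by positivity)]
        gcongr
      _ = _ := by ring
  calc _ ≤ fy n s r y x * (((t1 + t2 + t1 * t2) * C0 ^ 2 + (s / m + n / 2 / d ^ 2)) * ‖h‖ ^ 2) :=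
        mul_le_mul_of_nonneg_left fin hfp.le
    _ = _ := by ring

lemma ann_meas {n : ℕ} (x : Pt n) (ε δ : ℝ) : MeasurableSet {z : Pt n | ε ≤ dist x z ∧ dist x z < δ} := by
  have h1 : MeasurableSet {z : Pt n | ε ≤ dist x z} := measurableSet_le (by fun_prop) (by fun_prop)
  have h2 : MeasurableSet {z : Pt n | dist x z < δ} := measurableSet_lt (by fun_prop) (by fun_prop)
  exact h1.inter h2

lemma odd_zero {n : ℕ} {s : ℝ} (x p : Pt n) (ε δ : ℝ) :
    ∫ z in {z | ε ≤ dist x z ∧ dist x z < δ}, inner ℝ p (z - x) * KK n s x z = 0 := by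
  have hA : MeasurableSet {z : Pt n | ε ≤ dist x z ∧ dist x z < δ} :=
    ann_meas x ε δ
  rw [← integral_indicator hA]
  set g := {z : Pt n | ε ≤ dist x z ∧ dist x z < δ}.indicator (fun z => inner ℝ p (z - x) * KK n s x z) with hg
  have h1 := integral_sub_left_eq_self g volume (x + x)
  have h2 : ∀ z, g (x + x - z) = - g z := by
    intro z
    have e : dist x (x + x - z) = dist x z := by
      rw [dist_eq_norm, dist_eq_norm, ← norm_neg]; congr 1; abel
    by_cases hz : z ∈ {z : Pt n | ε ≤ dist x z ∧ dist x z < δ}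
    · have hz' : x + x - z ∈ {z : Pt n | ε ≤ dist x z ∧ dist x z < δ} := by
        show ε ≤ dist x (x + x - z) ∧ dist x (x + x - z) < δ
        rw [e]; exact hz
      rw [hg, indicator_of_mem hz, indicator_of_mem hz']
      unfold KK
      rw [e, show x + x - z - x = -(z - x) by abel, inner_neg_right]; ring
    · have hz' : x + x - z ∉ {z : Pt n | ε ≤ dist x z ∧ dist x z < δ} := by
        show ¬ (ε ≤ dist x (x + x - z) ∧ dist x (x + x - z) < δ)
        rw [e]; exact hz
      rw [hg, indicator_of_notMem hz, indicator_of_notMem hz', neg_zero]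
  simp only [h2, integral_neg] at h1
  linarith

lemma fy_meas {n : ℕ} {s r : ℝ} (y : Pt n) : Measurable (fy n s r y) := by
  have := phi_meas (n := n) (s := s) (r := r)
  unfold fy; fun_prop

lemma fy_nonneg {n : ℕ} {s r : ℝ} (y z : Pt n) : 0 ≤ fy n s r y z := by
  have := phi_nonneg (s := s) (r := r) z
  unfold fy; positivity

lemma fy_bdd {n : ℕ} {s r : ℝ} (hs0 : 0 < s) (hr : 0 < r) (y z : Pt n) (hy : r < ‖y‖) : fy n s r y z ≤ (r^2)^s / (‖y‖ - r) ^ n := by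
  have h0 : 0 < ‖y‖ - r := by linarith
  by_cases hz : ‖z‖ < r
  · unfold fy
    have : ‖y‖ - r ≤ dist z y := by
      have := norm_sub_norm_le y z
      rw [dist_eq_norm, norm_sub_rev]; linarith
    have := phi_le (r := r) hs0 z
    gcongr
  · have : phi n s r z = 0 := by
      unfold phi
      rw [max_eq_right (by nlinarith [norm_nonneg z]), Real.zero_rpow hs0.ne']
    unfold fy; rw [this, zero_div]; positivity

lemma near_bound {n : ℕ} (hn : 0 < n) {s r : ℝ} (hs0 : 0 < s) (hs1 : s < 1) (x : Pt n) (hx : ‖x‖ < r) :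
    ∃ C δ : ℝ, 0 < δ ∧ ∀ y : Pt n, r < ‖y‖ → ∀ ε, 0 < ε → 
      |∫ z in {z | ε ≤ dist x z ∧ dist x z < δ}, (fy n s r y x - fy n s r y z) * KK n s x z| ≤ C * fy n s r y x := by
  obtain ⟨C, δ, hC, hδ, H⟩ := fy_expand hs0 x hx
  have hr : 0 < r := lt_of_le_of_lt (norm_nonneg _) hx
  refine ⟨C * ∫ z in ball x δ, dist x z ^ (2 - ((n:ℝ) + 2 * s)), δ, hδ, ?_⟩
  intro y hy ε hε
  obtain ⟨p, hp⟩ := H y hy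
  have hA : MeasurableSet {z : Pt n | ε ≤ dist x z ∧ dist x z < δ} :=
    ann_meas x ε δ
  set A := {z : Pt n | ε ≤ dist x z ∧ dist x z < δ} with hAd
  have hAE : A ⊆ {z | ε ≤ dist x z} := fun z hz => hz.1
  have hAB : A ⊆ ball x δ := fun z hz => by rw [mem_ball']; exact hz.2
  have i1 : IntegrableOn (fun z => (fy n s r y x - fy n s r y z) * KK n s x z) A := by
    refine (bdd_mul_KK_integrable hn hs0 x hε (C := (r^2)^s / (‖y‖ - r) ^ n) (measurable_const.sub (fy_meas y)).aestronglyMeasurable ?_).mono_set hAE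
    intro z
    have := fy_bdd hs0 hr y z hy
    have := fy_bdd hs0 hr y x hy
    have := fy_nonneg (s := s) (r := r) y x
    have := fy_nonneg (s := s) (r := r) y z
    show |fy n s r y x - fy n s r y z| ≤ _
    rw [abs_le]; constructor <;> linarith
  have i2 : IntegrableOn (fun z => inner ℝ p (z - x) * KK n s x z) A := by
    apply Integrable.bdd_mul ((far_integrable hn hs0 x hε).mono_set hAE) (Measurable.aestronglyMeasurable (by fun_prop)) (c := ‖p‖ * δ)
    filter_upwards [ae_restrict_mem hA] with z hz
    refine (norm_inner_le_norm _ _).trans ?_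
    rw [← dist_eq_norm, dist_comm]
    gcongr
    exact hz.2.le
  have e : ∫ z in A, (fy n s r y x - fy n s r y z) * KK n s x z = 
      ∫ z in A, ((fy n s r y x - fy n s r y z) * KK n s x z + fy n s r y x * (inner ℝ p (z - x) * KK n s x z)) := by
    rw [integral_add i1 (i2.const_mul _), integral_const_mul, odd_zero, mul_zero, add_zero]
  rw [e]
  have nb := near_integrable hn hs1 x hδ
  have hKK2 : ∀ z, dist x z ^ 2 * KK n s x z = dist x z ^ (2 - ((n:ℝ) + 2 * s)) ∨ z = x := by
    intro z
    rcases (dist_nonneg : 0 ≤ dist x z).eq_or_lt with h | h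
    · right; exact (dist_eq_zero.1 h.symm).symm
    · left; unfold KK; rw [← Real.rpow_natCast, ← Real.rpow_add h]; congr 1
  rw [← Real.norm_eq_abs]
  calc _ ≤ ∫ z in A, C * fy n s r y x * dist x z ^ (2 - ((n:ℝ) + 2 * s)) := by
        apply norm_integral_le_of_norm_le ((nb.mono_set hAB).const_mul _)
        filter_upwards [ae_restrict_mem hA] with z hz
        have hz1 : ε ≤ dist x z := hz.1
        have h1 := hp (z - x) (by rw [← dist_eq_norm, dist_comm]; exact hz.2)
        rw [add_sub_cancel] at h1
        have h2 : (fy n s r y x - fy n s r y z) * KK n s x z + fy n s r y x * (inner ℝ p (z - x) * KK n s x z) =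
          - ((fy n s r y z - fy n s r y x - fy n s r y x * inner ℝ p (z - x)) * KK n s x z) := by ring
        rw [h2, norm_neg, Real.norm_eq_abs, abs_mul, abs_of_nonneg (KK_nonneg _ _)]
        rcases hKK2 z with h | h
        · rw [← h, ← mul_assoc]
          apply mul_le_mul_of_nonneg_right _ (KK_nonneg _ _)
          rwa [← dist_eq_norm, dist_comm z x] at h1
        · rw [h, dist_self] at hz1; linarith
    _ ≤ ∫ z in ball x δ, C * fy n s r y x * dist x z ^ (2 - ((n:ℝ) + 2 * s)) := by
        apply setIntegral_mono_set (nb.const_mul _)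
        · refine Eventually.of_forall fun z => ?_
          have := fy_nonneg (s := s) (r := r) y x
          show 0 ≤ C * fy n s r y x * dist x z ^ (2 - ((n:ℝ) + 2 * s))
          positivity
        · exact hAB.eventuallyLE
    _ = _ := by rw [integral_const_mul]; ring


def cc (n : ℕ) (s r : ℝ) (y : Pt n) : ℝ := Bns n s * (‖y‖ ^ 2 - r ^ 2) ^ (-s)
def QQ (n : ℕ) (s r : ℝ) (z y : Pt n) : ℝ := cc n s r y * fy n s r y z
def SS (n : ℕ) (r : ℝ) : Set (Pt n) := {y | r < ‖y‖}
def EE {n : ℕ} (x : Pt n) (ε : ℝ) : Set (Pt n) := {z | ε ≤ dist x z}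

lemma SS_meas {n : ℕ} (r : ℝ) : MeasurableSet (SS n r) := measurableSet_lt (by fun_prop) (by fun_prop)
lemma EE_meas {n : ℕ} (x : Pt n) (ε : ℝ) : MeasurableSet (EE x ε) := measurableSet_le (by fun_prop) (by fun_prop)

lemma cc_pos {n : ℕ} (hn : 0 < n) {s r : ℝ} (hs0 : 0 < s) (hs1 : s < 1) (hr : 0 < r) {y : Pt n} (hy : r < ‖y‖) : 0 < cc n s r y := by
  have hB := Bns_pos hn hs0 hs1
  have h2 : 0 < ‖y‖ ^ 2 - r ^ 2 := by nlinarith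
  unfold cc; positivity

lemma QQ_eq {n : ℕ} {s r : ℝ} {z y : Pt n} (hz : ‖z‖ < r) (hy : r < ‖y‖) : QQ n s r z y = PP n s r z y := by
  have h1 : 0 < r ^ 2 - ‖z‖ ^ 2 := by nlinarith [norm_nonneg z]
  have h2 : 0 < ‖y‖ ^ 2 - r ^ 2 := by nlinarith [norm_nonneg z]
  unfold QQ cc fy PP phi
  rw [max_eq_left h1.le, Real.div_rpow h1.le h2.le, Real.rpow_neg h2.le, dist_eq_norm]
  ring

lemma QQ_zero {n : ℕ} {s r : ℝ} (hs0 : 0 < s) (hr : 0 < r) {z : Pt n} (y : Pt n) (hz : r ≤ ‖z‖) : QQ n s r z y = 0 := by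
  unfold QQ fy phi
  rw [max_eq_right (by nlinarith), Real.zero_rpow hs0.ne']; ring

lemma QQ_nonneg {n : ℕ} (hn : 0 < n) {s r : ℝ} (hs0 : 0 < s) (hs1 : s < 1) (hr : 0 < r) (z : Pt n) {y : Pt n} (hy : r < ‖y‖) :
    0 ≤ QQ n s r z y := mul_nonneg (cc_pos hn hs0 hs1 hr hy).le (fy_nonneg _ _)

lemma QQ_meas {n : ℕ} {s r : ℝ} : Measurable (fun p : Pt n × Pt n => QQ n s r p.1 p.2) := by
  have := phi_meas (n := n) (s := s) (r := r)
  unfold QQ cc fy; fun_prop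

lemma QQ_meas2 {n : ℕ} {s r : ℝ} (z : Pt n) : Measurable (fun y : Pt n => QQ n s r z y) :=
  QQ_meas.comp (g := fun p : Pt n × Pt n => QQ n s r p.1 p.2) (f := fun y => (z, y)) (by fun_prop)

lemma QQ_lint {n : ℕ} (hn : 0 < n) {s r : ℝ} (hs0 : 0 < s) (hs1 : s < 1) (hr : 0 < r) (z : Pt n) :
    ∫⁻ y in SS n r, ENNReal.ofReal (QQ n s r z y) ≤ 2 := by
  by_cases hz : ‖z‖ < r
  · refine le_trans (le_of_eq ?_) (pp_bound hn hs0 hs1 z hz)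
    apply setLIntegral_congr_fun (SS_meas r)
    intro y hy
    beta_reduce
    rw [QQ_eq hz hy]
  · simp [QQ_zero hs0 hr _ (not_lt.1 hz)]

lemma QQ_int {n : ℕ} (hn : 0 < n) {s r : ℝ} (hs0 : 0 < s) (hs1 : s < 1) (hr : 0 < r) (z : Pt n) :
    IntegrableOn (QQ n s r z) (SS n r) ∧ ∫ y in SS n r, QQ n s r z y ≤ 2 := by
  have h0 : 0 ≤ᵐ[volume.restrict (SS n r)] QQ n s r z := by
    filter_upwards [ae_restrict_mem (SS_meas r)] with y hy using QQ_nonneg hn hs0 hs1 hr z hy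
  have hb := QQ_lint hn hs0 hs1 hr z
  constructor
  · refine ⟨(QQ_meas2 z).aestronglyMeasurable, ?_⟩
    rw [hasFiniteIntegral_iff_ofReal h0]
    exact hb.trans_lt (by simp)
  · rw [integral_eq_lintegral_of_nonneg_ae h0 (QQ_meas2 z).aestronglyMeasurable]
    exact ENNReal.toReal_le_of_le_ofReal (by norm_num) (by simpa using hb)


lemma QQv_int {n : ℕ} (hn : 0 < n) {s r : ℝ} (hs0 : 0 < s) (hs1 : s < 1) (hr : 0 < r) {v : Pt n → ℝ} (hv : Measurable v) {M : ℝ}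
    (hM : ∀ y, |v y| ≤ M) (z : Pt n) : IntegrableOn (fun y => QQ n s r z y * v y) (SS n r) :=
  (QQ_int hn hs0 hs1 hr z).1.mul_bdd (c := M) hv.aestronglyMeasurable (Eventually.of_forall hM)

/-- the Poisson integral, extended by zero -/
def ut (n : ℕ) (s r : ℝ) (v : Pt n → ℝ) (z : Pt n) : ℝ := ∫ y in SS n r, QQ n s r z y * v y

def HH (n : ℕ) (s r : ℝ) (v : Pt n → ℝ) (x : Pt n) (p : Pt n × Pt n) : ℝ :=
  (QQ n s r x p.2 * v p.2 - QQ n s r p.1 p.2 * v p.2) * KK n s x p.1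

lemma HH_meas {n : ℕ} {s r : ℝ} {v : Pt n → ℝ} (hv : Measurable v) (x : Pt n) : Measurable (HH n s r v x) := by
  have h1 := QQ_meas (n := n) (s := s) (r := r)
  have h2 := QQ_meas2 (n := n) (s := s) (r := r) x
  have h3 := KK_meas (s := s) x
  unfold HH
  fun_prop

lemma HH_int {n : ℕ} (hn : 0 < n) {s r : ℝ} (hs0 : 0 < s) (hs1 : s < 1) (hr : 0 < r) {v : Pt n → ℝ} (hv : Measurable v) {M : ℝ}
    (hM : ∀ y, |v y| ≤ M) (x : Pt n) {ε : ℝ} (hε : 0 < ε) :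
    Integrable (HH n s r v x) ((volume.restrict (EE x ε)).prod (volume.restrict (SS n r))) := by
  have hM0 : 0 ≤ M := (abs_nonneg _).trans (hM 0)
  have hsl : ∀ z, IntegrableOn (fun y => HH n s r v x (z, y)) (SS n r) := by
    intro z
    exact ((QQv_int hn hs0 hs1 hr hv hM x).sub (QQv_int hn hs0 hs1 hr hv hM z)).mul_const (KK n s x z)
  rw [integrable_prod_iff (HH_meas hv x).aestronglyMeasurable]
  refine ⟨Eventually.of_forall hsl, ?_⟩
  refine Integrable.mono' ((far_integrable hn hs0 x hε).const_mul (4 * M)) ?_ ?_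
  · exact ((HH_meas hv x).norm.stronglyMeasurable.integral_prod_right').aestronglyMeasurable
  · refine Eventually.of_forall fun z => ?_
    rw [Real.norm_of_nonneg (integral_nonneg fun _ => norm_nonneg _)]
    obtain ⟨i1, b1⟩ := QQ_int hn hs0 hs1 hr x
    obtain ⟨i2, b2⟩ := QQ_int hn hs0 hs1 hr z
    calc ∫ y in SS n r, ‖HH n s r v x (z, y)‖ ≤ ∫ y in SS n r, (QQ n s r x y + QQ n s r z y) * (M * KK n s x z) := by
          refine integral_mono_ae (hsl z).norm ((i1.add i2).mul_const _) ?_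
          filter_upwards [ae_restrict_mem (SS_meas r)] with y hy
          have q1 := QQ_nonneg hn hs0 hs1 hr x (s := s) hy
          have q2 := QQ_nonneg hn hs0 hs1 hr z (s := s) hy
          unfold HH
          rw [norm_mul, Real.norm_of_nonneg (KK_nonneg _ _), ← sub_mul, norm_mul, mul_assoc, Real.norm_eq_abs]
          have hk := KK_nonneg (s := s) x z
          exact mul_le_mul (by show |QQ n s r x y - QQ n s r z y| ≤ _; rw [abs_le]; constructor <;> linarith)
            (mul_le_mul_of_nonneg_right (hM y) hk) (by positivity) (by positivity)
      _ = ((∫ y in SS n r, QQ n s r x y) + ∫ y in SS n r, QQ n s r z y) * (M * KK n s x z) := by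
          rw [integral_mul_const, integral_add i1 i2]
      _ ≤ (2 + 2) * (M * KK n s x z) := by
          apply mul_le_mul_of_nonneg_right (by linarith) (mul_nonneg hM0 (KK_nonneg _ _))
      _ = _ := by ring

lemma HH_z {n : ℕ} {s r : ℝ} {v : Pt n → ℝ} (x y : Pt n) (A : Set (Pt n)) :
    ∫ z in A, HH n s r v x (z, y) = cc n s r y * v y * ∫ z in A, (fy n s r y x - fy n s r y z) * KK n s x z := by
  rw [← integral_const_mul]
  congr 1; ext z
  unfold HH QQ; ring

lemma fub {n : ℕ} (hn : 0 < n) {s r : ℝ} (hs0 : 0 < s) (hs1 : s < 1) (hr : 0 < r) {v : Pt n → ℝ} (hv : Measurable v) {M : ℝ}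
    (hM : ∀ y, |v y| ≤ M) (x : Pt n) {ε : ℝ} (hε : 0 < ε) :
    ∫ z in EE x ε, (ut n s r v x - ut n s r v z) * KK n s x z = ∫ y in SS n r, ∫ z in EE x ε, HH n s r v x (z, y) := by
  rw [← integral_integral_swap (f := fun z y => HH n s r v x (z, y)) (HH_int hn hs0 hs1 hr hv hM x hε)]
  congr 1; ext z
  unfold HH ut
  rw [← integral_sub (QQv_int hn hs0 hs1 hr hv hM x) (QQv_int hn hs0 hs1 hr hv hM z), ← integral_mul_const]

lemma ut_pde {n : ℕ} (hn : 0 < n) {s r : ℝ} (hs0 : 0 < s) (hs1 : s < 1) {v : Pt n → ℝ} (hv : Measurable v) {M : ℝ}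
    (hM : ∀ y, |v y| ≤ M) (x : Pt n) (hx : ‖x‖ < r) :
    Tendsto (fun ε => ∫ z in EE x ε, (ut n s r v x - ut n s r v z) * KK n s x z) (nhdsWithin 0 (Ioi 0))
      (nhds (∫ y in SS n r, v y * KK n s x y)) := by
  have hr : 0 < r := lt_of_le_of_lt (norm_nonneg _) hx
  have hpos : ∀ᶠ ε in nhdsWithin 0 (Ioi (0:ℝ)), 0 < ε := eventually_mem_nhdsWithin
  obtain ⟨C, δ, hδ, hnb⟩ := near_bound hn hs0 hs1 x hx
  have hsm : ∀ᶠ ε in nhdsWithin 0 (Ioi (0:ℝ)), ε < δ := mem_nhdsWithin_of_mem_nhds (Iio_mem_nhds hδ)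
  have hint := fun ε (hε : 0 < ε) => (HH_int hn hs0 hs1 hr hv hM x hε).integral_prod_right
  have main : Tendsto (fun ε => ∫ y in SS n r, ∫ z in EE x ε, HH n s r v x (z, y)) (nhdsWithin 0 (Ioi 0))
      (nhds (∫ y in SS n r, v y * KK n s x y)) := by
    refine tendsto_integral_filter_of_dominated_convergence
      (fun y => ‖∫ z in EE x δ, HH n s r v x (z, y)‖ + M * C * QQ n s r x y) ?_ ?_ ?_ ?_
    · filter_upwards [hpos] with ε hε using (hint ε hε).aestronglyMeasurable
    · filter_upwards [hpos, hsm] with ε hε hεδ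
      have hae : ∀ᵐ y ∂(volume.restrict (SS n r)), IntegrableOn (fun z => HH n s r v x (z, y)) (EE x ε) :=
        (HH_int hn hs0 hs1 hr hv hM x hε).prod_left_ae
      filter_upwards [ae_restrict_mem (SS_meas r), hae] with y hy hiy
      have hsplit : EE x ε = EE x δ ∪ {z | ε ≤ dist x z ∧ dist x z < δ} := by
        ext z
        simp only [EE, mem_union, mem_ofPred_eq]
        constructor
        · intro h
          rcases le_or_gt δ (dist x z) with h' | h'
          · exact Or.inl h'
          · exact Or.inr ⟨h, h'⟩
        · rintro (h | h)
          · linarith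
          · exact h.1
      have hdis : Disjoint (EE x δ) {z | ε ≤ dist x z ∧ dist x z < δ} := by
        rw [Set.disjoint_left]
        intro z h1 h2
        exact absurd h2.2 (not_lt.2 h1)
      rw [hsplit] at hiy ⊢
      rw [setIntegral_union hdis (ann_meas x ε δ) hiy.left_of_union hiy.right_of_union]
      refine (norm_add_le _ _).trans (add_le_add le_rfl ?_)
      have hc := cc_pos hn hs0 hs1 hr (s := s) hy
      have hf := fy_nonneg (s := s) (r := r) y x
      have h3 := hnb y hy ε hε
      rw [HH_z, Real.norm_eq_abs, abs_mul, abs_mul, abs_of_pos hc]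
      have hM0 : 0 ≤ M := (abs_nonneg _).trans (hM 0)
      calc _ ≤ cc n s r y * M * (C * fy n s r y x) := by
            gcongr
            exact hM y
        _ = _ := by unfold QQ; ring
    · exact (hint δ hδ).norm.add ((QQ_int hn hs0 hs1 hr x).1.const_mul _)
    · filter_upwards [ae_restrict_mem (SS_meas r)] with y hy
      simp only [HH_z]
      have := (fy_pde hn hs0 hs1 x y hx hy).const_mul (cc n s r y * v y)
      have hlim : cc n s r y * v y * (shl n / 2 * (Real.pi / Real.sin (Real.pi * s)) * (‖y‖ ^ 2 - r ^ 2) ^ s * KK n s x y) = v y * KK n s x y := ?_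
      · rw [hlim] at this; exact this
      have h2 : 0 < ‖y‖ ^ 2 - r ^ 2 := by have : r < ‖y‖ := hy; nlinarith
      have hk := Bns_kappa hn hs0 hs1
      have h3 : (‖y‖ ^ 2 - r ^ 2) ^ (-s) * (‖y‖ ^ 2 - r ^ 2) ^ s = 1 := by
        rw [← Real.rpow_add h2]; simp
      unfold cc
      linear_combination ((v y * KK n s x y)) * hk + (v y * KK n s x y * Bns n s * (shl n / 2 * (Real.pi / Real.sin (Real.pi * s)))) * h3
  refine main.congr' ?_
  filter_upwards [hpos] with ε hε
  rw [fub hn hs0 hs1 hr hv hM x hε]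


lemma ut_lint {n : ℕ} (hn : 0 < n) {s r : ℝ} (hs0 : 0 < s) (hs1 : s < 1) (hr : 0 < r) {v : Pt n → ℝ} (hv : Measurable v) {M : ℝ}
    (hM : ∀ y, |v y| ≤ M) (hv0 : ∀ y, 0 ≤ v y) (z : Pt n) (hz : ‖z‖ < r) :
    ENNReal.ofReal (ut n s r v z) = ∫⁻ y in {y | r < ‖y‖}, ENNReal.ofReal (PP n s r z y) * ENNReal.ofReal (v y) := by
  unfold ut
  rw [ofReal_integral_eq_lintegral_ofReal (QQv_int hn hs0 hs1 hr hv hM z)]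
  · apply setLIntegral_congr_fun (SS_meas r)
    intro y hy
    beta_reduce
    rw [ENNReal.ofReal_mul (QQ_nonneg hn hs0 hs1 hr z hy), QQ_eq hz hy]
  · filter_upwards [ae_restrict_mem (SS_meas r)] with y hy
    exact mul_nonneg (QQ_nonneg hn hs0 hs1 hr z hy) (hv0 y)

lemma ut_nonneg {n : ℕ} (hn : 0 < n) {s r : ℝ} (hs0 : 0 < s) (hs1 : s < 1) (hr : 0 < r) {v : Pt n → ℝ} (hv0 : ∀ y, 0 ≤ v y) (z : Pt n) :
    0 ≤ ut n s r v z := 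
  setIntegral_nonneg (SS_meas r) fun y hy => mul_nonneg (QQ_nonneg hn hs0 hs1 hr z hy) (hv0 y)

lemma ut_int {n : ℕ} (hn : 0 < n) {s r : ℝ} (hs0 : 0 < s) (hs1 : s < 1) (hr : 0 < r) {v : Pt n → ℝ} (hv : Measurable v) {M : ℝ}
    (hM : ∀ y, |v y| ≤ M) (x : Pt n) {ε : ℝ} (hε : 0 < ε) :
    IntegrableOn (fun z => (ut n s r v x - ut n s r v z) * KK n s x z) (EE x ε) := by
  refine (HH_int hn hs0 hs1 hr hv hM x hε).integral_prod_left.congr (Eventually.of_forall fun z => ?_)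
  unfold HH ut
  beta_reduce
  rw [← integral_sub (QQv_int hn hs0 hs1 hr hv hM x) (QQv_int hn hs0 hs1 hr hv hM z), ← integral_mul_const]

/-- attainment of a positive maximum -/
lemma max_attained {n : ℕ} (hn : 0 < n) {s r : ℝ} (hs0 : 0 < s) (hs1 : s < 1) (hr : 0 < r) {v : Pt n → ℝ} (hv : Continuous v) {M : ℝ}
    (hM : ∀ y, |v y| ≤ M) (hv0 : ∀ y, 0 ≤ v y) (x1 : Pt n) (hx1 : ‖x1‖ < r) (h1 : ut n s r v x1 < v x1) :
    ∃ x0 W, ‖x0‖ < r ∧ 0 < W ∧ v x0 - ut n s r v x0 = W ∧ ∀ z, ‖z‖ < r → v z - ut n s r v z ≤ W := by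
  set w : Pt n → ℝ := fun z => v z - ut n s r v z with hw
  set A := w '' (ball 0 r) with hA
  have hAne : A.Nonempty := ⟨_, x1, by simpa using hx1, rfl⟩
  have hAb : BddAbove A := by
    refine ⟨M, ?_⟩
    rintro _ ⟨z, hz, rfl⟩
    have a1 := ut_nonneg hn hs0 hs1 hr hv0 z (s := s)
    have a2 := (abs_le.1 (hM z)).2
    simp only [hw]; linarith
  have hle : ∀ z, ‖z‖ < r → w z ≤ sSup A := fun z hz => le_csSup hAb ⟨z, by simpa using hz, rfl⟩
  have hWpos : 0 < sSup A := lt_of_lt_of_le (by simp only [hw]; linarith) (hle x1 hx1)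
  obtain ⟨a, -, ha, haA⟩ := exists_seq_tendsto_sSup hAne hAb
  choose xk hxk hxa using haA
  obtain ⟨x0, hx0, φ, hφ, hlim⟩ := (isCompact_closedBall (0 : Pt n) r).tendsto_subseq (fun k => ball_subset_closedBall (hxk k))
  have hx0' : ‖x0‖ ≤ r := by simpa using hx0
  have hk : ∀ k, ‖(xk ∘ φ) k‖ < r := fun k => by simpa using hxk (φ k)
  have hu : Tendsto (fun k => ut n s r v ((xk ∘ φ) k)) atTop (nhds (v x0 - sSup A)) := by
    have t1 : Tendsto (fun k => v ((xk ∘ φ) k)) atTop (nhds (v x0)) := (hv.tendsto _).comp hlim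
    have t2 : Tendsto (fun k => w ((xk ∘ φ) k)) atTop (nhds (sSup A)) := by
      refine (ha.comp hφ.tendsto_atTop).congr fun k => ?_
      simp only [Function.comp, hxa]
    refine (t1.sub t2).congr fun k => ?_
    simp only [hw]; ring
  have hl0 : 0 ≤ v x0 - sSup A := ge_of_tendsto' hu fun k => ut_nonneg hn hs0 hs1 hr hv0 _
  have hL : Tendsto (fun k => ∫⁻ y in {y | r < ‖y‖}, ENNReal.ofReal (PP n s r ((xk ∘ φ) k) y) * ENNReal.ofReal (v y)) atTop 
      (nhds (ENNReal.ofReal (v x0 - sSup A))) := by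
    refine ((ENNReal.continuous_ofReal.tendsto _).comp hu).congr fun k => ?_
    exact ut_lint hn hs0 hs1 hr hv.measurable hM hv0 _ (hk k)
  have hvm := hv.measurable
  rcases hx0'.lt_or_eq with h | h
  · have := lsc_int hn hs0 hs1 x0 h (fun y => ENNReal.ofReal (v y)) (by fun_prop) _ hlim _ hL
    rw [← ut_lint hn hs0 hs1 hr hv.measurable hM hv0 _ h, ENNReal.ofReal_le_ofReal_iff hl0] at this
    refine ⟨x0, sSup A, h, hWpos, le_antisymm (hle x0 h) (by linarith), hle⟩
  · have := lsc_bdry hn hs0 hs1 x0 hr h v hv _ hk hlim _ hL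
    rw [ENNReal.ofReal_le_ofReal_iff hl0] at this
    linarith

lemma KK_SS_pos {n : ℕ} (hn : 0 < n) {s r : ℝ} (x : Pt n) (hx : ‖x‖ < r) (hi : IntegrableOn (KK n s x) (SS n r)) :
    0 < ∫ z in SS n r, KK n s x z := by
  have : Nontrivial (Pt n) := pt_nontrivial hn
  rw [setIntegral_pos_iff_support_of_nonneg_ae (Eventually.of_forall fun z => KK_nonneg _ _) hi]
  have ho : IsOpen (SS n r) := isOpen_lt continuous_const continuous_norm
  obtain ⟨c, hc⟩ := NormedSpace.exists_lt_norm ℝ (Pt n) r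
  refine lt_of_lt_of_le (ho.measure_pos volume ⟨c, hc⟩) (measure_mono fun z hz => ⟨?_, hz⟩)
  have hz' : r < ‖z‖ := hz
  have : 0 < dist x z := dist_pos.2 (by rintro rfl; linarith)
  rw [Function.mem_support]
  unfold KK
  positivity

lemma C11_cont {n : ℕ} {v : Pt n → ℝ} (h : C11loc n v univ) : Continuous v := by
  rw [continuous_iff_continuousAt]
  intro x
  obtain ⟨ε, hε, -, hd, -⟩ := h x (mem_univ x)
  exact hd.continuousOn.continuousAt (ball_mem_nhds x hε)

theorem final {n : ℕ} (hn : 0 < n) {s : ℝ} (hs0 : 0 < s) (hs1 : s < 1) {Cns : ℝ} (hCns : 0 < Cns) {v : Pt n → ℝ}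
    (hv : Continuous v) {M : ℝ} (hM : ∀ x, |v x| ≤ M) (hv0 : ∀ y, 0 ≤ v y)
    (hsub : ∀ x, 0 < v x → ∃ L, HasFracLap n s Cns v x L ∧ L ≤ 0) {r : ℝ} (hr : 0 < r) (x : Pt n) (hx : ‖x‖ < r) :
    v x ≤ ut n s r v x := by
  by_contra hcon
  push Not at hcon
  obtain ⟨x0, W, hx0, hW, hW0, hmax⟩ := max_attained hn hs0 hs1 hr hv hM hv0 x hx hcon
  have hvx0 : 0 < v x0 := by have := ut_nonneg hn hs0 hs1 hr hv0 x0 (s := s); linarith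
  obtain ⟨L, hL, hL0⟩ := hsub x0 hvx0
  have hpos : ∀ᶠ ε in nhdsWithin 0 (Ioi (0:ℝ)), 0 < ε := eventually_mem_nhdsWithin
  have hd : 0 < r - ‖x0‖ := by linarith
  have hsm : ∀ᶠ ε in nhdsWithin 0 (Ioi (0:ℝ)), ε < r - ‖x0‖ := mem_nhdsWithin_of_mem_nhds (Iio_mem_nhds hd)
  have hSE : ∀ ε, ε ≤ r - ‖x0‖ → SS n r ⊆ EE x0 ε := by
    intro ε hε z hz
    have h1 : r < ‖z‖ := hz
    have h2 := norm_sub_norm_le z x0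
    show ε ≤ dist x0 z
    rw [dist_comm, dist_eq_norm]; linarith
  have iK : IntegrableOn (KK n s x0) (SS n r) := (far_integrable hn hs0 x0 hd).mono_set (hSE _ le_rfl)
  have ivK : IntegrableOn (fun z => v z * KK n s x0 z) (SS n r) :=
    (bdd_mul_KK_integrable hn hs0 x0 hd hv.aestronglyMeasurable hM).mono_set (hSE _ le_rfl)
  have hKpos := KK_SS_pos hn x0 hx0 iK
  have hsph : ∀ᵐ z : Pt n, ‖z‖ ≠ r := by
    have h : volume (sphere (0 : Pt n) r) = 0 := Measure.addHaar_sphere_of_ne_zero _ _ hr.ne'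
    have := measure_eq_zero_iff_ae_notMem.1 h
    filter_upwards [this] with z hz
    simpa using hz
  have t1 := (((ut_pde hn hs0 hs1 hv.measurable hM x0 hx0).add_const (∫ z in SS n r, (W - v z) * KK n s x0 z)).const_mul Cns)
  have hfin := le_of_tendsto_of_tendsto t1 hL ?_
  · have e : ∫ z in SS n r, (W - v z) * KK n s x0 z = W * (∫ z in SS n r, KK n s x0 z) - ∫ z in SS n r, v z * KK n s x0 z := by
      rw [← integral_const_mul, ← integral_sub (iK.const_mul W) ivK]
      congr 1; ext z; ring
    rw [e] at hfin
    have : 0 < Cns * (W * ∫ z in SS n r, KK n s x0 z) := by positivity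
    nlinarith
  · filter_upwards [hpos, hsm] with ε hε hεd
    apply mul_le_mul_of_nonneg_left _ hCns.le
    have e : ∫ z in SS n r, (W - v z) * KK n s x0 z = ∫ z in EE x0 ε, (SS n r).indicator (fun z => (W - v z) * KK n s x0 z) z := by
      rw [setIntegral_indicator (SS_meas r), inter_eq_self_of_subset_right (hSE ε hεd.le)]
    have iW : IntegrableOn (fun z => (W - v z) * KK n s x0 z) (SS n r) := by
      refine ((iK.const_mul W).sub ivK).congr (Eventually.of_forall fun z => ?_)
      simp only [Pi.sub_apply]; ring
    have i2 : IntegrableOn ((SS n r).indicator (fun z => (W - v z) * KK n s x0 z)) (EE x0 ε) :=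
      (iW.integrable_indicator (SS_meas r)).integrableOn
    have i1 := ut_int hn hs0 hs1 hr hv.measurable hM x0 hε
    have e2 : ∀ z, (v x0 - v z) / dist x0 z ^ ((n:ℝ) + 2 * s) = (v x0 - v z) * KK n s x0 z := by
      intro z; unfold KK; rw [Real.rpow_neg dist_nonneg, div_eq_mul_inv]
    simp only [e2]
    rw [e, ← integral_add i1 i2]
    refine integral_mono_ae (i1.add i2) ?_ ?_
    · have h1 := ((far_integrable hn hs0 x0 hε).const_mul (v x0)).sub (bdd_mul_KK_integrable hn hs0 x0 hε hv.aestronglyMeasurable hM)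
      refine h1.congr (Eventually.of_forall fun z => ?_)
      simp only [Pi.sub_apply]; ring
    · filter_upwards [ae_restrict_of_ae hsph] with z hz
      have hk := KK_nonneg (s := s) x0 z
      rcases lt_or_gt_of_ne hz with h | h
      · rw [indicator_of_notMem (show z ∉ SS n r from not_lt.2 h.le), add_zero]
        apply mul_le_mul_of_nonneg_right _ hk
        have := hmax z h
        linarith
      · rw [indicator_of_mem (show z ∈ SS n r from h), ← add_mul]
        apply mul_le_mul_of_nonneg_right _ hk
        have : ut n s r v z = 0 := by
          unfold ut; simp [QQ_zero hs0 hr _ (le_of_lt h)]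
        linarith

/-- Comparison with the Poisson integral for bounded nonnegative functions that are
`s`-subharmonic where positive. -/
theorem comparison_with_poisson_integral
    (n : ℕ) (hn : 0 < n) (s : ℝ) (hs : s ∈ Set.Ioo (0 : ℝ) 1) (Cns : ℝ) (hCns : 0 < Cns)
    (v : Pt n → ℝ) (hvL : MemL2s n s v) (hvC : C11loc n v Set.univ)
    (hvbdd : ∃ M : ℝ, ∀ x : Pt n, |v x| ≤ M)
    (hvnn : ∀ x : Pt n, 0 ≤ v x)
    (hsub : ∀ x : Pt n, 0 < v x → ∃ L : ℝ, HasFracLap n s Cns v x L ∧ L ≤ 0) :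
    ∀ r : ℝ, 0 < r → ∀ x : Pt n, ‖x‖ < r →
      v x ≤ ∫ y in {y : Pt n | r < ‖y‖},
        Bns n s * ((r ^ 2 - ‖x‖ ^ 2) / (‖y‖ ^ 2 - r ^ 2)) ^ s / ‖x - y‖ ^ (n : ℕ) * v y := by
  intro r hr x hx
  obtain ⟨M, hM⟩ := hvbdd
  have h := final hn hs.1 hs.2 hCns (C11_cont hvC) hM hvnn hsub hr x hx
  refine h.trans (le_of_eq ?_)
  unfold ut
  exact setIntegral_congr_fun (SS_meas r) (fun y hy => by beta_reduce; rw [QQ_eq hx hy]; rfl)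
end
end

section
/- Quantitative drop below the supremum under the exterior density condition: Let D ⊂ ℝ^n be an open set with 0 ∈ D, and suppose there exist C₀ > 0, a natural number k₀, and r > 0 such that |D^c ∩ (B_{2^{i+1} r}(0) \ B_{2^i r}(0))| ≥ (C₀/2) · |B_{2^{i+1} r}(0) \ B_{2^i r}(0)| for every integer i ≥ k₀, where |·| denotes Lebesgue measure and D^c = ℝ^n \ D. Let A > 0 and let v : ℝ^n → ℝ be measurable with 0 ≤ v(x) ≤ A for all x ∈ ℝ^n, v(x) = 0 for all x ∈ D^c, and v(0) ≤ B(n,s) ∫_{|y| > r} (r^{2s}/((|y|² − r²)^s |y|^n)) v(y) dy, where B(n,s) = Γ(n/2) sin(πs) / π^{(n/2)+1}. Then there exists a constant C₁ ∈ (0, 1), depending only on n, s, C₀ and k₀, such that v(0) ≤ (1 − C₁) A. -/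
open MeasureTheory Filter Metric Set

noncomputable section

theorem aux_beta (s : ℝ) (hs : s ∈ Set.Ioo (0 : ℝ) 1) :
    ∫ u in Set.Ioo (0 : ℝ) 1, u ^ (s - 1) * (1 - u) ^ (-s) = Real.pi / Real.sin (Real.pi * s) := by
  obtain ⟨h0, h1⟩ := hs
  have hb := ProbabilityTheory.beta_eq_betaIntegralReal s (1 - s) h0 (by linarith)
  have hg : ProbabilityTheory.beta s (1 - s) = Real.pi / Real.sin (Real.pi * s) := by
    unfold ProbabilityTheory.beta
    rw [Real.Gamma_mul_Gamma_one_sub]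
    simp
  rw [← hg, hb, Complex.betaIntegral, intervalIntegral.integral_of_le (by norm_num),
      ← integral_Ioc_eq_integral_Ioo, ← RCLike.re_to_complex, ← integral_re]
  · refine setIntegral_congr_fun measurableSet_Ioc fun x ⟨hx1, hx2⟩ ↦ ?_
    norm_cast
    rw [← Complex.ofReal_cpow, ← Complex.ofReal_cpow, RCLike.re_to_complex,
        Complex.re_mul_ofReal, Complex.ofReal_re]
    · ring_nf
    all_goals linarith
  · have := Complex.betaIntegral_convergent (u := (s : ℂ)) (v := ((1 - s : ℝ) : ℂ)) (by simpa)
      (by rw [Complex.ofReal_re]; linarith)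
    rwa [intervalIntegrable_iff_integrableOn_Ioc_of_le (by simp), IntegrableOn] at this

theorem aux_radial (s : ℝ) (hs : s ∈ Set.Ioo (0 : ℝ) 1) (r : ℝ) (hr : 0 < r) :
    ∫ t in Set.Ioi r, r ^ (2 * s) / ((t ^ 2 - r ^ 2) ^ s * t) =
      Real.pi / (2 * Real.sin (Real.pi * s)) := by
  have him : (fun u : ℝ => r * u ^ (-(1/2) : ℝ)) '' Set.Ioo (0 : ℝ) 1 = Set.Ioi r := by
    ext t
    constructor
    · rintro ⟨u, ⟨hu0, hu1⟩, rfl⟩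
      have : 1 < u ^ (-(1/2) : ℝ) := Real.one_lt_rpow_of_pos_of_lt_one_of_neg hu0 hu1 (by norm_num)
      show r < r * u ^ (-(1/2) : ℝ)
      nlinarith
    · intro ht
      have ht : r < t := ht
      have ht0 : 0 < t := hr.trans ht
      refine ⟨(t / r) ^ (-2 : ℝ), ⟨by positivity, ?_⟩, ?_⟩
      · apply Real.rpow_lt_one_of_one_lt_of_neg _ (by norm_num)
        rwa [one_lt_div hr]
      · show r * ((t / r) ^ (-2 : ℝ)) ^ (-(1/2) : ℝ) = t
        rw [← Real.rpow_mul (by positivity)]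
        norm_num
        field_simp
  have hinj : Set.InjOn (fun u : ℝ => r * u ^ (-(1/2) : ℝ)) (Set.Ioo (0 : ℝ) 1) := by
    intro a ha b hb hab
    have hab : r * a ^ (-(1/2) : ℝ) = r * b ^ (-(1/2) : ℝ) := hab
    have h2 := mul_left_cancel₀ hr.ne' hab
    have h3 := congrArg (fun x : ℝ => x ^ (-2 : ℝ)) h2
    rw [← Real.rpow_mul ha.1.le, ← Real.rpow_mul hb.1.le] at h3
    norm_num at h3
    exact h3
  have hder : ∀ u ∈ Set.Ioo (0 : ℝ) 1, HasDerivWithinAt (fun u : ℝ => r * u ^ (-(1/2) : ℝ))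
      (r * (-(1/2) * u ^ (-(1/2) - 1 : ℝ))) (Set.Ioo (0 : ℝ) 1) u := by
    intro u hu
    exact ((Real.hasDerivAt_rpow_const (Or.inl hu.1.ne')).const_mul r).hasDerivWithinAt
  rw [← him, integral_image_eq_integral_abs_deriv_smul measurableSet_Ioo hder hinj]
  have : ∫ u in Set.Ioo (0 : ℝ) 1, (1 / 2 : ℝ) * (u ^ (s - 1) * (1 - u) ^ (-s)) =
      Real.pi / (2 * Real.sin (Real.pi * s)) := by
    rw [integral_const_mul, aux_beta s hs]
    ring
  rw [← this]
  refine setIntegral_congr_fun measurableSet_Ioo fun u ⟨hu0, hu1⟩ ↦ ?_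
  have h1u : 0 < 1 - u := by linarith
  have e1 : |r * (-(1/2) * u ^ (-(1/2) - 1 : ℝ))| = r * (1/2) * (u ^ (-(1/2) : ℝ) / u) := by
    rw [Real.rpow_sub_one hu0.ne', abs_mul, abs_mul, abs_of_pos hr]
    rw [abs_of_pos (by positivity : 0 < u ^ (-(1/2) : ℝ) / u)]
    norm_num
    ring
  have e2 : (r * u ^ (-(1/2) : ℝ)) ^ 2 - r ^ 2 = r ^ 2 * ((1 - u) / u) := by
    rw [mul_pow, ← Real.rpow_natCast (u ^ (-(1/2) : ℝ)), ← Real.rpow_mul hu0.le]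
    norm_num
    rw [Real.rpow_neg_one]
    field_simp
  have e3 : (r ^ 2 * ((1 - u) / u)) ^ s = r ^ (2 * s) * ((1 - u) ^ s / u ^ s) := by
    rw [Real.mul_rpow (by positivity) (by positivity), Real.div_rpow h1u.le hu0.le,
      Real.rpow_mul hr.le, Real.rpow_two]
  have p1 : 0 < u ^ (-(1/2) : ℝ) := by positivity
  simp only [smul_eq_mul]
  rw [e1, e2, e3, Real.rpow_sub_one hu0.ne', Real.rpow_neg h1u.le]
  have p2 : 0 < (1 - u) ^ s := by positivity
  have p3 : 0 < u ^ s := by positivity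
  have p4 : 0 < r ^ (2 * s) := by positivity
  field_simp

theorem aux_Bns_pos (n : ℕ) (hn : 0 < n) (s : ℝ) (hs : s ∈ Set.Ioo (0 : ℝ) 1) : 0 < Bns n s := by
  have hn' : (0 : ℝ) < n := by exact_mod_cast hn
  have h1 : 0 < Real.Gamma ((n : ℝ) / 2) := Real.Gamma_pos_of_pos (by positivity)
  have h2 : 0 < Real.sin (Real.pi * s) := Real.sin_pos_of_pos_of_lt_pi
    (mul_pos Real.pi_pos hs.1) (by nlinarith [Real.pi_pos, hs.2])
  unfold Bns
  have := Real.pi_pos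
  positivity

theorem aux_kernel (n : ℕ) (hn : 0 < n) (s : ℝ) (hs : s ∈ Set.Ioo (0 : ℝ) 1) (r : ℝ) (hr : 0 < r) :
    ∫ y in {y : Pt n | r < ‖y‖}, r ^ (2 * s) / ((‖y‖ ^ 2 - r ^ 2) ^ s * ‖y‖ ^ (n : ℕ)) =
      (Bns n s)⁻¹ := by
  have : Nonempty (Fin n) := ⟨⟨0, hn⟩⟩
  have hms : MeasurableSet {y : Pt n | r < ‖y‖} := measurableSet_lt measurable_const measurable_norm
  have hn' : (0 : ℝ) < n := by exact_mod_cast hn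
  set g : ℝ → ℝ := (Set.Ioi r).indicator
    (fun t => r ^ (2 * s) / ((t ^ 2 - r ^ 2) ^ s * t ^ (n : ℕ))) with hg
  have h1 : ∫ y in {y : Pt n | r < ‖y‖}, r ^ (2 * s) / ((‖y‖ ^ 2 - r ^ 2) ^ s * ‖y‖ ^ (n : ℕ)) =
      ∫ y : Pt n, g ‖y‖ := by
    rw [← integral_indicator hms]
    rfl
  have h2 : ∫ y in Set.Ioi (0 : ℝ), y ^ (n - 1) • g y = Real.pi / (2 * Real.sin (Real.pi * s)) := by
    rw [← aux_radial s hs r hr]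
    have : (fun y : ℝ => y ^ (n - 1) • g y) = (Set.Ioi r).indicator
        (fun t => r ^ (2 * s) / ((t ^ 2 - r ^ 2) ^ s * t)) := by
      ext t
      by_cases ht : r < t
      · have ht0 : 0 < t := hr.trans ht
        have hd : 0 < t ^ 2 - r ^ 2 := by nlinarith
        have hp : 0 < (t ^ 2 - r ^ 2) ^ s := by positivity
        simp only [hg, Set.indicator, Set.mem_Ioi, ht, if_true, smul_eq_mul]
        obtain ⟨m, rfl⟩ : ∃ m, n = m + 1 := ⟨n - 1, by omega⟩
        simp only [Nat.add_sub_cancel, pow_succ t m]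
        field_simp
      · simp [hg, Set.indicator, ht]
    rw [this, setIntegral_indicator measurableSet_Ioi]
    congr 2
    ext t
    simp only [Set.mem_inter_iff, Set.mem_Ioi]
    exact ⟨fun h => h.2, fun h => ⟨hr.trans h, h⟩⟩
  have h3 : (volume : Measure (Pt n)).real (ball 0 1) =
      √Real.pi ^ n / Real.Gamma ((n : ℝ) / 2 + 1) := by
    have : 0 < Real.Gamma ((n : ℝ) / 2 + 1) := Real.Gamma_pos_of_pos (by positivity)
    rw [Measure.real, EuclideanSpace.volume_ball]
    simp
    positivity
  rw [h1, integral_fun_norm_addHaar volume g]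
  simp only [finrank_euclideanSpace, Fintype.card_fin]
  rw [h2, h3, Real.Gamma_add_one (by positivity)]
  have hsq : √Real.pi ^ n = Real.pi ^ ((n : ℝ) / 2) := by
    rw [Real.sqrt_eq_rpow, ← Real.rpow_natCast, ← Real.rpow_mul Real.pi_pos.le]
    ring_nf
  rw [hsq]
  unfold Bns
  rw [Real.rpow_add_one Real.pi_pos.ne']
  have p1 : 0 < Real.Gamma ((n : ℝ) / 2) := Real.Gamma_pos_of_pos (by positivity)
  have p2 : 0 < Real.sin (Real.pi * s) := Real.sin_pos_of_pos_of_lt_pi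
    (mul_pos Real.pi_pos hs.1) (by nlinarith [Real.pi_pos, hs.2])
  have p3 := Real.pi_pos
  have p4 : 0 < Real.pi ^ ((n : ℝ) / 2) := by positivity
  simp only [nsmul_eq_mul, smul_eq_mul]
  field_simp

theorem aux_annulus (n : ℕ) (r : ℝ) (hr : 0 < r) (i : ℕ) :
    (volume (ball (0 : Pt n) ((2 : ℝ) ^ (i + 1) * r) \ ball (0 : Pt n) ((2 : ℝ) ^ i * r))).toReal =
      (((2 : ℝ) ^ (i + 1)) ^ n - ((2 : ℝ) ^ i) ^ n) * r ^ n *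
        (volume (ball (0 : Pt n) 1)).toReal := by
  have hsub : ball (0 : Pt n) ((2 : ℝ) ^ i * r) ⊆ ball (0 : Pt n) ((2 : ℝ) ^ (i + 1) * r) := by
    apply ball_subset_ball
    have : (0 : ℝ) < 2 ^ i := by positivity
    rw [pow_succ]
    nlinarith
  rw [measure_sdiff hsub measurableSet_ball.nullMeasurableSet measure_ball_lt_top.ne,
    ENNReal.toReal_sub_of_le (measure_mono hsub) measure_ball_lt_top.ne,
    Measure.addHaar_ball_of_pos _ _ (by positivity),
    Measure.addHaar_ball_of_pos _ _ (by positivity : 0 < (2 : ℝ) ^ i * r)]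
  simp only [finrank_euclideanSpace, Fintype.card_fin, ENNReal.toReal_mul]
  rw [ENNReal.toReal_ofReal (by positivity), ENNReal.toReal_ofReal (by positivity)]
  ring

/-- Quantitative drop below the supremum under the exterior density condition. -/
theorem quantitative_drop_below_supremum
    (n : ℕ) (hn : 0 < n) (s : ℝ) (hs : s ∈ Set.Ioo (0 : ℝ) 1)
    (C0 : ℝ) (hC0 : 0 < C0) (k0 : ℕ) :
    ∃ C1 : ℝ, 0 < C1 ∧ C1 < 1 ∧
      ∀ (D : Set (Pt n)), IsOpen D → (0 : Pt n) ∈ D →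
      ∀ r : ℝ, 0 < r →
      (∀ i : ℕ, k0 ≤ i →
        C0 / 2 * (volume (ball (0 : Pt n) ((2 : ℝ) ^ (i + 1) * r) \
            ball (0 : Pt n) ((2 : ℝ) ^ i * r))).toReal ≤
          (volume (Dᶜ ∩ (ball (0 : Pt n) ((2 : ℝ) ^ (i + 1) * r) \
            ball (0 : Pt n) ((2 : ℝ) ^ i * r)))).toReal) →
      ∀ A : ℝ, 0 < A → ∀ v : Pt n → ℝ, Measurable v →
      (∀ x : Pt n, 0 ≤ v x ∧ v x ≤ A) →
      (∀ x ∈ Dᶜ, v x = 0) →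
      v 0 ≤ Bns n s * ∫ y in {y : Pt n | r < ‖y‖},
          r ^ (2 * s) / ((‖y‖ ^ 2 - r ^ 2) ^ s * ‖y‖ ^ (n : ℕ)) * v y →
      v 0 ≤ (1 - C1) * A := by
  set i := k0 + 1 with hi
  set T : ℝ := (2 : ℝ) ^ (i + 1) with hT
  have hTpos : 0 < T := by positivity
  set β : ℝ := (volume (ball (0 : Pt n) 1)).toReal with hβ
  have hβpos : 0 < β := ENNReal.toReal_pos (measure_ball_pos _ _ one_pos).ne' measure_ball_lt_top.ne
  have hB := aux_Bns_pos n hn s hs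
  have hdiff : 0 < T ^ n - ((2 : ℝ) ^ i) ^ n := by
    apply sub_pos.2
    apply pow_lt_pow_left₀ _ (by positivity) hn.ne'
    exact pow_lt_pow_right₀ (by norm_num) (by omega)
  set q : ℝ := Bns n s * (1 / ((T ^ 2) ^ s * T ^ n) * (C0 / 2 * ((T ^ n - ((2 : ℝ) ^ i) ^ n) * β)))
    with hq
  have hqpos : 0 < q := by positivity
  refine ⟨min q (1 / 2), by positivity, (min_le_right _ _).trans_lt (by norm_num), ?_⟩
  intro D hD _ r hr hdens A hA v hv hvA hv0 hle
  have hd := hdens i (by omega)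
  rw [aux_annulus n r hr i] at hd
  set E : Set (Pt n) := Dᶜ ∩ (ball (0 : Pt n) ((2 : ℝ) ^ (i + 1) * r) \
            ball (0 : Pt n) ((2 : ℝ) ^ i * r)) with hE
  have hEm : MeasurableSet E :=
    hD.measurableSet.compl.inter (measurableSet_ball.diff measurableSet_ball)
  have hEfin : volume E ≠ ⊤ := ((measure_mono (fun x hx => hx.2.1)).trans_lt
    (measure_ball_lt_top (x := (0 : Pt n)) (r := (2 : ℝ) ^ (i + 1) * r))).ne
  set S : Set (Pt n) := {y : Pt n | r < ‖y‖} with hS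
  have hSm : MeasurableSet S := measurableSet_lt measurable_const measurable_norm
  have hEr : ∀ y ∈ E, r < ‖y‖ ∧ ‖y‖ < T * r := by
    intro y hy
    have h1 := hy.2.1
    have h2 := hy.2.2
    simp only [mem_ball, dist_zero_right, not_lt] at h1 h2
    refine ⟨lt_of_lt_of_le ?_ h2, h1⟩
    have : (1 : ℝ) < 2 ^ i := one_lt_pow₀ (by norm_num) (by omega)
    nlinarith
  have hES : E ⊆ S := fun y hy => (hEr y hy).1
  set K : Pt n → ℝ := fun y => r ^ (2 * s) / ((‖y‖ ^ 2 - r ^ 2) ^ s * ‖y‖ ^ (n : ℕ)) with hK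
  have hKint : ∫ y in S, K y = (Bns n s)⁻¹ := aux_kernel n hn s hs r hr
  have hKi : IntegrableOn K S := by
    apply Integrable.of_integral_ne_zero
    rw [hKint]
    positivity
  have hK0 : ∀ y ∈ S, 0 ≤ K y := by
    intro y hy
    have hy : r < ‖y‖ := hy
    have : 0 ≤ ‖y‖ ^ 2 - r ^ 2 := by nlinarith
    simp only [hK]
    positivity
  set c : ℝ := 1 / ((T ^ 2) ^ s * T ^ n) / r ^ n with hc
  have hcK : ∀ y ∈ E, c ≤ K y := by
    intro y hy
    obtain ⟨h1, h2⟩ := hEr y hy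
    have hy0 : 0 < ‖y‖ := hr.trans h1
    have hp : 0 < ‖y‖ ^ 2 - r ^ 2 := by nlinarith
    have hcc : c = r ^ (2 * s) / (((T * r) ^ 2) ^ s * (T * r) ^ n) := by
      rw [mul_pow, mul_pow, Real.mul_rpow (by positivity) (by positivity), Real.rpow_mul hr.le,
        Real.rpow_two, hc]
      have : 0 < (r ^ 2) ^ s := by positivity
      field_simp
    rw [hcc]
    simp only [hK]
    have hle1 : (‖y‖ ^ 2 - r ^ 2) ^ s ≤ ((T * r) ^ 2) ^ s := by
      apply Real.rpow_le_rpow hp.le _ hs.1.le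
      nlinarith
    gcongr
  have hindi : IntegrableOn (E.indicator (fun _ => c)) S :=
    ((integrable_indicator_iff hEm).2 (integrableOn_const hEfin)).integrableOn
  have key : ∫ y in S, K y * v y ≤ ∫ y in S, A * (K y - E.indicator (fun _ => c) y) := by
    apply integral_mono_of_nonneg
    · exact ae_restrict_of_forall_mem hSm fun y hy => mul_nonneg (hK0 y hy) (hvA y).1
    · exact (hKi.sub hindi).const_mul A
    · refine ae_restrict_of_forall_mem hSm fun y hy => ?_
      by_cases hyE : y ∈ E
      · simp only [Set.indicator, hyE, if_true]
        rw [hv0 y hyE.1, mul_zero]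
        exact mul_nonneg hA.le (sub_nonneg.2 (hcK y hyE))
      · simp only [Set.indicator, hyE, if_false, sub_zero]
        rw [mul_comm A]
        exact mul_le_mul_of_nonneg_left (hvA y).2 (hK0 y hy)
  have hrhs : ∫ y in S, A * (K y - E.indicator (fun _ => c) y) =
      A * ((Bns n s)⁻¹ - (volume E).toReal * c) := by
    rw [integral_const_mul, integral_sub hKi hindi, hKint, setIntegral_indicator hEm,
      Set.inter_eq_right.2 hES, setIntegral_const, smul_eq_mul]
    rfl
  rw [hrhs] at key
  have hcpos : 0 < c := by positivity
  have hqle : q ≤ Bns n s * ((volume E).toReal * c) := by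
    rw [hq]
    apply mul_le_mul_of_nonneg_left _ hB.le
    refine le_trans (le_of_eq ?_) (mul_le_mul_of_nonneg_right hd hcpos.le)
    rw [hc]
    field_simp
    rfl
  calc v 0 ≤ Bns n s * ∫ y in S, K y * v y := hle
    _ ≤ Bns n s * (A * ((Bns n s)⁻¹ - (volume E).toReal * c)) :=
        mul_le_mul_of_nonneg_left key hB.le
    _ = (1 - Bns n s * ((volume E).toReal * c)) * A := by field_simp
    _ ≤ (1 - min q (1 / 2)) * A := by
        apply mul_le_mul_of_nonneg_right _ hA.le
        have := min_le_left q (1 / 2)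
        linarith
end
end
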